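/- For each m ∈ ℕ there is a constant c(m) > 0 such that the following holds. Let d, m, n ∈ ℕ and let G_i ∈ 𝔉_d, i = 1,…,n, be of the form G_i = (1−p_i)·E + p_i·V_i with V_i ∈ 𝔉_d arbitrary and 0 ≤ p_i ≤ p = max_j p_j. Let G = ∏_{i=1}^n G_i and D = ∏_{i=1}^n e(G_i). Then ρ_m(G, D) ≤ c(m) · p. -/

import Mathlib

open MeasureTheory RealInnerProductSpace
open scoped ENNReal

noncomputable section

abbrev Euc (d : ℕ) := EuclideanSpace ℝ (Fin d)

/-- Convolution of two measures on an additive structure. -/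
def mconv {α : Type*} [MeasurableSpace α] [Add α] (μ ν : Measure α) : Measure α :=
  (μ.prod ν).map (fun p => p.1 + p.2)

/-- Convolution power `μ^{*n}`, with `μ^{*0}` the Dirac measure at `0`. -/
def convPow {α : Type*} [MeasurableSpace α] [AddMonoid α] (μ : Measure α) : ℕ → Measure α
  | 0 => Measure.dirac 0
  | n + 1 => mconv (convPow μ n) μ

/-- Convolution product of a finite family of measures. -/
def convProd {α : Type*} [MeasurableSpace α] [AddMonoid α] :
    ∀ {n : ℕ}, (Fin n → Measure α) → Measure α
  | 0, _ => Measure.dirac 0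
  | n + 1, G => mconv (convProd (fun i : Fin n => G i.castSucc)) (G (Fin.last n))

/-- The compound Poisson measure `e(a·μ) = e^{-a} ∑_k a^k μ^{*k}/k!`. -/
def cpois {α : Type*} [MeasurableSpace α] [AddMonoid α] (a : ℝ) (μ : Measure α) : Measure α :=
  Measure.sum fun k : ℕ =>
    (ENNReal.ofReal (Real.exp (-a) * a ^ k / k.factorial)) • convPow μ k

/-- A measure is symmetric if it is invariant under `x ↦ -x`. -/
def IsSymmMeasure {d : ℕ} (μ : Measure (Euc d)) : Prop :=
  μ.map (fun x => -x) = μ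

/-- Characteristic function of a measure on `ℝ^d`. -/
def charFn {d : ℕ} (μ : Measure (Euc d)) (t : Euc d) : ℂ :=
  ∫ x, Complex.exp ((⟪t, x⟫ : ℂ) * Complex.I) ∂μ

/-- Characteristic function of a measure on `ℝ`. -/
def charFn1 (μ : Measure ℝ) (t : ℝ) : ℂ :=
  ∫ x, Complex.exp (((t * x : ℝ) : ℂ) * Complex.I) ∂μ

/-- Convex polyhedra determined by the directions `t 1, …, t m`. -/
def polyhedraOn {d m : ℕ} (t : Fin m → Euc d) : Set (Set (Euc d)) :=
  {X | ∃ a b : Fin m → EReal,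
    X = {x | ∀ j, a j ≤ ((⟪x, t j⟫ : ℝ) : EReal) ∧ ((⟪x, t j⟫ : ℝ) : EReal) ≤ b j}}

/-- The collection `𝔛_m` of convex polyhedra determined by `m` pairs of parallel hyperplanes. -/
def polyhedra (d m : ℕ) : Set (Set (Euc d)) :=
  {X | ∃ t : Fin m → Euc d, X ∈ polyhedraOn t}

/-- The distance `ρ_m(G,H) = sup_{X ∈ 𝔛_m} |G{X} - H{X}|`. -/
def rhoPoly {d : ℕ} (m : ℕ) (G H : Measure (Euc d)) : ℝ :=
  ⨆ X ∈ polyhedra d m, |(G X).toReal - (H X).toReal|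

/-- The Lévy concentration function `Q(μ, b) = sup_x μ[x, x+b]`. -/
def concFn (μ : Measure ℝ) (b : ℝ) : ℝ :=
  ⨆ x : ℝ, (μ (Set.Icc x (x + b))).toReal

/-- `q(H, X) = inf_{‖t‖=1} Q(𝓛(⟨ξ,t⟩), λ{⟨x,t⟩ : x ∈ X})` where `H = 𝓛(ξ)`. -/
def qFn {d : ℕ} (H : Measure (Euc d)) (X : Set (Euc d)) : ℝ :=
  ⨅ t ∈ {t : Euc d | ‖t‖ = 1},
    concFn (H.map fun x => ⟪x, t⟫) (volume ((fun x => ⟪x, t⟫) '' X)).toReal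

/-- The uniform (Kolmogorov) distance on `ℝ^d`. -/
def kolmDist {d : ℕ} (G H : Measure (Euc d)) : ℝ :=
  ⨆ x : Euc d, |(G {y | ∀ i, y i ≤ x i}).toReal - (H {y | ∀ i, y i ≤ x i}).toReal|

/-- The uniform (Kolmogorov) distance on `ℝ`. -/
def kolmDist1 (G H : Measure ℝ) : ℝ :=
  ⨆ x : ℝ, |(G (Set.Iic x)).toReal - (H (Set.Iic x)).toReal|

end

/-
Let `v_i` be convolution with `V_i`, acting on bounded measurable functions. These operators
commute, and convolution with `G_i` is `1 + p_i (v_i - 1)`. Replacing `V_i` by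
`(1 - p_i / p) E + (p_i / p) V_i` makes all `p_i` equal to `p`, and `p ≤ 1 / 2` may be assumed. By
Poisson's limit theorem `∏ e(G_i) = exp (p ∑ (v_i - 1))` is the limit of `B ^ L`, where
`B = 1 + η ∑ (v_i - 1)` and `η = p / L`. The path `B ^ l ∏ (1 + α (v_i - 1))` with
`α = p (1 - l / L)` leads from `∏ G_i` to `B ^ L`. In one step of it the terms of first order in
`η` cancel, which leaves, up to `O(η ^ 2)`, the quantity
`η α |∑ ((v_i - 1) ∏_{j ≠ i} (1 + α (v_j - 1))) b_i (0)|` with `b_i = (v_i - 1) B ^ l 1_X`. It is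
at most `C m ^ 2 η τ ^ 3` for `τ = (L / (l + 1)) ^ (1 / 4)`, and the sum of this over `l` is
`O(m ^ 2 p)`.

The pairing with the `b_i` is a covariance between the random set of the steps made by the lazy
walk `∏ (1 + α (v_j - 1))` and the values of the `b_i` at its end point. If the `b_i` depend only
on a code of the end point with few values, the Gibbs variational principle bounds it by the
logarithm of the number of codes and an exponential moment, which is controlled by `α ∑ b_i ^ 2`.
The latter is `O(τ ^ 4)`, by a variance bound for `B ^ (l + 1)`. In general one chains: at level
`u` the values of the `m` functionals are coded by intervals of small probability, and `b_i` is
approximated by functions of the code up to the last level at which `V_i` moves the smoothed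
halfspaces by more than `2 ^ (-u)` with probability at most `2 ^ (-u)`. The remaining error of
the step `i` is of order `2 ^ (-u)` on the cells that the walk visits often, and the number of
steps with last level `u` is bounded by a concentration inequality of Rogozin's type.
-/

namespace Accompanying

noncomputable section

section BoundedFunctions

variable {E : Type*} [MeasurableSpace E]

/-- The algebra of bounded measurable real functions, on which measures act by convolution. -/
def bddMeasSubalgebra (E : Type*) [MeasurableSpace E] : Subalgebra ℝ (E → ℝ) where
  carrier := {f | Measurable f ∧ ∃ C, ∀ x, |f x| ≤ C}
  add_mem' := by
    rintro f g ⟨hf, C, hC⟩ ⟨hg, D, hD⟩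
    exact ⟨hf.add hg, C + D, fun x => (abs_add_le _ _).trans (add_le_add (hC x) (hD x))⟩
  mul_mem' := by
    rintro f g ⟨hf, C, hC⟩ ⟨hg, D, hD⟩
    refine ⟨hf.mul hg, C * D, fun x => ?_⟩
    rw [Pi.mul_apply, abs_mul]
    exact mul_le_mul (hC x) (hD x) (abs_nonneg _) ((abs_nonneg _).trans (hC x))
  algebraMap_mem' c := ⟨measurable_const, |c|, fun _ => le_rfl⟩

/-- The type of bounded measurable real functions on `E`. It is a type of its own, not a coerced
subalgebra, in order to keep instance search fast. -/
def BddMeas (E : Type*) [MeasurableSpace E] : Type _ := bddMeasSubalgebra E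

namespace BddMeas

instance : CommRing (BddMeas E) := inferInstanceAs (CommRing (bddMeasSubalgebra E))

instance : Algebra ℝ (BddMeas E) := inferInstanceAs (Algebra ℝ (bddMeasSubalgebra E))

instance : FunLike (BddMeas E) E ℝ where
  coe f := f.1
  coe_injective := Subtype.val_injective

@[ext]
theorem ext {f g : BddMeas E} (h : ∀ x, f x = g x) : f = g := DFunLike.ext f g h

theorem measurable (f : BddMeas E) : Measurable f := f.2.1

theorem exists_abs_le (f : BddMeas E) : ∃ C, ∀ x, |f x| ≤ C := f.2.2

/-- The bounded measurable function with a given underlying function. -/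
def mk (f : E → ℝ) (hf : Measurable f) (hb : ∃ C, ∀ x, |f x| ≤ C) : BddMeas E := ⟨f, hf, hb⟩

@[simp] theorem zero_apply (x : E) : (0 : BddMeas E) x = 0 := rfl

@[simp] theorem one_apply (x : E) : (1 : BddMeas E) x = 1 := rfl

@[simp] theorem add_apply (f g : BddMeas E) (x : E) : (f + g) x = f x + g x := rfl

@[simp] theorem sub_apply (f g : BddMeas E) (x : E) : (f - g) x = f x - g x := rfl

@[simp] theorem neg_apply (f : BddMeas E) (x : E) : (-f) x = -f x := rfl

@[simp] theorem pow_apply (f : BddMeas E) (n : ℕ) (x : E) : (f ^ n) x = f x ^ n := rfl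

@[simp] theorem smul_apply (c : ℝ) (f : BddMeas E) (x : E) : (c • f) x = c * f x := rfl

/-- Evaluation at a point, as a linear map. -/
def evalAt (x : E) : BddMeas E →ₗ[ℝ] ℝ where
  toFun f := f x
  map_add' _ _ := rfl
  map_smul' _ _ := rfl

@[simp] theorem sum_apply {ι : Type*} (s : Finset ι) (f : ι → BddMeas E) (x : E) :
    (∑ i ∈ s, f i) x = ∑ i ∈ s, f i x := map_sum (evalAt x) f s

theorem integrable (f : BddMeas E) (μ : Measure E) [IsFiniteMeasure μ] : Integrable f μ := by
  obtain ⟨C, hC⟩ := f.exists_abs_le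
  exact .of_bound f.measurable.aestronglyMeasurable C (.of_forall hC)

/-- The indicator function of a measurable set. -/
def ind (s : Set E) (hs : MeasurableSet s) : BddMeas E :=
  mk (s.indicator 1) (measurable_one.indicator hs) ⟨1, fun x => by
    by_cases h : x ∈ s <;> simp [h]⟩

variable {s : Set E} {hs : MeasurableSet s} {x : E}

theorem ind_apply : ind s hs x = s.indicator 1 x := rfl

theorem ind_of_mem (h : x ∈ s) : ind s hs x = 1 := Set.indicator_of_mem h 1

theorem ind_of_notMem (h : x ∉ s) : ind s hs x = 0 := Set.indicator_of_notMem h 1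

theorem ind_nonneg : 0 ≤ ind s hs x := Set.indicator_nonneg (fun _ _ => zero_le_one) x

theorem ind_le_one : ind s hs x ≤ 1 := Set.indicator_le_self' (fun _ _ => zero_le_one) x

theorem ind_sq : ind s hs ^ 2 = ind s hs := by
  ext x
  by_cases h : x ∈ s <;> simp [h, ind_apply]

end BddMeas

end BoundedFunctions

section ConvolutionAlgebra

variable {E : Type*} [AddCommGroup E] [MeasurableSpace E] [MeasurableAdd₂ E]

/-- The function `y ↦ g (x + y)`. -/
def translate (x : E) (g : BddMeas E) : BddMeas E :=
  .mk (fun y => g (x + y)) (g.measurable.comp (measurable_const_add x))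
    (g.exists_abs_le.imp fun _ h _ => h _)

@[simp] theorem translate_apply (x : E) (g : BddMeas E) (y : E) :
    translate x g y = g (x + y) := rfl

/-- The endomorphism `g ↦ (x ↦ ∫ g (x + y) dμ(y))`. -/
def convEnd (μ : Measure E) [IsFiniteMeasure μ] : Module.End ℝ (BddMeas E) where
  toFun g := .mk (fun x => ∫ y, g (x + y) ∂μ)
    (StronglyMeasurable.integral_prod_right (f := fun x y => g (x + y))
      (g.measurable.comp measurable_add).stronglyMeasurable).measurable <| by
      obtain ⟨C, hC⟩ := g.exists_abs_le
      refine ⟨C * μ.real Set.univ, fun x => ?_⟩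
      exact norm_integral_le_of_norm_le_const (f := fun y => g (x + y)) (.of_forall fun y => hC _)
  map_add' f g := by
    ext x
    exact integral_add ((translate x f).integrable μ) ((translate x g).integrable μ)
  map_smul' c g := by
    ext x
    exact integral_const_mul c _

theorem convEnd_apply (μ : Measure E) [IsFiniteMeasure μ] (g : BddMeas E) (x : E) :
    convEnd μ g x = ∫ y, g (x + y) ∂μ := rfl

theorem convEnd_mul_comm (μ ν : Measure E) [IsFiniteMeasure μ] [IsFiniteMeasure ν] :
    convEnd μ * convEnd ν = convEnd ν * convEnd μ := by
  ext g x
  simp only [Module.End.mul_apply, convEnd_apply]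
  obtain ⟨C, hC⟩ := g.exists_abs_le
  rw [integral_integral_swap]
  · simp only [add_right_comm]
  · exact .of_bound (g.measurable.comp
      ((measurable_const_add x |>.comp measurable_fst).add measurable_snd)).aestronglyMeasurable
      C (.of_forall fun y => hC _)

/-- The algebra of endomorphisms generated by the convolutions with finite measures. -/
def convSubalgebra (E : Type*) [AddCommGroup E] [MeasurableSpace E] [MeasurableAdd₂ E] :
    Subalgebra ℝ (Module.End ℝ (BddMeas E)) :=
  Algebra.adjoin ℝ {T | ∃ (μ : Measure E) (_ : IsFiniteMeasure μ), convEnd μ = T}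

instance : IsMulCommutative (convSubalgebra E) :=
  Algebra.isMulCommutative_adjoin ℝ <| by
    rintro _ ⟨μ, _, rfl⟩ _ ⟨ν, _, rfl⟩
    exact convEnd_mul_comm μ ν

/-- The commutative algebra of convolution operators. It contains the differences `v - 1` and the
polynomials in them which occur in the proof, and it acts on `BddMeas E`. -/
def ConvAlg (E : Type*) [AddCommGroup E] [MeasurableSpace E] [MeasurableAdd₂ E] : Type _ :=
  convSubalgebra E

namespace ConvAlg

open scoped IsMulCommutative in
instance : CommRing (ConvAlg E) := inferInstanceAs (CommRing (convSubalgebra E))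

instance : Algebra ℝ (ConvAlg E) := inferInstanceAs (Algebra ℝ (convSubalgebra E))

instance : Module (ConvAlg E) (BddMeas E) :=
  inferInstanceAs (Module (convSubalgebra E) (BddMeas E))

instance : IsScalarTower ℝ (ConvAlg E) (BddMeas E) where
  smul_assoc _ _ _ := rfl

instance : SMulCommClass (ConvAlg E) ℝ (BddMeas E) where
  smul_comm u c g := u.1.map_smul c g

theorem ext {u v : ConvAlg E} (h : ∀ (g : BddMeas E) x, (u • g) x = (v • g) x) : u = v :=
  Subtype.ext <| LinearMap.ext fun g => BddMeas.ext (h g)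

end ConvAlg

/-- Convolution with a finite measure, as an element of the convolution algebra. -/
def convOp (μ : Measure E) [IsFiniteMeasure μ] : ConvAlg E :=
  ⟨convEnd μ, Algebra.subset_adjoin ⟨μ, inferInstance, rfl⟩⟩

section ConvOp

variable (μ ν : Measure E) [IsFiniteMeasure μ] [IsFiniteMeasure ν]

theorem convOp_smul_apply (g : BddMeas E) (x : E) :
    (convOp μ • g) x = ∫ y, g (x + y) ∂μ := rfl

theorem convOp_smul_ind_zero {s : Set E} (hs : MeasurableSet s) :
    (convOp μ • BddMeas.ind s hs) 0 = μ.real s := by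
  simp only [convOp_smul_apply, zero_add]
  exact integral_indicator_one hs

instance : IsFiniteMeasure (mconv μ ν) := by unfold mconv; infer_instance

instance isProbabilityMeasure_mconv (μ ν : Measure E) [IsProbabilityMeasure μ]
    [IsProbabilityMeasure ν] : IsProbabilityMeasure (mconv μ ν) :=
  Measure.isProbabilityMeasure_map measurable_add.aemeasurable

theorem convOp_mconv : convOp (mconv μ ν) = convOp μ * convOp ν := by
  refine ConvAlg.ext fun g x => ?_
  obtain ⟨C, hC⟩ := g.exists_abs_le
  change ∫ y, translate x g y ∂(mconv μ ν) = _
  rw [mul_smul, convOp_smul_apply, mconv, integral_map measurable_add.aemeasurable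
    (translate x g).measurable.aestronglyMeasurable, integral_prod]
  · simp only [convOp_smul_apply, translate_apply, add_assoc]
  · exact .of_bound ((translate x g).measurable.comp measurable_add).aestronglyMeasurable
      C (.of_forall fun y => hC _)

theorem convOp_add : convOp (μ + ν) = convOp μ + convOp ν :=
  ConvAlg.ext fun g x => by
    rw [add_smul]
    exact integral_add_measure ((translate x g).integrable μ) ((translate x g).integrable ν)

theorem convOp_ofReal_smul {c : ℝ} (hc : 0 ≤ c) [IsFiniteMeasure (ENNReal.ofReal c • μ)] :
    convOp (ENNReal.ofReal c • μ) = c • convOp μ :=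
  ConvAlg.ext fun g x => by
    rw [convOp_smul_apply, smul_assoc, integral_smul_measure, ENNReal.toReal_ofReal hc]
    rfl

theorem convOp_dirac_smul (z : E) (g : BddMeas E) :
    convOp (Measure.dirac z) • g = translate z g := by
  ext x
  change ∫ y, translate x g y ∂_ = _
  rw [integral_dirac' _ _ (translate x g).measurable.stronglyMeasurable, translate_apply,
    translate_apply, add_comm]

theorem convOp_dirac_zero : convOp (Measure.dirac (0 : E)) = 1 :=
  ConvAlg.ext fun g x => by
    rw [convOp_dirac_smul, one_smul, translate_apply, zero_add]

end ConvOp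

theorem smul_apply_eq_translate (u : ConvAlg E) (g : BddMeas E) (x : E) :
    (u • g) x = (u • translate x g) 0 := by
  rw [← convOp_dirac_smul, ← mul_smul, mul_comm, mul_smul, convOp_dirac_smul, translate_apply,
    add_zero]

end ConvolutionAlgebra

section Positivity

variable {E : Type*} [AddCommGroup E] [MeasurableSpace E] [MeasurableAdd₂ E]

/-- `u` is the convolution with a finite measure. -/
def IsPositive (u : ConvAlg E) : Prop :=
  ∃ (μ : Measure E) (_ : IsFiniteMeasure μ), convOp μ = u

/-- `u` is the convolution with a probability measure. -/
def IsMarkov (u : ConvAlg E) : Prop :=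
  ∃ (μ : Measure E) (_ : IsProbabilityMeasure μ), convOp μ = u

theorem isPositive_convOp (μ : Measure E) [IsFiniteMeasure μ] : IsPositive (convOp μ) :=
  ⟨μ, inferInstance, rfl⟩

theorem isMarkov_convOp (μ : Measure E) [IsProbabilityMeasure μ] : IsMarkov (convOp μ) :=
  ⟨μ, inferInstance, rfl⟩

theorem IsMarkov.isPositive {u : ConvAlg E} (hu : IsMarkov u) : IsPositive u :=
  let ⟨μ, _, h⟩ := hu
  ⟨μ, inferInstance, h⟩

namespace IsPositive

variable {u v : ConvAlg E} {f g : BddMeas E}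

theorem apply_nonneg (hu : IsPositive u) (hg : ∀ x, 0 ≤ g x) (x : E) : 0 ≤ (u • g) x := by
  obtain ⟨μ, _, rfl⟩ := hu
  exact integral_nonneg fun y => hg _

theorem mono (hu : IsPositive u) (h : ∀ x, f x ≤ g x) (x : E) : (u • f) x ≤ (u • g) x := by
  simpa [smul_sub] using hu.apply_nonneg (g := g - f) (fun y => by simpa using h y) x

theorem abs_apply_le (hu : IsPositive u) (h : ∀ x, |f x| ≤ g x) (x : E) :
    |(u • f) x| ≤ (u • g) x := by
  have hneg := hu.mono (f := -f) (fun y => (abs_le'.1 (h y)).2) x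
  rw [smul_neg] at hneg
  exact abs_le'.2 ⟨hu.mono (fun y => (abs_le'.1 (h y)).1) x, hneg⟩

theorem add (hu : IsPositive u) (hv : IsPositive v) : IsPositive (u + v) := by
  obtain ⟨μ, _, rfl⟩ := hu
  obtain ⟨ν, _, rfl⟩ := hv
  exact ⟨μ + ν, inferInstance, convOp_add μ ν⟩

theorem smul (hu : IsPositive u) {c : ℝ} (hc : 0 ≤ c) : IsPositive (c • u) := by
  obtain ⟨μ, _, rfl⟩ := hu
  have : IsFiniteMeasure (ENNReal.ofReal c • μ) := Measure.smul_finite _ ENNReal.ofReal_ne_top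
  exact ⟨ENNReal.ofReal c • μ, this, convOp_ofReal_smul μ hc⟩

theorem one : IsPositive (1 : ConvAlg E) := ⟨Measure.dirac 0, inferInstance, convOp_dirac_zero⟩

theorem zero : IsPositive (0 : ConvAlg E) := zero_smul ℝ (1 : ConvAlg E) ▸ one.smul le_rfl

theorem sum {ι : Type*} {s : Finset ι} {u : ι → ConvAlg E} (hu : ∀ i ∈ s, IsPositive (u i)) :
    IsPositive (∑ i ∈ s, u i) :=
  Finset.sum_induction u IsPositive (fun _ _ => add) zero hu

theorem isMarkov (hu : IsPositive u) (h1 : (u • (1 : BddMeas E)) 0 = 1) : IsMarkov u := by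
  obtain ⟨μ, _, rfl⟩ := hu
  refine ⟨μ, ⟨?_⟩, rfl⟩
  simpa [convOp_smul_apply, Measure.real, ENNReal.toReal_eq_one_iff] using h1

theorem sq_apply_le (hu : IsPositive u) (f : BddMeas E) (x : E) :
    ((u • f) x) ^ 2 ≤ (u • (1 : BddMeas E)) x * (u • f ^ 2) x := by
  have quadratic_nonneg (t : ℝ) :
      0 ≤ (u • (1 : BddMeas E)) x * (t * t) + (-2 * (u • f) x) * t + (u • f ^ 2) x := by
    have h := hu.apply_nonneg (g := (f - t • 1) ^ 2) (fun y => sq_nonneg _) x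
    have expand : (f - t • (1 : BddMeas E)) ^ 2 = f ^ 2 - (2 * t) • f + (t * t) • 1 := by
      ext y
      simp only [BddMeas.pow_apply, BddMeas.sub_apply, BddMeas.add_apply, BddMeas.smul_apply,
        BddMeas.one_apply]
      ring
    rw [expand, smul_add, smul_sub, smul_comm u, smul_comm u] at h
    simp only [BddMeas.sub_apply, BddMeas.add_apply, BddMeas.smul_apply] at h
    linarith
  have := discrim_le_zero quadratic_nonneg
  unfold discrim at this
  nlinarith

end IsPositive

namespace IsMarkov

variable {u v : ConvAlg E} {g : BddMeas E}

theorem one : IsMarkov (1 : ConvAlg E) := ⟨Measure.dirac 0, inferInstance, convOp_dirac_zero⟩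

theorem mul (hu : IsMarkov u) (hv : IsMarkov v) : IsMarkov (u * v) := by
  obtain ⟨μ, _, rfl⟩ := hu
  obtain ⟨ν, _, rfl⟩ := hv
  exact ⟨mconv μ ν, inferInstance, convOp_mconv μ ν⟩

theorem pow (hu : IsMarkov u) (n : ℕ) : IsMarkov (u ^ n) := by
  induction n with
  | zero => exact pow_zero u ▸ one
  | succ n ih => exact pow_succ u n ▸ ih.mul hu

theorem prod {ι : Type*} {s : Finset ι} {u : ι → ConvAlg E} (hu : ∀ i ∈ s, IsMarkov (u i)) :
    IsMarkov (∏ i ∈ s, u i) :=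
  Finset.prod_induction u IsMarkov (fun _ _ => mul) one hu

theorem smul_one (hu : IsMarkov u) : u • (1 : BddMeas E) = 1 := by
  obtain ⟨μ, _, rfl⟩ := hu
  ext x
  simp [convOp_smul_apply]

theorem smul_const (hu : IsMarkov u) (c : ℝ) : u • c • (1 : BddMeas E) = c • 1 := by
  rw [smul_comm, hu.smul_one]

theorem apply_le_of_le (hu : IsMarkov u) {c : ℝ} (h : ∀ x, g x ≤ c) (x : E) : (u • g) x ≤ c := by
  simpa [hu.smul_const] using hu.isPositive.mono (g := c • 1) (by simpa using h) x

theorem abs_apply_le (hu : IsMarkov u) {c : ℝ} (h : ∀ x, |g x| ≤ c) (x : E) :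
    |(u • g) x| ≤ c := by
  simpa [hu.smul_const] using hu.isPositive.abs_apply_le (g := c • 1) (by simpa using h) x

theorem sq_apply_le (hu : IsMarkov u) (g : BddMeas E) (x : E) :
    ((u • g) x) ^ 2 ≤ (u • g ^ 2) x := by
  simpa [hu.smul_one] using hu.isPositive.sq_apply_le g x

theorem sub_one_smul_apply (hu : IsMarkov u) (g : BddMeas E) (x : E) :
    ((u - 1) • g) x = (u • (g - g x • 1)) x := by
  simp [sub_smul, smul_sub, hu.smul_const]

end IsMarkov

end Positivity

section Variance

variable {E : Type*} [AddCommGroup E] [MeasurableSpace E] [MeasurableAdd₂ E]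

/-- The variance `u g² - (u g)²`. For a Markov operator `u` with measure `μ`, its value at `x` is
the variance of `g (x + ·)` under `μ`. -/
def variance (u : ConvAlg E) (g : BddMeas E) : BddMeas E := u • g ^ 2 - (u • g) ^ 2

theorem variance_apply (u : ConvAlg E) (g : BddMeas E) (x : E) :
    variance u g x = (u • g ^ 2) x - ((u • g) x) ^ 2 := rfl

theorem variance_apply_le (u : ConvAlg E) (g : BddMeas E) (x : E) :
    variance u g x ≤ (u • g ^ 2) x := sub_le_self _ (sq_nonneg _)

theorem variance_mul (u w : ConvAlg E) (g : BddMeas E) :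
    variance (u * w) g = variance u (w • g) + u • variance w g := by
  simp only [variance, mul_smul, smul_sub]
  abel

theorem IsMarkov.variance_sub_const {u : ConvAlg E} (hu : IsMarkov u) (g : BddMeas E) (c : ℝ) :
    variance u (g - c • 1) = variance u g := by
  have expand : (g - c • (1 : BddMeas E)) ^ 2 = g ^ 2 - (2 * c) • g + c ^ 2 • 1 := by
    ext x
    simp only [BddMeas.pow_apply, BddMeas.sub_apply, BddMeas.add_apply, BddMeas.smul_apply,
      BddMeas.one_apply]
    ring
  ext x
  simp only [variance, expand, smul_add, smul_sub, hu.smul_const, smul_comm u (2 * c),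
    BddMeas.pow_apply, BddMeas.sub_apply, BddMeas.add_apply, BddMeas.smul_apply,
    BddMeas.one_apply]
  ring

variable {ι : Type*} {u : ConvAlg E} {c q : ℝ}

theorem IsMarkov.sum_sq_smul_le (hu : IsMarkov u) (hc : 0 ≤ c) {s : Finset ι}
    {f : ι → BddMeas E} {F : BddMeas E} (h : ∀ x, c * ∑ i ∈ s, f i x ^ 2 ≤ F x) (x : E) :
    c * ∑ i ∈ s, (u • f i) x ^ 2 ≤ (u • F) x := by
  calc c * ∑ i ∈ s, (u • f i) x ^ 2
      ≤ c * ∑ i ∈ s, (u • f i ^ 2) x := by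
        gcongr with i
        exact hu.sq_apply_le (f i) x
    _ = (u • c • ∑ i ∈ s, f i ^ 2) x := by
        rw [smul_comm, Finset.smul_sum, BddMeas.smul_apply, BddMeas.sum_apply]
    _ ≤ (u • F) x := hu.isPositive.mono (by simpa using h) x

theorem IsMarkov.sum_sq_le_variance_pow (hu : IsMarkov u) (hc : 0 ≤ c) {s : Finset ι}
    {Θ : ι → ConvAlg E} (h : ∀ g x, c * ∑ i ∈ s, (Θ i • g) x ^ 2 ≤ q * variance u g x)
    (l : ℕ) (g : BddMeas E) (x : E) :
    (l + 1) * c * ∑ i ∈ s, (Θ i • u ^ l • g) x ^ 2 ≤ q * variance (u ^ (l + 1)) g x := by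
  induction l generalizing x with
  | zero => simpa using h g x
  | succ l ih =>
    have first_step := h (u ^ (l + 1) • g) x
    have other_steps := hu.sum_sq_smul_le (F := q • variance (u ^ (l + 1)) g)
      (mul_nonneg (by positivity : (0 : ℝ) ≤ l + 1) hc) ih x
    have hcomm (i : ι) : u • Θ i • u ^ l • g = Θ i • u ^ (l + 1) • g := by
      simp only [← mul_smul]
      congr 1
      ring
    simp only [hcomm, smul_comm u q, BddMeas.smul_apply] at other_steps
    rw [pow_succ' u (l + 1), variance_mul, BddMeas.add_apply]
    push_cast
    linarith

end Variance

section LazyOperators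

variable {E : Type*} [AddCommGroup E] [MeasurableSpace E] [MeasurableAdd₂ E]

/-- The lazy version `(1 - α) + α v` of `v`, the random walk that moves with probability `α`. -/
def lazy (α : ℝ) (v : ConvAlg E) : ConvAlg E := 1 + α • (v - 1)

section Lazy

variable {v : ConvAlg E} {α : ℝ}

theorem lazy_smul_apply (α : ℝ) (v : ConvAlg E) (g : BddMeas E) (x : E) :
    (lazy α v • g) x = (1 - α) * g x + α * (v • g) x := by
  simp only [lazy, add_smul, one_smul, smul_assoc, sub_smul, BddMeas.add_apply,
    BddMeas.smul_apply, BddMeas.sub_apply]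
  ring

theorem IsMarkov.lazy (hv : IsMarkov v) (h0 : 0 ≤ α) (h1 : α ≤ 1) : IsMarkov (lazy α v) := by
  refine IsPositive.isMarkov ?_ (by simp [lazy_smul_apply, hv.smul_one])
  have : Accompanying.lazy α v = (1 - α) • 1 + α • v := by
    rw [Accompanying.lazy, smul_sub, sub_smul, one_smul]
    abel
  exact this ▸ (IsPositive.one.smul (sub_nonneg.2 h1)).add (hv.isPositive.smul h0)

theorem sq_sub_one_le_variance_lazy (hv : IsMarkov v) (h0 : 0 ≤ α) (g : BddMeas E) (x : E) :
    α * (1 - α) * ((v - 1) • g) x ^ 2 ≤ variance (lazy α v) g x := by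
  have := mul_le_mul_of_nonneg_left (hv.sq_apply_le g x) h0
  simp only [variance_apply, lazy_smul_apply, sub_smul, one_smul, BddMeas.sub_apply,
    BddMeas.pow_apply]
  nlinarith

theorem sum_sq_sub_one_le_variance_prod_lazy {ι : Type*} [DecidableEq ι] (s : Finset ι)
    {v : ι → ConvAlg E} (hv : ∀ i, IsMarkov (v i)) (h0 : 0 ≤ α) (h1 : α ≤ 1) (g : BddMeas E)
    (x : E) :
    α * (1 - α) * ∑ i ∈ s, ((v i - 1) • (∏ j ∈ s.erase i, lazy α (v j)) • g) x ^ 2 ≤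
      variance (∏ i ∈ s, lazy α (v i)) g x := by
  induction s using Finset.induction_on generalizing x with
  | empty => simp [variance_apply]
  | insert a s ha ih =>
    have hu := (hv a).lazy h0 h1
    have first_step :=
      sq_sub_one_le_variance_lazy (hv a) h0 ((∏ i ∈ s, lazy α (v i)) • g) x
    have other_steps := hu.sum_sq_smul_le (mul_nonneg h0 (sub_nonneg.2 h1)) ih x
    rw [Finset.prod_insert ha, variance_mul, BddMeas.add_apply, Finset.sum_insert ha,
      Finset.erase_insert ha, mul_add]
    refine add_le_add first_step (other_steps.trans_eq' ?_)
    congr 1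
    refine Finset.sum_congr rfl fun i hi => ?_
    have hia : a ≠ i := fun h => ha (h ▸ hi)
    rw [Finset.erase_insert_of_ne hia, Finset.prod_insert (by simp [ha]), smul_smul, smul_smul,
      smul_smul, mul_left_comm, ← mul_assoc]

end Lazy

section LazyMix

variable {ι : Type*} [Fintype ι] {v : ι → ConvAlg E} {η : ℝ}

/-- The operator `1 + η ∑ (v i - 1)`. Its powers converge to the compound Poisson operator
`exp (p ∑ (v i - 1))` when `η = p / L` and the exponent `L` tends to infinity. -/
def lazyMix (η : ℝ) (v : ι → ConvAlg E) : ConvAlg E := 1 + η • ∑ i, (v i - 1)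

theorem lazyMix_smul_apply (η : ℝ) (v : ι → ConvAlg E) (g : BddMeas E) (x : E) :
    (lazyMix η v • g) x = (1 - Fintype.card ι * η) * g x + η * ((∑ i, v i) • g) x := by
  rw [lazyMix, add_smul, one_smul, smul_assoc, Finset.sum_smul, Finset.sum_smul]
  simp only [sub_smul, one_smul, BddMeas.add_apply, BddMeas.smul_apply, BddMeas.sum_apply,
    BddMeas.sub_apply]
  rw [Finset.sum_sub_distrib, Finset.sum_const, Finset.card_univ, nsmul_eq_mul]
  ring

theorem sum_smul_one_of_isMarkov (hv : ∀ i, IsMarkov (v i)) :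
    (∑ i, v i) • (1 : BddMeas E) = (Fintype.card ι : ℝ) • 1 := by
  simp [Finset.sum_smul, (hv _).smul_one, Nat.cast_smul_eq_nsmul]

theorem isMarkov_lazyMix (hv : ∀ i, IsMarkov (v i)) (h0 : 0 ≤ η)
    (h1 : Fintype.card ι * η ≤ 1) : IsMarkov (lazyMix η v) := by
  refine IsPositive.isMarkov ?_ ?_
  · have : lazyMix η v = (1 - Fintype.card ι * η) • 1 + η • ∑ i, v i :=
      ConvAlg.ext fun g x => by simp [lazyMix_smul_apply, add_smul]
    exact this ▸ (IsPositive.one.smul (sub_nonneg.2 h1)).add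
      ((IsPositive.sum fun i _ => (hv i).isPositive).smul h0)
  · simp [lazyMix_smul_apply, sum_smul_one_of_isMarkov hv, mul_comm]

theorem sum_smul_sq_le_variance_lazyMix (hv : ∀ i, IsMarkov (v i)) (h0 : 0 ≤ η)
    (h1 : Fintype.card ι * η ≤ 1 / 2) (g : BddMeas E) (x : E) :
    η / 2 * ((∑ i, v i) • (g - g x • (1 : BddMeas E)) ^ 2) x ≤ variance (lazyMix η v) g x := by
  set f := g - g x • (1 : BddMeas E) with hf
  have hfx : f x = 0 := by simp [hf]
  rw [← (isMarkov_lazyMix hv h0 (h1.trans (by norm_num))).variance_sub_const g (g x), ← hf,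
    variance_apply, lazyMix_smul_apply, lazyMix_smul_apply, BddMeas.pow_apply, hfx]
  have hpos : IsPositive (∑ i, v i) := .sum fun i _ => (hv i).isPositive
  have hcs := hpos.sq_apply_le f x
  simp only [sum_smul_one_of_isMarkov hv, BddMeas.smul_apply, BddMeas.one_apply] at hcs
  have hsq := hpos.apply_nonneg (g := f ^ 2) (fun y => sq_nonneg _) x
  nlinarith [mul_nonneg h0 h0, mul_nonneg h0 hsq]

theorem sum_sq_sub_one_le_lazyMix_pow (hv : ∀ i, IsMarkov (v i)) (h0 : 0 ≤ η)
    (h1 : Fintype.card ι * η ≤ 1 / 2) (l : ℕ) (g : BddMeas E) (x : E) :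
    (l + 1) * η / 2 * ∑ i, ((v i - 1) • lazyMix η v ^ l • g) x ^ 2 ≤
      (lazyMix η v ^ (l + 1) • g ^ 2) x := by
  have one_step (g : BddMeas E) (x : E) :
      η / 2 * ∑ i, ((v i - 1) • g) x ^ 2 ≤ 1 * variance (lazyMix η v) g x := by
    refine le_trans ?_ ((sum_smul_sq_le_variance_lazyMix hv h0 h1 g x).trans_eq (one_mul _).symm)
    rw [Finset.sum_smul, BddMeas.sum_apply]
    gcongr with i
    rw [(hv i).sub_one_smul_apply]
    exact (hv i).sq_apply_le _ x
  have := (isMarkov_lazyMix hv h0 (h1.trans (by norm_num))).sum_sq_le_variance_pow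
    (by positivity) one_step l g x
  linarith [variance_apply_le (lazyMix η v ^ (l + 1)) g x]

theorem sq_sub_const_le_lazyMix_pow (hv : ∀ i, IsMarkov (v i)) (h0 : 0 ≤ η)
    (h1 : Fintype.card ι * η ≤ 1 / 2) {P : ConvAlg E} (hP : IsPositive P)
    (hle : IsPositive (∑ i, v i - P)) {q : ℝ} (hq0 : 0 ≤ q)
    (hq : P • (1 : BddMeas E) = q • 1) (l : ℕ) (g : BddMeas E) (x : E) :
    (l + 1) * η / 2 * ((P - q • 1) • lazyMix η v ^ l • g) x ^ 2 ≤
      q * (lazyMix η v ^ (l + 1) • g ^ 2) x := by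
  have one_step (g : BddMeas E) (x : E) :
      η / 2 * ∑ _i ∈ {()}, ((P - q • 1) • g) x ^ 2 ≤ q * variance (lazyMix η v) g x := by
    set f := g - g x • (1 : BddMeas E) with hf
    have hcenter : ((P - q • 1) • g) x = (P • f) x := by
      simp [hf, sub_smul, smul_sub, smul_comm P (g x), hq, mul_comm]
    have hcs : (P • f) x ^ 2 ≤ q * (P • f ^ 2) x := by
      simpa [hq] using hP.sq_apply_le f x
    have hsub : (P • f ^ 2) x ≤ ((∑ i, v i) • f ^ 2) x := by
      simpa [sub_smul] using hle.apply_nonneg (g := f ^ 2) (fun y => sq_nonneg _) x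
    rw [Finset.sum_singleton, hcenter]
    calc η / 2 * (P • f) x ^ 2 ≤ η / 2 * (q * ((∑ i, v i) • f ^ 2) x) := by
          gcongr
          exact hcs.trans (by gcongr)
      _ = q * (η / 2 * ((∑ i, v i) • f ^ 2) x) := by ring
      _ ≤ q * variance (lazyMix η v) g x := by
          gcongr
          exact sum_smul_sq_le_variance_lazyMix hv h0 h1 g x
  have := (isMarkov_lazyMix hv h0 (h1.trans (by norm_num))).sum_sq_le_variance_pow
    (by positivity) one_step l g x
  rw [Finset.sum_singleton] at this
  have hvar := mul_le_mul_of_nonneg_left (variance_apply_le (lazyMix η v ^ (l + 1)) g x) hq0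
  linarith

end LazyMix

end LazyOperators

section ShiftSets

variable {E : Type*} [AddCommGroup E] [MeasurableSpace E]

/-- A measurable additive functional on `E`; it plays the role of `⟨·, t⟩`. -/
structure AddFunctional (E : Type*) [AddCommGroup E] [MeasurableSpace E] extends E →+ ℝ where
  measurable_toFun : Measurable toFun

namespace AddFunctional

instance : FunLike (AddFunctional E) E ℝ where
  coe y := y.toFun
  coe_injective := by
    rintro ⟨y, _⟩ ⟨z, _⟩ h
    congr
    exact DFunLike.coe_injective h

instance : AddMonoidHomClass (AddFunctional E) E ℝ where
  map_add y := y.map_add'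
  map_zero y := y.map_zero'

theorem measurable (y : AddFunctional E) : Measurable y := y.measurable_toFun

instance : Neg (AddFunctional E) := ⟨fun y => ⟨-y.toAddMonoidHom, y.measurable.neg⟩⟩

@[simp] theorem neg_apply (y : AddFunctional E) (x : E) : (-y) x = -y x := rfl

instance : Zero (AddFunctional E) := ⟨⟨0, measurable_const⟩⟩

@[simp] theorem zero_apply (x : E) : (0 : AddFunctional E) x = 0 := rfl

end AddFunctional

/-- The indicator function of the slab `{x | y x ∈ J}` given by an interval `J`. -/
def slabInd (y : AddFunctional E) (J : Set ℝ) (hJ : J.OrdConnected) : BddMeas E :=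
  .ind (y ⁻¹' J) (y.measurable hJ.measurableSet)

theorem slabInd_apply (y : AddFunctional E) {J : Set ℝ} (hJ : J.OrdConnected) (x : E) :
    slabInd y J hJ x = J.indicator 1 (y x) := rfl

/-- The indicator function of `{x | y x ∈ H}` for a half-line `H`. -/
def halfInd (y : AddFunctional E) (H : LowerSet ℝ) : BddMeas E :=
  slabInd y H H.lower.ordConnected

theorem halfInd_apply (y : AddFunctional E) (H : LowerSet ℝ) (x : E) :
    halfInd y H x = (H : Set ℝ).indicator 1 (y x) := rfl

theorem halfInd_nonneg (y : AddFunctional E) (H : LowerSet ℝ) (x : E) : 0 ≤ halfInd y H x :=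
  Set.indicator_nonneg (fun _ _ => zero_le_one) _

theorem halfInd_le_one (y : AddFunctional E) (H : LowerSet ℝ) (x : E) : halfInd y H x ≤ 1 :=
  Set.indicator_le_self' (fun _ _ => zero_le_one) _

/-- The half-line `ℝ \ (-H)`. -/
def reflectCompl (H : LowerSet ℝ) : LowerSet ℝ where
  carrier := {t | -t ∉ H}
  lower' _ _ hle ht hmem := ht (H.lower (neg_le_neg hle) hmem)

theorem mem_reflectCompl {H : LowerSet ℝ} {t : ℝ} : t ∈ reflectCompl H ↔ -t ∉ H := .rfl

theorem halfInd_neg_reflectCompl (y : AddFunctional E) (H : LowerSet ℝ) :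
    halfInd (-y) (reflectCompl H) = 1 - halfInd y H := by
  ext x
  by_cases h : y x ∈ H <;> simp [halfInd_apply, Set.indicator, mem_reflectCompl, h]

theorem halfInd_Iic_apply (y : AddFunctional E) (t : ℝ) (x : E) :
    halfInd y (.Iic t) x = if y x ≤ t then 1 else 0 := by
  simp [halfInd_apply, Set.indicator]

theorem exists_slabInd_eq_sub (y : AddFunctional E) {J : Set ℝ} (hJ : J.OrdConnected) :
    ∃ H₁ H₂ : LowerSet ℝ, slabInd y J hJ = halfInd y H₁ - halfInd y H₂ := by
  have hlower : IsLowerSet ((lowerClosure J : Set ℝ) \ J) := by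
    rintro t t' hle ⟨ht, htJ⟩
    obtain ⟨w, hw, htw⟩ := ht
    exact ⟨⟨w, hw, hle.trans htw⟩, fun h => htJ (hJ.out h hw ⟨hle, htw⟩)⟩
  refine ⟨lowerClosure J, ⟨_, hlower⟩, ?_⟩
  ext x
  rw [slabInd_apply, BddMeas.sub_apply, halfInd_apply, halfInd_apply]
  simp only [LowerSet.coe_mk]
  rw [Set.indicator_sdiff subset_lowerClosure, Pi.sub_apply, sub_sub_cancel]

variable [MeasurableAdd₂ E] {W : ConvAlg E}

theorem IsMarkov.halfInd_anti (hW : IsMarkov W) (y : AddFunctional E) (H : LowerSet ℝ) {a b : E}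
    (hab : y a ≤ y b) : (W • halfInd y H) b ≤ (W • halfInd y H) a := by
  rw [smul_apply_eq_translate, smul_apply_eq_translate W _ a]
  refine hW.isPositive.mono (fun z => ?_) 0
  have hle : y (a + z) ≤ y (b + z) := by simpa using hab
  simp only [translate_apply, halfInd_apply]
  by_cases h : y (b + z) ∈ (H : Set ℝ)
  · rw [Set.indicator_of_mem h, Set.indicator_of_mem (H.lower hle h)]
    rfl
  · rw [Set.indicator_of_notMem h]
    exact halfInd_nonneg y H (a + z)

/-- The points `a` such that translation by `a` decreases the `W`-measure of some half-line of
values of `y` by more than `s`. -/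
def shiftSet (W : ConvAlg E) (y : AddFunctional E) (s : ℝ) : Set E :=
  {a | ∃ H : LowerSet ℝ, s < (W • halfInd y H) 0 - (W • halfInd y H) a}

/-- The points `a` such that translation by `a` changes the `W`-measure of some half-line of
values of `y` by more than `s`. -/
def largeShift (W : ConvAlg E) (y : AddFunctional E) (s : ℝ) : Set E :=
  shiftSet W y s ∪ shiftSet W (-y) s

variable {y : AddFunctional E} {s : ℝ}

theorem IsMarkov.mem_shiftSet_of_le (hW : IsMarkov W) {a b : E} (ha : a ∈ shiftSet W y s)
    (hab : y a ≤ y b) : b ∈ shiftSet W y s :=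
  ha.imp fun H hH => hH.trans_le (sub_le_sub_left (hW.halfInd_anti y H hab) _)

theorem IsMarkov.exists_preimage_eq_shiftSet (hW : IsMarkov W) (y : AddFunctional E) (s : ℝ) :
    ∃ A : Set ℝ, MeasurableSet A ∧ shiftSet W y s = y ⁻¹' A ∧
      ∀ t ∈ A, ∃ a ∈ shiftSet W y s, y a ≤ t := by
  refine ⟨upperClosure (y '' shiftSet W y s), (upperClosure _).upper.ordConnected.measurableSet,
    ?_, by simp⟩
  ext b
  simpa using ⟨fun hb => ⟨b, hb, le_rfl⟩, fun ⟨a, ha, hab⟩ => hW.mem_shiftSet_of_le ha hab⟩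

theorem IsMarkov.measurableSet_largeShift (hW : IsMarkov W) (y : AddFunctional E) (s : ℝ) :
    MeasurableSet (largeShift W y s) := by
  have hmeas (y : AddFunctional E) : MeasurableSet (shiftSet W y s) := by
    obtain ⟨A, hA, h, -⟩ := hW.exists_preimage_eq_shiftSet y s
    exact h ▸ y.measurable hA
  exact (hmeas y).union (hmeas (-y))

theorem IsMarkov.abs_halfInd_sub_le_of_notMem (hW : IsMarkov W) {a : E}
    (ha : a ∉ largeShift W y s) (H : LowerSet ℝ) :
    |(W • halfInd y H) a - (W • halfInd y H) 0| ≤ s := by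
  contrapose! ha
  rcases lt_abs.1 ha with h | h
  · refine .inr ⟨reflectCompl H, ?_⟩
    simpa [halfInd_neg_reflectCompl, smul_sub, hW.smul_one] using h
  · exact .inl ⟨H, by linarith⟩

theorem IsMarkov.abs_halfInd_sub_le (hW : IsMarkov W) (hs : 0 ≤ s) (H : LowerSet ℝ) (a : E) :
    |(W • halfInd y H) a - (W • halfInd y H) 0| ≤
      (s • (1 : BddMeas E) + .ind _ (hW.measurableSet_largeShift y s)) a := by
  rw [BddMeas.add_apply, BddMeas.smul_apply, BddMeas.one_apply, mul_one]
  by_cases h : a ∈ largeShift W y s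
  · have nonneg := hW.isPositive.apply_nonneg (halfInd_nonneg y H)
    have le_one := hW.apply_le_of_le (halfInd_le_one y H)
    rw [BddMeas.ind_of_mem h, abs_le]
    constructor <;> linarith [nonneg a, nonneg 0, le_one a, le_one 0]
  · rw [BddMeas.ind_of_notMem h, add_zero]
    exact hW.abs_halfInd_sub_le_of_notMem h H

theorem convOp_smul_const_add_ind_le {V : Measure E} [IsProbabilityMeasure V] {B : Set E}
    (hB : MeasurableSet B) (hV : V.real B ≤ s) :
    (convOp V • (s • (1 : BddMeas E) + .ind B hB)) 0 ≤ 2 * s := by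
  rw [smul_add, (isMarkov_convOp V).smul_const, BddMeas.add_apply, convOp_smul_ind_zero]
  simpa [two_mul] using hV

variable {V : Measure E} [IsProbabilityMeasure V]

theorem IsMarkov.abs_convOp_halfInd_sub_le (hW : IsMarkov W) (hs : 0 ≤ s) (H : LowerSet ℝ)
    (hV : V.real (largeShift W y s) ≤ s) :
    |((convOp V - 1) • W • halfInd y H) 0| ≤ 2 * s := by
  have hVm := isMarkov_convOp V
  rw [hVm.sub_one_smul_apply]
  refine (hVm.isPositive.abs_apply_le (fun a => ?_) 0).trans
    (convOp_smul_const_add_ind_le (hW.measurableSet_largeShift y s) hV)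
  simpa using hW.abs_halfInd_sub_le hs H a

theorem IsMarkov.convOp_slabInd_le (hW : IsMarkov W) (hs : 0 ≤ s) {J : Set ℝ}
    (hJ : J.OrdConnected) (hV : V.real (largeShift W y s) ≤ s) :
    (convOp V • W • slabInd y J hJ) 0 ≤ (W • slabInd y J hJ) 0 + 4 * s := by
  obtain ⟨H₁, H₂, hsub⟩ := exists_slabInd_eq_sub y hJ
  have h₁ := abs_le.1 (hW.abs_convOp_halfInd_sub_le hs H₁ hV)
  have h₂ := abs_le.1 (hW.abs_convOp_halfInd_sub_le hs H₂ hV)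
  simp only [sub_smul, one_smul, BddMeas.sub_apply] at h₁ h₂
  simp only [hsub, smul_sub, BddMeas.sub_apply]
  linarith [h₁.2, h₂.1]

end ShiftSets

section Concentration

variable {E : Type*} [AddCommGroup E] [MeasurableSpace E] [MeasurableAdd₂ E]

theorem measureReal_le_of_forall_Icc_le (ν : Measure ℝ) [IsFiniteMeasure ν] {A : Set ℝ}
    (hA : MeasurableSet A) {c : ℝ} (hc : 0 ≤ c)
    (h : ∀ a ∈ A, ∀ b ∈ A, a ≤ b → ν.real (Set.Icc a b) ≤ c) : ν.real A ≤ c := by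
  refine ENNReal.toReal_le_of_le_ofReal hc ?_
  rw [hA.measure_eq_iSup_isCompact]
  refine iSup₂_le fun K hKA => iSup_le fun hK => ?_
  rcases K.eq_empty_or_nonempty with rfl | hne
  · simp
  obtain ⟨a, haK, ha⟩ := hK.exists_isLeast hne
  obtain ⟨b, hbK, hb⟩ := hK.exists_isGreatest hne
  have hsub : K ⊆ Set.Icc a b := fun x hx => ⟨ha hx, hb hx⟩
  rw [ENNReal.le_ofReal_iff_toReal_le (measure_ne_top _ _) hc]
  exact (measureReal_mono hsub).trans (h a (hKA haK) b (hKA hbK) (ha hbK))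

theorem convOp_restrict_add_compl (μ : Measure E) [IsFiniteMeasure μ] {B : Set E}
    (hB : MeasurableSet B) : convOp (μ.restrict B) + convOp (μ.restrict Bᶜ) = convOp μ :=
  ConvAlg.ext fun g x => by
    rw [add_smul]
    exact integral_add_compl hB ((translate x g).integrable μ)

variable {ι : Type*} [Fintype ι] (V : ι → Measure E) [∀ i, IsProbabilityMeasure (V i)]
  {η s : ℝ} (l : ℕ)

theorem mul_sum_measureReal_le_restrict {B : Set E} (hB : MeasurableSet B) {F : BddMeas E}
    (hF : ∀ z ∈ B, s ≤ F z - F 0) :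
    s * ∑ i, (V i).real B ≤
      ((∑ i, convOp ((V i).restrict B) - (∑ i, (V i).real B) • 1) • F) 0 := by
  rw [sub_smul, smul_assoc, one_smul, BddMeas.sub_apply, BddMeas.smul_apply, Finset.sum_smul,
    BddMeas.sum_apply, Finset.mul_sum, Finset.sum_mul, ← Finset.sum_sub_distrib]
  refine Finset.sum_le_sum fun i _ => ?_
  have hconst : ∫ _ in B, (s + F 0) ∂(V i) = s * (V i).real B + (V i).real B * F 0 := by
    simp
    ring
  rw [le_sub_iff_add_le, ← hconst, convOp_smul_apply]
  simp only [zero_add]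
  exact setIntegral_mono_on (integrable_const _) (F.integrable _) hB fun z hz => by
    linarith [hF z hz]

theorem sum_measureReal_le_of_le_sub (h0 : 0 < η) (h1 : Fintype.card ι * η ≤ 1 / 2)
    {g : BddMeas E} (hg : ∀ x, (g ^ 2) x ≤ 1) (hs : 0 < s) {B : Set E} (hB : MeasurableSet B)
    (hdiff : ∀ z ∈ B, s ≤ (lazyMix η (fun i => convOp (V i)) ^ l • g) z -
      (lazyMix η (fun i => convOp (V i)) ^ l • g) 0) :
    ∑ i, (V i).real B ≤ 2 / ((l + 1) * η * s ^ 2) := by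
  have hv (i : ι) : IsMarkov (convOp (V i)) := isMarkov_convOp _
  set W := lazyMix η fun i => convOp (V i)
  set q := ∑ i, (V i).real B with hq
  have hq0 : 0 ≤ q := Finset.sum_nonneg fun i _ => measureReal_nonneg
  set P : ConvAlg E := ∑ i, convOp ((V i).restrict B) with hP
  have hPle : IsPositive (∑ i, convOp (V i) - P) := by
    rw [hP, ← Finset.sum_sub_distrib]
    refine .sum fun i _ => ?_
    rw [← convOp_restrict_add_compl (V i) hB, add_sub_cancel_left]
    exact isPositive_convOp _
  have hPone : P • (1 : BddMeas E) = q • 1 := by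
    ext x
    simp [hP, hq, Finset.sum_smul, convOp_smul_apply]
  have hlower := mul_sum_measureReal_le_restrict V hB hdiff
  have hupper : (W ^ (l + 1) • g ^ 2) 0 ≤ 1 :=
    ((isMarkov_lazyMix hv h0.le (h1.trans (by norm_num))).pow _).apply_le_of_le hg 0
  have hquad : (l + 1) * η / 2 * (s * q) ^ 2 ≤ q * 1 := by
    calc (l + 1) * η / 2 * (s * q) ^ 2 ≤ (l + 1) * η / 2 * ((P - q • 1) • W ^ l • g) 0 ^ 2 := by
          gcongr
      _ ≤ q * (W ^ (l + 1) • g ^ 2) 0 := sq_sub_const_le_lazyMix_pow hv h0.le h1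
          (.sum fun i _ => isPositive_convOp _) hPle hq0 hPone l g 0
      _ ≤ q * 1 := by gcongr
  rw [le_div_iff₀ (by positivity)]
  rcases hq0.eq_or_lt with hq0 | hq0
  · simp [← hq0]
  · exact le_of_mul_le_mul_left (a := q) (by nlinarith) hq0

theorem sum_measureReal_shiftSet_le (h0 : 0 < η) (h1 : Fintype.card ι * η ≤ 1 / 2)
    (y : AddFunctional E) (hs : 0 < s) :
    ∑ i, (V i).real (shiftSet (lazyMix η (fun i => convOp (V i)) ^ l) y s) ≤
      2 / ((l + 1) * η * s ^ 2) := by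
  have hW : IsMarkov (lazyMix η (fun i => convOp (V i)) ^ l) :=
    (isMarkov_lazyMix (fun i => isMarkov_convOp (V i)) h0.le (h1.trans (by norm_num))).pow l
  obtain ⟨A, hA, hpre, hwitness⟩ := hW.exists_preimage_eq_shiftSet y s
  have hsum {C : Set ℝ} (hC : MeasurableSet C) :
      (∑ i, (V i).map y).real C = ∑ i, (V i).real (y ⁻¹' C) := by
    simp only [Measure.real, Measure.finsetSum_apply, Measure.map_apply y.measurable hC]
    exact ENNReal.toReal_sum fun i _ => measure_ne_top _ _
  rw [hpre, ← hsum hA]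
  refine measureReal_le_of_forall_Icc_le _ hA (by positivity) fun a ha b _ _ => ?_
  rw [hsum measurableSet_Icc]
  obtain ⟨a', ⟨H, hH⟩, ha'⟩ := hwitness a ha
  refine sum_measureReal_le_of_le_sub V l h0 h1 (g := -halfInd y H) (fun x => ?_) hs
    (y.measurable measurableSet_Icc) fun z hz => ?_
  · rw [neg_sq, halfInd, slabInd, BddMeas.ind_sq]
    exact BddMeas.ind_le_one
  · simp only [smul_neg, BddMeas.neg_apply]
    linarith [hW.halfInd_anti y H (ha'.trans hz.1)]

-- The analogue of Rogozin's concentration inequality.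
theorem sum_measureReal_largeShift_le (h0 : 0 < η) (h1 : Fintype.card ι * η ≤ 1 / 2)
    (y : AddFunctional E) (hs : 0 < s) :
    ∑ i, (V i).real (largeShift (lazyMix η (fun i => convOp (V i)) ^ l) y s) ≤
      4 / ((l + 1) * η * s ^ 2) := by
  calc ∑ i, (V i).real (largeShift (lazyMix η (fun i => convOp (V i)) ^ l) y s)
      ≤ ∑ i, ((V i).real (shiftSet (lazyMix η (fun i => convOp (V i)) ^ l) y s) +
          (V i).real (shiftSet (lazyMix η (fun i => convOp (V i)) ^ l) (-y) s)) :=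
        Finset.sum_le_sum fun i _ => measureReal_union_le _ _
    _ ≤ 2 / ((l + 1) * η * s ^ 2) + 2 / ((l + 1) * η * s ^ 2) := by
        rw [Finset.sum_add_distrib]
        exact add_le_add (sum_measureReal_shiftSet_le V l h0 h1 y hs)
          (sum_measureReal_shiftSet_le V l h0 h1 (-y) hs)
    _ = 4 / ((l + 1) * η * s ^ 2) := by ring

end Concentration

section Halfspaces

variable {E : Type*} [AddCommGroup E] [MeasurableSpace E] {κ : Type*}

/-- The intersection of the halfspaces `{x | y k x ≤ c k}`. -/
def halfspaces (y : κ → AddFunctional E) (c : κ → ℝ) : Set E := {x | ∀ k, y k x ≤ c k}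

theorem measurableSet_halfspaces [Countable κ] (y : κ → AddFunctional E) (c : κ → ℝ) :
    MeasurableSet (halfspaces y c) := by
  simp only [halfspaces, Set.ofPred_forall]
  exact .iInter fun k => (y k).measurable measurableSet_Iic

/-- The indicator function of an intersection of countably many halfspaces. -/
def halfspacesInd [Countable κ] (y : κ → AddFunctional E) (c : κ → ℝ) : BddMeas E :=
  .ind (halfspaces y c) (measurableSet_halfspaces y c)

theorem abs_halfspacesInd_le_one [Countable κ] (y : κ → AddFunctional E) (c : κ → ℝ) (x : E) :
    |halfspacesInd y c x| ≤ 1 := by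
  rw [halfspacesInd, abs_of_nonneg BddMeas.ind_nonneg]
  exact BddMeas.ind_le_one

theorem halfspacesInd_congr [Countable κ] {y : κ → AddFunctional E} {c c' : κ → ℝ} {x x' : E}
    (h : ∀ k, y k x ≤ c k ↔ y k x' ≤ c' k) : halfspacesInd y c x = halfspacesInd y c' x' := by
  have hmem : x ∈ halfspaces y c ↔ x' ∈ halfspaces y c' := forall_congr' h
  by_cases hx : x ∈ halfspaces y c
  · exact (BddMeas.ind_of_mem hx).trans (BddMeas.ind_of_mem (hmem.1 hx)).symm
  · exact (BddMeas.ind_of_notMem hx).trans (BddMeas.ind_of_notMem (mt hmem.2 hx)).symm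

variable [MeasurableAdd₂ E]

theorem translate_halfspacesInd [Countable κ] (y : κ → AddFunctional E) (c : κ → ℝ) (x : E) :
    translate x (halfspacesInd y c) = halfspacesInd y fun k => c k - y k x :=
  BddMeas.ext fun z => halfspacesInd_congr fun k => by rw [map_add, le_sub_iff_add_le']

/-- The function `z ↦ |𝟙[y (a + z) ≤ t] - 𝟙[y z ≤ t]|`. As `y` is additive, the difference has the
same sign for all `z`, so convolution operators commute with the absolute value. -/
def crossing (y : AddFunctional E) (t : ℝ) (a : E) : BddMeas E :=
  if 0 ≤ y a then halfInd y (.Iic t) - translate a (halfInd y (.Iic t))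
  else translate a (halfInd y (.Iic t)) - halfInd y (.Iic t)

theorem crossing_apply (y : AddFunctional E) (t : ℝ) (a z : E) :
    crossing y t a z = if (y (a + z) ≤ t ↔ y z ≤ t) then 0 else 1 := by
  unfold crossing
  split_ifs with ha h h <;>
    simp only [BddMeas.sub_apply, translate_apply, halfInd_Iic_apply, map_add] at h ⊢ <;> grind

theorem smul_crossing_le (W : ConvAlg E) (y : AddFunctional E) (t : ℝ) (a : E) :
    (W • crossing y t a) 0 ≤ |(W • halfInd y (.Iic t)) a - (W • halfInd y (.Iic t)) 0| := by
  rw [smul_apply_eq_translate W _ a]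
  unfold crossing
  split_ifs
  · rw [smul_sub, BddMeas.sub_apply, abs_sub_comm]
    exact le_abs_self _
  · rw [smul_sub, BddMeas.sub_apply]
    exact le_abs_self _

variable [Fintype κ]

theorem abs_halfspacesInd_sub_le_sum_crossing (y : κ → AddFunctional E) (c : κ → ℝ) (a z : E) :
    |halfspacesInd y c (a + z) - halfspacesInd y c z| ≤ ∑ k, crossing (y k) (c k) a z := by
  have crossing_nonneg (k : κ) : 0 ≤ crossing (y k) (c k) a z := by
    rw [crossing_apply]
    positivity
  by_cases h : ∀ k, y k (a + z) ≤ c k ↔ y k z ≤ c k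
  · rw [halfspacesInd_congr h, sub_self, abs_zero]
    exact Finset.sum_nonneg fun k _ => crossing_nonneg k
  · obtain ⟨k, hk⟩ := not_forall.1 h
    calc |halfspacesInd y c (a + z) - halfspacesInd y c z| ≤ 1 :=
          abs_sub_le_of_nonneg_of_le BddMeas.ind_nonneg BddMeas.ind_le_one BddMeas.ind_nonneg
            BddMeas.ind_le_one
      _ = crossing (y k) (c k) a z := by rw [crossing_apply, if_neg hk]
      _ ≤ ∑ k, crossing (y k) (c k) a z :=
          Finset.single_le_sum (fun k _ => crossing_nonneg k) (Finset.mem_univ k)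

theorem IsMarkov.abs_halfspacesInd_sub_le {W : ConvAlg E} (hW : IsMarkov W)
    (y : κ → AddFunctional E) (c : κ → ℝ) (a : E) :
    |(W • halfspacesInd y c) a - (W • halfspacesInd y c) 0| ≤
      ∑ k, |(W • halfInd (y k) (.Iic (c k))) a - (W • halfInd (y k) (.Iic (c k))) 0| := by
  rw [smul_apply_eq_translate W _ a, ← BddMeas.sub_apply, ← smul_sub]
  calc |(W • (translate a (halfspacesInd y c) - halfspacesInd y c)) 0|
      ≤ (W • ∑ k, crossing (y k) (c k) a) 0 := hW.isPositive.abs_apply_le (fun z => by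
        simpa using abs_halfspacesInd_sub_le_sum_crossing y c a z) 0
    _ = ∑ k, (W • crossing (y k) (c k) a) 0 := by rw [Finset.smul_sum, BddMeas.sum_apply]
    _ ≤ _ := Finset.sum_le_sum fun k _ => smul_crossing_le W (y k) (c k) a

theorem IsMarkov.abs_convOp_sub_one_halfspacesInd_le {W : ConvAlg E} (hW : IsMarkov W)
    (y : κ → AddFunctional E) (c : κ → ℝ) {s : ℝ} (hs : 0 ≤ s) {V : Measure E}
    [IsProbabilityMeasure V] (hV : ∀ k, V.real (largeShift W (y k) s) ≤ s) (x : E) :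
    |((convOp V - 1) • W • halfspacesInd y c) x| ≤ 2 * Fintype.card κ * s := by
  have hVm := isMarkov_convOp V
  rw [← mul_smul, smul_apply_eq_translate, translate_halfspacesInd, mul_smul,
    hVm.sub_one_smul_apply]
  generalize (fun k => c k - y k x) = c
  set B : κ → BddMeas E := fun k =>
    s • (1 : BddMeas E) + .ind _ (hW.measurableSet_largeShift (y k) s)
  have hpointwise (a : E) :
      |(W • halfspacesInd y c - (W • halfspacesInd y c) 0 • (1 : BddMeas E)) a| ≤ (∑ k, B k) a := by
    rw [BddMeas.sum_apply, BddMeas.sub_apply, BddMeas.smul_apply, BddMeas.one_apply, mul_one]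
    exact (hW.abs_halfspacesInd_sub_le y c a).trans
      (Finset.sum_le_sum fun k _ => hW.abs_halfInd_sub_le hs _ a)
  calc _ ≤ (convOp V • ∑ k, B k) 0 := hVm.isPositive.abs_apply_le hpointwise 0
    _ = ∑ k, (convOp V • B k) 0 := by rw [Finset.smul_sum, BddMeas.sum_apply]
    _ ≤ ∑ _k : κ, 2 * s := Finset.sum_le_sum fun k _ => convOp_smul_const_add_ind_le _ (hV k)
    _ = 2 * Fintype.card κ * s := by
        simp
        ring

end Halfspaces

section BernoulliWeights

variable {ι : Type*} [Fintype ι] [DecidableEq ι]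

/-- The probability that a random subset of `ι`, containing each point independently with
probability `α`, equals `B`. -/
def bernWeight (α : ℝ) (B : Finset ι) : ℝ := ∏ j, if j ∈ B then α else 1 - α

theorem bernWeight_nonneg {α : ℝ} (h0 : 0 ≤ α) (h1 : α ≤ 1) (B : Finset ι) :
    0 ≤ bernWeight α B :=
  Finset.prod_nonneg fun j _ => by split_ifs <;> linarith

theorem sum_bernWeight_smul_prod_ite {R : Type*} [CommRing R] [Algebra ℝ R] (α : ℝ)
    (f g : ι → R) :
    ∑ B : Finset ι, bernWeight α B • ∏ j, (if j ∈ B then f j else g j) =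
      ∏ j, (α • f j + (1 - α) • g j) := by
  rw [Finset.prod_add, Finset.powerset_univ]
  refine Finset.sum_congr rfl fun B _ => ?_
  rw [bernWeight, ← Finset.prod_smul, ← Finset.compl_eq_univ_sdiff, ← Finset.prod_mul_prod_compl B]
  congr 1
  · exact Finset.prod_congr rfl fun j hj => by rw [if_pos hj, if_pos hj]
  · refine Finset.prod_congr rfl fun j hj => ?_
    rw [if_neg (Finset.mem_compl.1 hj), if_neg (Finset.mem_compl.1 hj)]

theorem sum_bernWeight (α : ℝ) : ∑ B : Finset ι, bernWeight α B = 1 := by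
  simpa using sum_bernWeight_smul_prod_ite α (fun _ : ι => (1 : ℝ)) fun _ => 1

/-- The sum of `d` over the random set `B`, minus its expectation. -/
def centeredSum (α : ℝ) (d : ι → ℝ) (B : Finset ι) : ℝ :=
  ∑ i, ((if i ∈ B then 1 else 0) - α) * d i

theorem bernoulli_exp_le {α s : ℝ} (h0 : 0 ≤ α) (hs : |s| ≤ 1) :
    α * Real.exp ((1 - α) * s) + (1 - α) * Real.exp (-α * s) ≤ Real.exp (α * s ^ 2) := by
  have hexp : Real.exp s ≤ 1 + s + s ^ 2 := by
    linarith [(abs_le.1 (Real.abs_exp_sub_one_sub_id_le hs)).2]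
  calc α * Real.exp ((1 - α) * s) + (1 - α) * Real.exp (-α * s)
      = Real.exp (-α * s) * (α * Real.exp s + (1 - α)) := by
        rw [show (1 - α) * s = -α * s + s by ring, Real.exp_add]
        ring
    _ ≤ Real.exp (-α * s) * Real.exp (α * s + α * s ^ 2) := by
        gcongr
        nlinarith [Real.add_one_le_exp (α * s + α * s ^ 2)]
    _ = Real.exp (α * s ^ 2) := by
        rw [← Real.exp_add]
        ring_nf

theorem sum_bernWeight_mul_exp_centeredSum_le {α : ℝ} (h0 : 0 ≤ α) (h1 : α ≤ 1) {d : ι → ℝ}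
    (hd : ∀ i, |d i| ≤ 1) :
    ∑ B, bernWeight α B * Real.exp (centeredSum α d B) ≤ Real.exp (α * ∑ i, d i ^ 2) := by
  have hfactor (B : Finset ι) : Real.exp (centeredSum α d B) =
      ∏ j, if j ∈ B then Real.exp ((1 - α) * d j) else Real.exp (-α * d j) := by
    rw [centeredSum, Real.exp_sum]
    refine Finset.prod_congr rfl fun j _ => ?_
    split_ifs <;> simp
  have : 0 ≤ 1 - α := sub_nonneg.2 h1
  calc ∑ B, bernWeight α B * Real.exp (centeredSum α d B)
      = ∏ j, (α * Real.exp ((1 - α) * d j) + (1 - α) * Real.exp (-α * d j)) := by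
        simp only [hfactor]
        exact sum_bernWeight_smul_prod_ite α _ _
    _ ≤ ∏ j, Real.exp (α * d j ^ 2) :=
        Finset.prod_le_prod (fun j _ => by positivity) fun j _ => bernoulli_exp_le h0 (hd j)
    _ = Real.exp (α * ∑ i, d i ^ 2) := by rw [← Real.exp_sum, Finset.mul_sum]

theorem le_log_card_add_sum_exp {C : Type*} [Fintype C] (z : C → ℝ) (c : C) :
    z c ≤ Real.log (Fintype.card C) + (Fintype.card C : ℝ)⁻¹ * ∑ c', Real.exp (z c') := by
  have hcard : (0 : ℝ) < Fintype.card C := by exact_mod_cast Fintype.card_pos_iff.2 ⟨c⟩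
  have hexp := Real.add_one_le_exp (z c - Real.log (Fintype.card C))
  rw [Real.exp_sub, Real.exp_log hcard, div_eq_inv_mul] at hexp
  have hsingle : Real.exp (z c) ≤ ∑ c', Real.exp (z c') :=
    Finset.single_le_sum (f := fun c' => Real.exp (z c')) (fun _ _ => (Real.exp_pos _).le)
      (Finset.mem_univ c)
  have := mul_le_mul_of_nonneg_left hsingle (inv_nonneg.2 hcard.le)
  linarith

end BernoulliWeights

section GibbsBound

variable {E : Type*} [AddCommGroup E] [MeasurableSpace E] [MeasurableAdd₂ E]
variable {ι : Type*} [Fintype ι] [DecidableEq ι]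

/-- The product of the operators `lazy α (v j)` over all `j ≠ i`. -/
def lazyProdErase (α : ℝ) (v : ι → ConvAlg E) (i : ι) : ConvAlg E :=
  ∏ j ∈ Finset.univ.erase i, lazy α (v j)

theorem sum_bernWeight_mul_ite_smul_prod (α a b : ℝ) (v : ι → ConvAlg E) (i : ι) :
    ∑ B : Finset ι, (bernWeight α B * if i ∈ B then a else b) • ∏ j ∈ B, v j =
      ((α * a) • v i + ((1 - α) * b) • 1) * lazyProdErase α v i := by
  have hterm (B : Finset ι) : (if i ∈ B then a else b) • ∏ j ∈ B, v j =
      ∏ j, if j ∈ B then (if j = i then a else 1) • v j else (if j = i then b else 1) • 1 := by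
    rw [← Fintype.prod_ite_eq' i fun _ => if i ∈ B then a else b, ← Fintype.prod_ite_mem B,
      ← Finset.prod_smul]
    refine Finset.prod_congr rfl fun j _ => ?_
    rcases eq_or_ne j i with rfl | hj
    · split_ifs <;> simp
    · simp only [if_neg hj, one_smul]
  simp only [mul_smul, hterm]
  rw [sum_bernWeight_smul_prod_ite, ← Finset.mul_prod_erase _ _ (Finset.mem_univ i),
    lazyProdErase, if_pos rfl, if_pos rfl, smul_smul, smul_smul]
  congr 1
  refine Finset.prod_congr rfl fun j hj => ?_
  rw [if_neg (Finset.ne_of_mem_erase hj), if_neg (Finset.ne_of_mem_erase hj), lazy, one_smul,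
    one_smul, smul_sub, sub_smul, one_smul]
  abel

/-- The linear functional `b ↦ ∑ i, ((v i - 1) * ∏ j ≠ i, lazy α (v j)) • b i`, evaluated at `0`.
For `b i = F` this is the derivative in `α` of the value at `0` of `(∏ j, lazy α (v j)) • F`. -/
def lazyPairing (α : ℝ) (v : ι → ConvAlg E) : (ι → BddMeas E) →ₗ[ℝ] ℝ where
  toFun b := ∑ i, (((v i - 1) * lazyProdErase α v i) • b i) 0
  map_add' b c := by simp [Finset.sum_add_distrib]
  map_smul' r b := by simp [smul_comm _ r, Finset.mul_sum]

theorem lazyPairing_apply (α : ℝ) (v : ι → ConvAlg E) (b : ι → BddMeas E) :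
    lazyPairing α v b = ∑ i, (((v i - 1) * lazyProdErase α v i) • b i) 0 := rfl

theorem mul_lazyPairing_eq_sum_bernWeight (α : ℝ) (v : ι → ConvAlg E) (b : ι → BddMeas E) :
    α * (1 - α) * lazyPairing α v b = ∑ B, bernWeight α B *
      ((∏ j ∈ B, v j) • ∑ i, ((if i ∈ B then 1 else 0) - α) • b i) 0 := by
  have hterm (i : ι) : α * (1 - α) * (((v i - 1) * lazyProdErase α v i) • b i) 0 =
      ∑ B, bernWeight α B * (((∏ j ∈ B, v j) • ((if i ∈ B then 1 else 0) - α) • b i) 0) := by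
    have hweight := sum_bernWeight_mul_ite_smul_prod α (1 - α) (-α) v i
    have hfactor : (α * (1 - α)) • v i + ((1 - α) * -α) • (1 : ConvAlg E) =
        (α * (1 - α)) • (v i - 1) := by
      rw [smul_sub, mul_neg, neg_smul, mul_comm (1 - α) α, ← sub_eq_add_neg]
    have hite (B : Finset ι) : (if i ∈ B then 1 else 0) - α = if i ∈ B then 1 - α else -α := by
      split_ifs <;> ring
    rw [hfactor, smul_mul_assoc] at hweight
    rw [← BddMeas.smul_apply, ← smul_assoc, ← hweight, Finset.sum_smul, BddMeas.sum_apply]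
    refine Finset.sum_congr rfl fun B _ => ?_
    rw [hite, smul_comm _ (_ : ℝ), BddMeas.smul_apply, smul_assoc, BddMeas.smul_apply, mul_assoc]
  rw [lazyPairing_apply, Finset.mul_sum, Finset.sum_congr rfl fun i _ => hterm i, Finset.sum_comm]
  simp only [Finset.smul_sum, BddMeas.sum_apply, Finset.mul_sum]

variable {α : ℝ} {v : ι → ConvAlg E} {C : Type*} [Fintype C] (code : E → C) {b : ι → BddMeas E}

-- This is the Gibbs variational bound: on each cell of the code the functions `b i` are constants,
-- so the supremum over `x` of the centred sums is dominated by a log-sum-exp over the cells.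
theorem mul_lazyPairing_le_log_card_add_exp (h0 : 0 ≤ α) (h1 : α ≤ 1) (hv : ∀ i, IsMarkov (v i))
    {A : ℝ} (hcode : ∀ x x', code x = code x' → ∀ i, b i x = b i x')
    (hb : ∀ i x, |b i x| ≤ 1) (hA : ∀ x, α * ∑ i, b i x ^ 2 ≤ A) :
    α * (1 - α) * lazyPairing α v b ≤ Real.log (Fintype.card C) + Real.exp A := by
  have hcard : (Fintype.card C : ℝ) ≠ 0 := by
    exact_mod_cast (Fintype.card_pos_iff.2 ⟨code 0⟩).ne'
  set d : C → ι → ℝ := fun c i => b i (Function.invFun code c)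
  have hcode' (x : E) (i : ι) : b i x = d (code x) i :=
    hcode _ _ (Function.invFun_eq ⟨x, rfl⟩).symm i
  set S : Finset ι → ℝ := fun B => ∑ c, Real.exp (centeredSum α (d c) B) with hS
  have hpointwise (B : Finset ι) (x : E) :
      (∑ i, ((if i ∈ B then 1 else 0) - α) • b i) x ≤
        Real.log (Fintype.card C) + (Fintype.card C : ℝ)⁻¹ * S B := by
    simp only [BddMeas.sum_apply, BddMeas.smul_apply, hcode']
    exact le_log_card_add_sum_exp (fun c => centeredSum α (d c) B) (code x)
  have hexpect : ∑ B, bernWeight α B * S B ≤ Fintype.card C * Real.exp A := by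
    simp only [hS, Finset.mul_sum]
    rw [Finset.sum_comm, ← nsmul_eq_mul]
    refine Finset.sum_le_card_nsmul _ _ _ fun c _ => ?_
    exact (sum_bernWeight_mul_exp_centeredSum_le h0 h1 fun i => hb i _).trans
      (Real.exp_le_exp.2 (hA _))
  calc α * (1 - α) * lazyPairing α v b
      ≤ ∑ B, bernWeight α B *
          (Real.log (Fintype.card C) + (Fintype.card C : ℝ)⁻¹ * S B) := by
        rw [mul_lazyPairing_eq_sum_bernWeight]
        gcongr with B
        · exact bernWeight_nonneg h0 h1 B
        · exact (IsMarkov.prod fun i _ => hv i).apply_le_of_le (hpointwise B) 0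
    _ = Real.log (Fintype.card C) +
          (Fintype.card C : ℝ)⁻¹ * ∑ B, bernWeight α B * S B := by
        simp only [mul_add, Finset.sum_add_distrib, ← Finset.sum_mul, sum_bernWeight, one_mul,
          mul_left_comm _ (Fintype.card C : ℝ)⁻¹, ← Finset.mul_sum]
    _ ≤ Real.log (Fintype.card C) +
          (Fintype.card C : ℝ)⁻¹ * (Fintype.card C * Real.exp A) := by gcongr
    _ = Real.log (Fintype.card C) + Real.exp A := by rw [inv_mul_cancel_left₀ hcard]

theorem mul_abs_lazyPairing_le (h0 : 0 ≤ α) (h1 : α ≤ 1) (hv : ∀ i, IsMarkov (v i)) {h A : ℝ}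
    (hh : 0 < h) (hcode : ∀ x x', code x = code x' → ∀ i, b i x = b i x')
    (hb : ∀ i x, |b i x| ≤ h) (hA : ∀ x, α * ∑ i, b i x ^ 2 ≤ A * h ^ 2) :
    α * (1 - α) * |lazyPairing α v b| ≤ h * (Real.log (Fintype.card C) + Real.exp A) := by
  have one_sided {r : ℝ} (hr : |r| = h⁻¹) :
      α * (1 - α) * (r * lazyPairing α v b) ≤ Real.log (Fintype.card C) + Real.exp A := by
    have hr2 : r ^ 2 = (h ^ 2)⁻¹ := by rw [← sq_abs, hr, inv_pow]
    rw [← smul_eq_mul r, ← map_smul]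
    refine mul_lazyPairing_le_log_card_add_exp code h0 h1 hv (fun x x' hx i => ?_)
      (fun i x => ?_) fun x => ?_
    · simp [hcode x x' hx i]
    · rw [Pi.smul_apply, BddMeas.smul_apply, abs_mul, hr, inv_mul_le_one₀ hh]
      exact hb i x
    · simp only [Pi.smul_apply, BddMeas.smul_apply, mul_pow, hr2]
      rw [← Finset.mul_sum, mul_left_comm, inv_mul_le_iff₀ (by positivity), mul_comm _ A]
      exact hA x
  rw [← inv_mul_le_iff₀ hh]
  rcases abs_choice (lazyPairing α v b) with habs | habs <;> rw [habs]
  · have := one_sided (abs_of_pos (inv_pos.2 hh))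
    linarith
  · have := one_sided (r := -h⁻¹) (by rw [abs_neg, abs_of_pos (inv_pos.2 hh)])
    linarith

end GibbsBound

section IntervalCodes

/-- A measurable map from `ℝ` to `Fin N × Fin N` whose diagonal fibres are intervals and whose
off-diagonal fibres have at most one point. The points coded off the diagonal play the role of
atoms, which cannot be put into an interval of small mass. -/
structure IntervalCode (N : ℕ) where
  code : ℝ → Fin N × Fin N
  measurable_code : Measurable code
  ordConnected_diag : ∀ e, (code ⁻¹' {(e, e)}).OrdConnected
  exists_eq_diag_of_ne : ∀ ⦃t t'⦄, code t = code t' → t ≠ t' → ∃ e, code t = (e, e)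

/-- The code read off from the floors of `ρ (-∞, t) / δ` and `ρ (-∞, t] / δ`. -/
def floorCode (ρ : Measure ℝ) [IsFiniteMeasure ρ] {δ : ℝ} (hδ : 0 < δ) {N : ℕ}
    (hN : ρ.real Set.univ / δ < N) : IntervalCode N :=
  have hmono {s t : Set ℝ} (h : s ⊆ t) : ⌊ρ.real s / δ⌋₊ ≤ ⌊ρ.real t / δ⌋₊ :=
    Nat.floor_le_floor (div_le_div_of_nonneg_right (measureReal_mono h) hδ.le)
  have hlt (s : Set ℝ) : ⌊ρ.real s / δ⌋₊ < N :=
    (hmono s.subset_univ).trans_lt ((Nat.floor_lt (by positivity)).2 hN)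
  let code (t : ℝ) : Fin N × Fin N :=
    (⟨⌊ρ.real (Set.Iio t) / δ⌋₊, hlt _⟩, ⟨⌊ρ.real (Set.Iic t) / δ⌋₊, hlt _⟩)
  have hmono₁ : Monotone fun t => (code t).1 := fun _ _ h => hmono (Set.Iio_subset_Iio h)
  have hmono₂ : Monotone fun t => (code t).2 := fun _ _ h => hmono (Set.Iic_subset_Iic.2 h)
  have exists_diag {t t' : ℝ} (htt' : t < t') (h : code t = code t') : ∃ e, code t = (e, e) := by
    refine ⟨(code t).1, Prod.ext rfl (le_antisymm ?_ (hmono Set.Iio_subset_Iic_self))⟩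
    have hle : (code t).2 ≤ (code t').1 := hmono fun s hs => lt_of_le_of_lt hs htt'
    rwa [← h] at hle
  { code := code
    measurable_code := hmono₁.measurable.prodMk hmono₂.measurable
    ordConnected_diag := fun e => by
      refine ⟨fun a ha b hb t ht => ?_⟩
      have ha : code a = (e, e) := ha
      have hb : code b = (e, e) := hb
      refine Prod.ext (le_antisymm ?_ ?_) (le_antisymm ?_ ?_)
      · simpa [hb] using hmono₁ ht.2
      · simpa [ha] using hmono₁ ht.1
      · simpa [hb] using hmono₂ ht.2
      · simpa [ha] using hmono₂ ht.1
    exists_eq_diag_of_ne := fun t t' h hne => by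
      rcases lt_or_gt_of_ne hne with htt' | htt'
      · exact exists_diag htt' h
      · rw [h]
        exact exists_diag htt' h.symm }

theorem floorCode_measureReal_diag_le (ρ : Measure ℝ) [IsFiniteMeasure ρ] {δ : ℝ} (hδ : 0 < δ)
    {N : ℕ} (hN : ρ.real Set.univ / δ < N) (e : Fin N) :
    ρ.real ((floorCode ρ hδ hN).code ⁻¹' {(e, e)}) ≤ δ := by
  refine measureReal_le_of_forall_Icc_le ρ
    ((floorCode ρ hδ hN).measurable_code (measurableSet_singleton _)) hδ.le fun a ha b hb hab => ?_
  have ha : ⌊ρ.real (Set.Iio a) / δ⌋₊ = e := congrArg (fun p : Fin N × Fin N => (p.1 : ℕ)) ha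
  have hb : ⌊ρ.real (Set.Iic b) / δ⌋₊ = e := congrArg (fun p : Fin N × Fin N => (p.2 : ℕ)) hb
  have hIcc : Set.Icc a b = Set.Iic b \ Set.Iio a := by
    ext t
    simp
  have hsub : Set.Iio a ⊆ Set.Iic b := fun t ht => (Set.mem_Iio.1 ht).le.trans hab
  rw [hIcc, measureReal_sdiff hsub measurableSet_Iio]
  have hlower := Nat.floor_le (a := ρ.real (Set.Iio a) / δ) (by positivity)
  have hupper := Nat.lt_floor_add_one (ρ.real (Set.Iic b) / δ)
  rw [ha, le_div_iff₀ hδ] at hlower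
  rw [hb, div_lt_iff₀ hδ] at hupper
  linarith

variable {N : ℕ}

namespace IntervalCode

/-- The code of the point `c - t`. -/
def reflect (I : IntervalCode N) (c : ℝ) : IntervalCode N where
  code t := I.code (c - t)
  measurable_code := I.measurable_code.comp (measurable_const.sub measurable_id)
  ordConnected_diag e := ⟨fun _ ha _ hb t ht => (I.ordConnected_diag e).out
    (Set.mem_preimage.1 hb) (Set.mem_preimage.1 ha)
    ⟨sub_le_sub_left ht.2 c, sub_le_sub_left ht.1 c⟩⟩
  exists_eq_diag_of_ne t t' h hne := I.exists_eq_diag_of_ne h (by simpa using hne)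

variable {E : Type*} [AddCommGroup E] [MeasurableSpace E]

/-- The indicator of the set of points `x` such that `y x` has the code `(e, e)`. -/
def cellInd (I : IntervalCode N) (y : AddFunctional E) (e : Fin N) : BddMeas E :=
  slabInd y (I.code ⁻¹' {(e, e)}) (I.ordConnected_diag e)

variable (I : IntervalCode N) (y : AddFunctional E)

theorem cellInd_apply (e : Fin N) (x : E) :
    I.cellInd y e x = if I.code (y x) = (e, e) then 1 else 0 := by
  rw [cellInd, slabInd_apply]
  by_cases h : I.code (y x) = (e, e)
  · rw [if_pos h, Set.indicator_of_mem (show y x ∈ I.code ⁻¹' {(e, e)} from h), Pi.one_apply]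
  · rw [if_neg h, Set.indicator_of_notMem (show y x ∉ I.code ⁻¹' {(e, e)} from h)]

theorem cellInd_nonneg (e : Fin N) (x : E) : 0 ≤ I.cellInd y e x := by
  rw [cellInd_apply]
  split_ifs <;> norm_num

theorem cellInd_sq (e : Fin N) : I.cellInd y e ^ 2 = I.cellInd y e := by
  ext x
  simp [cellInd_apply]

theorem sum_cellInd_le_one (x : E) : (∑ e, I.cellInd y e) x ≤ 1 := by
  have hle (e : Fin N) : I.cellInd y e x ≤ if (I.code (y x)).1 = e then 1 else 0 := by
    rw [cellInd_apply]
    split_ifs with h h' <;> simp_all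
  rw [BddMeas.sum_apply]
  exact (Finset.sum_le_sum fun e _ => hle e).trans (by simp)

end IntervalCode

variable {E : Type*} [AddCommGroup E] [MeasurableSpace E]

theorem exists_intervalCode_smul_le [MeasurableAdd₂ E] {U W : ConvAlg E} (hU : IsMarkov U)
    (hW : IsMarkov W) (y : AddFunctional E) (c : ℝ) {δ : ℝ} (hδ : 0 < δ) (hN : 2 / δ < N) :
    ∃ I : IntervalCode N, ∀ e, (U • I.cellInd y e) 0 ≤ δ ∧
      (W • (I.reflect c).cellInd y e) 0 ≤ δ := by
  obtain ⟨μ, _, rfl⟩ := hU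
  obtain ⟨ν, _, rfl⟩ := hW
  have hcy : Measurable fun x => c - y x := measurable_const.sub y.measurable
  set ρ := μ.map y + ν.map fun x => c - y x
  have hmass {A : Set ℝ} (hA : MeasurableSet A) :
      ρ.real A = μ.real (y ⁻¹' A) + ν.real ((fun x => c - y x) ⁻¹' A) := by
    rw [measureReal_add_apply, map_measureReal_apply y.measurable hA,
      map_measureReal_apply hcy hA]
  have htotal : ρ.real Set.univ / δ < N := by
    rwa [hmass .univ, Set.preimage_univ, Set.preimage_univ, probReal_univ, probReal_univ,
      one_add_one_eq_two]
  refine ⟨floorCode ρ hδ htotal, fun e => ?_⟩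
  have hsum := floorCode_measureReal_diag_le ρ hδ htotal e
  have hcell := (floorCode ρ hδ htotal).measurable_code (measurableSet_singleton (e, e))
  rw [hmass hcell] at hsum
  constructor
  · refine (convOp_smul_ind_zero μ (y.measurable hcell)).le.trans (le_trans ?_ hsum)
    exact le_add_of_nonneg_right measureReal_nonneg
  · refine (convOp_smul_ind_zero ν (hcy hcell)).le.trans (le_trans ?_ hsum)
    exact le_add_of_nonneg_left measureReal_nonneg

variable {κ : Type*} (I : κ → IntervalCode N) (y : κ → AddFunctional E) (c : κ → ℝ)

/-- The vector of the codes of the values `y k x`. -/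
def jointCode (x : E) (k : κ) : Fin N × Fin N := (I k).code (y k x)

theorem measurable_jointCode : Measurable (jointCode I y) :=
  measurable_pi_lambda _ fun k => (I k).measurable_code.comp (y k).measurable

variable [Fintype κ]

/-- A majorant of the difference of the indicators of two translates `P - x`, `P - x'` of the
polyhedron `P = halfspaces y c`, for points `x` and `x'` with the same joint code. -/
def codeGap (x : E) : BddMeas E :=
  ∑ k, ∑ e, (I k).cellInd (y k) e x • ((I k).reflect (c k)).cellInd (y k) e

theorem codeGap_apply (x z : E) : codeGap I y c x z =
    ∑ k, ∑ e, (I k).cellInd (y k) e x * ((I k).reflect (c k)).cellInd (y k) e z := by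
  simp only [codeGap, BddMeas.sum_apply, BddMeas.smul_apply]

theorem codeGap_nonneg (x z : E) : 0 ≤ codeGap I y c x z := by
  rw [codeGap_apply]
  exact Finset.sum_nonneg fun k _ => Finset.sum_nonneg fun e _ =>
    mul_nonneg ((I k).cellInd_nonneg _ _ _) (((I k).reflect _).cellInd_nonneg _ _ _)

variable {I y c}

theorem one_le_codeGap {a b x z : E} {k : κ} (ha : y k (a + z) ≤ c k) (hb : c k < y k (b + z))
    (hab : jointCode I y a k = jointCode I y b k) (hax : jointCode I y a k = jointCode I y x k) :
    1 ≤ codeGap I y c x z := by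
  rw [map_add] at ha hb
  obtain ⟨e, he⟩ := (I k).exists_eq_diag_of_ne hab (by linarith : y k a < y k b).ne
  have hx : (I k).code (y k x) = (e, e) := hax.symm.trans he
  have hz : ((I k).reflect (c k)).code (y k z) = (e, e) :=
    ((I k).ordConnected_diag e).out (show (I k).code (y k a) = (e, e) from he)
      (show (I k).code (y k b) = (e, e) from hab.symm.trans he) ⟨by linarith, by linarith⟩
  have hnonneg (k : κ) (e : Fin N) :
      0 ≤ (I k).cellInd (y k) e x * ((I k).reflect (c k)).cellInd (y k) e z :=
    mul_nonneg ((I k).cellInd_nonneg _ _ _) (((I k).reflect _).cellInd_nonneg _ _ _)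
  calc (1 : ℝ) = (I k).cellInd (y k) e x * ((I k).reflect (c k)).cellInd (y k) e z := by
        rw [IntervalCode.cellInd_apply, IntervalCode.cellInd_apply, if_pos hx,
          if_pos hz, one_mul]
    _ ≤ ∑ e, (I k).cellInd (y k) e x * ((I k).reflect (c k)).cellInd (y k) e z :=
        Finset.single_le_sum (fun e _ => hnonneg k e) (Finset.mem_univ e)
    _ ≤ codeGap I y c x z := by
        rw [codeGap_apply]
        exact Finset.single_le_sum
          (f := fun k => ∑ e, (I k).cellInd (y k) e x * ((I k).reflect (c k)).cellInd (y k) e z)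
          (fun k _ => Finset.sum_nonneg fun e _ => hnonneg k e) (Finset.mem_univ k)

variable [MeasurableAdd₂ E]

theorem abs_halfspacesInd_sub_le_codeGap {x x' : E} (h : jointCode I y x = jointCode I y x')
    (z : E) : |(translate x (halfspacesInd y c) - translate x' (halfspacesInd y c)) z| ≤
      codeGap I y c x z := by
  rw [BddMeas.sub_apply, translate_apply, translate_apply]
  by_cases hsame : ∀ k, y k (x + z) ≤ c k ↔ y k (x' + z) ≤ c k
  · rw [halfspacesInd_congr hsame, sub_self, abs_zero]
    exact codeGap_nonneg I y c x z
  · have hone : 1 ≤ codeGap I y c x z := by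
      push Not at hsame
      obtain ⟨k, ⟨hx, hx'⟩ | ⟨hx, hx'⟩⟩ := hsame
      · exact one_le_codeGap hx hx' (congrFun h k) rfl
      · exact one_le_codeGap hx' hx (congrFun h k).symm (congrFun h k).symm
    exact (abs_sub_le_of_le_of_le (BddMeas.ind_nonneg ..) (BddMeas.ind_le_one ..)
      (BddMeas.ind_nonneg ..) (BddMeas.ind_le_one ..)).trans (by simpa using hone)

theorem IsPositive.abs_smul_halfspacesInd_sub_le {P : ConvAlg E} (hP : IsPositive P) {x x' : E}
    (h : jointCode I y x = jointCode I y x') :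
    |(P • halfspacesInd y c) x - (P • halfspacesInd y c) x'| ≤ (P • codeGap I y c x) 0 := by
  rw [smul_apply_eq_translate P _ x, smul_apply_eq_translate P _ x', ← BddMeas.sub_apply,
    ← smul_sub]
  exact hP.abs_apply_le (abs_halfspacesInd_sub_le_codeGap h) 0

theorem smul_codeGap_apply_zero (P : ConvAlg E) (x : E) : (P • codeGap I y c x) 0 =
    ∑ k, ∑ e, (I k).cellInd (y k) e x * (P • ((I k).reflect (c k)).cellInd (y k) e) 0 := by
  simp only [codeGap, Finset.smul_sum, BddMeas.sum_apply, smul_comm P, BddMeas.smul_apply]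

theorem smul_codeGap_le {P : ConvAlg E} {δ : ℝ} (hδ : 0 ≤ δ)
    (hP : ∀ k e, (P • ((I k).reflect (c k)).cellInd (y k) e) 0 ≤ δ) (x : E) :
    (P • codeGap I y c x) 0 ≤ Fintype.card κ * δ := by
  rw [smul_codeGap_apply_zero, ← nsmul_eq_mul]
  refine Finset.sum_le_card_nsmul _ _ _ fun k _ => ?_
  calc ∑ e, (I k).cellInd (y k) e x * (P • ((I k).reflect (c k)).cellInd (y k) e) 0
      ≤ ∑ e, (I k).cellInd (y k) e x * δ := by
        gcongr with e
        · exact (I k).cellInd_nonneg _ _ _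
        · exact hP k e
    _ ≤ δ := by
        rw [← Finset.sum_mul, ← BddMeas.sum_apply]
        exact mul_le_of_le_one_left hδ ((I k).sum_cellInd_le_one _ x)

theorem IsPositive.smul_sq_halfspacesInd_sub_le {P : ConvAlg E} (hP : IsPositive P) {x x' : E}
    (h : jointCode I y x = jointCode I y x') :
    (P • (translate x (halfspacesInd y c) - translate x' (halfspacesInd y c)) ^ 2) 0 ≤
      (P • codeGap I y c x) 0 := by
  refine hP.mono (fun z => ?_) 0
  refine le_trans ?_ (abs_halfspacesInd_sub_le_codeGap h z)
  rw [BddMeas.pow_apply, ← sq_abs]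
  refine pow_le_of_le_one (abs_nonneg _) ?_ two_ne_zero
  rw [BddMeas.sub_apply, translate_apply, translate_apply, ← sub_zero (1 : ℝ)]
  exact abs_sub_le_of_le_of_le (BddMeas.ind_nonneg ..) (BddMeas.ind_le_one ..)
    (BddMeas.ind_nonneg ..) (BddMeas.ind_le_one ..)

end IntervalCodes

section Representatives

variable {E : Type*} [AddCommGroup E] {C : Type*}

/-- A point with the same code as `x` which depends only on the code of `x`. -/
def codeRep (code : E → C) (x : E) : E := Function.invFun code (code x)

theorem code_codeRep (code : E → C) (x : E) : code (codeRep code x) = code x :=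
  Function.invFun_eq ⟨x, rfl⟩

variable [MeasurableSpace E] [Finite C] [MeasurableSpace C] [MeasurableSingletonClass C]

/-- The composition of `g` with the representatives of the classes of a finite code. -/
def BddMeas.compCodeRep (g : BddMeas E) {code : E → C} (hcode : Measurable code) : BddMeas E :=
  .mk (fun x => g (codeRep code x))
    ((measurable_of_finite fun c => g (Function.invFun code c)).comp hcode)
    (g.exists_abs_le.imp fun _ h _ => h _)

end Representatives

section RareEvents

variable {E : Type*} [AddCommGroup E] [MeasurableSpace E] [MeasurableAdd₂ E]
variable {ι : Type*} [Fintype ι] [DecidableEq ι] {α : ℝ} {v : ι → ConvAlg E}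

theorem lazy_mul_lazyProdErase (α : ℝ) (v : ι → ConvAlg E) (i : ι) :
    lazy α (v i) * lazyProdErase α v i = ∏ j, lazy α (v j) :=
  Finset.mul_prod_erase _ (fun j => lazy α (v j)) (Finset.mem_univ i)

theorem isMarkov_lazyProdErase (hv : ∀ i, IsMarkov (v i)) (h0 : 0 ≤ α) (h1 : α ≤ 1) (i : ι) :
    IsMarkov (lazyProdErase α v i) :=
  IsMarkov.prod fun j _ => (hv j).lazy h0 h1

theorem lazyProdErase_smul_apply_le (hv : ∀ i, IsMarkov (v i)) (h0 : 0 ≤ α) (h1 : α ≤ 1 / 2)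
    {f : BddMeas E} (hf : ∀ x, 0 ≤ f x) (i : ι) (x : E) :
    (lazyProdErase α v i • f) x ≤ 2 * ((∏ j, lazy α (v j)) • f) x := by
  have herase := isMarkov_lazyProdErase hv h0 (h1.trans (by norm_num)) i
  have hmoved := (((hv i).mul herase).isPositive).apply_nonneg hf x
  have hstayed := herase.isPositive.apply_nonneg hf x
  rw [mul_smul] at hmoved
  rw [← lazy_mul_lazyProdErase α v i, mul_smul, lazy_smul_apply]
  nlinarith

theorem sum_bernWeight_smul_prod (α : ℝ) (v : ι → ConvAlg E) :
    ∑ B : Finset ι, bernWeight α B • ∏ j ∈ B, v j = ∏ j, lazy α (v j) := by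
  have hlazy (j : ι) : lazy α (v j) = α • v j + (1 - α) • 1 := by
    rw [lazy, smul_sub, sub_smul, one_smul]
    abel
  simp only [hlazy]
  simpa only [Fintype.prod_ite_mem] using sum_bernWeight_smul_prod_ite α v fun _ => 1

theorem sum_bernWeight_mul_pow_card_inter_le {M : ℝ} (h0 : 0 ≤ α) (hM : 0 ≤ M) (s : Finset ι) :
    ∑ B : Finset ι, bernWeight α B * (1 + M) ^ (s ∩ B).card ≤ Real.exp (s.card * (α * M)) := by
  have hfactor (B : Finset ι) : (1 + M) ^ (s ∩ B).card =
      ∏ j, if j ∈ B then (if j ∈ s then 1 + M else 1) else 1 := by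
    rw [Fintype.prod_ite_mem, Finset.prod_ite_mem, Finset.prod_const, Finset.inter_comm]
  have hmean (j : ι) : α • (if j ∈ s then 1 + M else 1) + (1 - α) • (1 : ℝ) =
      if j ∈ s then 1 + α * M else 1 := by
    simp only [smul_eq_mul]
    split_ifs <;> ring
  calc ∑ B : Finset ι, bernWeight α B * (1 + M) ^ (s ∩ B).card
      = ∏ j, (α • (if j ∈ s then 1 + M else 1) + (1 - α) • (1 : ℝ)) := by
        simp only [hfactor]
        exact sum_bernWeight_smul_prod_ite α _ _
    _ = (1 + α * M) ^ s.card := by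
        simp only [hmean]
        rw [Fintype.prod_ite_mem, Finset.prod_const]
    _ ≤ Real.exp (α * M) ^ s.card := by
        gcongr
        linarith [Real.add_one_le_exp (α * M)]
    _ = Real.exp (s.card * (α * M)) := (Real.exp_nat_mul _ _).symm

theorem natCast_le_two_add_pow_div {M : ℝ} (hM : 1 ≤ M) (n : ℕ) :
    (n : ℝ) ≤ 2 + 8 * (1 + M) ^ n / (1 + M) ^ 3 := by
  rcases Nat.lt_or_ge n 3 with hn | hn
  · have hn' : (n : ℝ) ≤ 2 := mod_cast Nat.lt_succ_iff.1 hn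
    exact hn'.trans (le_add_of_nonneg_right (by positivity))
  · obtain ⟨k, rfl⟩ := Nat.exists_eq_add_of_le hn
    have hcast : ((3 + k : ℕ) : ℝ) ≤ 2 ^ (3 + k) := mod_cast Nat.lt_two_pow_self.le
    calc ((3 + k : ℕ) : ℝ) ≤ 8 * 2 ^ k := hcast.trans_eq (by ring)
      _ ≤ 8 * (1 + M) ^ k := by
          gcongr
          linarith
      _ = 8 * (1 + M) ^ (3 + k) / (1 + M) ^ 3 := by
          rw [pow_add]
          field_simp
      _ ≤ 2 + 8 * (1 + M) ^ (3 + k) / (1 + M) ^ 3 := by linarith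

/-- The value at `0` of `v i • f`, averaged over the steps `j ≠ i`: the expectation of `f` at the
end of the lazy walk, given that its step `i` is made. -/
def stepMean (α : ℝ) (v : ι → ConvAlg E) (f : BddMeas E) (i : ι) : ℝ :=
  ((v i * lazyProdErase α v i) • f) 0

theorem mul_stepMean (α : ℝ) (v : ι → ConvAlg E) (f : BddMeas E) (i : ι) :
    α * stepMean α v f i =
      ∑ B : Finset ι, (bernWeight α B * if i ∈ B then 1 else 0) * ((∏ j ∈ B, v j) • f) 0 := by
  have hweight := sum_bernWeight_mul_ite_smul_prod α 1 0 v i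
  rw [mul_one, mul_zero, zero_smul, add_zero, smul_mul_assoc] at hweight
  rw [stepMean, ← BddMeas.smul_apply, ← smul_assoc, ← hweight, Finset.sum_smul,
    BddMeas.sum_apply]
  simp only [smul_assoc, BddMeas.smul_apply]

theorem stepMean_nonneg (hv : ∀ i, IsMarkov (v i)) (h0 : 0 ≤ α) (h1 : α ≤ 1)
    {f : BddMeas E} (hf : ∀ x, 0 ≤ f x) (i : ι) : 0 ≤ stepMean α v f i :=
  ((hv i).mul (isMarkov_lazyProdErase hv h0 h1 i)).isPositive.apply_nonneg hf 0

-- The sum is the expectation of `N f`, where `N` is the number of steps from `s` that are made,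
-- and `N` exceeds `2` by an amount that is small in exponential mean.
theorem sum_mul_stepMean_le (hv : ∀ i, IsMarkov (v i)) (h0 : 0 ≤ α) (h1 : α ≤ 1)
    {f : BddMeas E} (hf0 : ∀ x, 0 ≤ f x) (hf1 : ∀ x, f x ≤ 1) {s : Finset ι} {M : ℝ}
    (hM : 1 ≤ M) (hs : s.card * (α * M) ≤ 1) :
    ∑ i ∈ s, α * stepMean α v f i ≤
      2 * ((∏ j, lazy α (v j)) • f) 0 + 8 * Real.exp 1 / (1 + M) ^ 3 := by
  have hMarkov (B : Finset ι) : IsMarkov (∏ j ∈ B, v j) := IsMarkov.prod fun j _ => hv j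
  calc ∑ i ∈ s, α * stepMean α v f i
      = ∑ B : Finset ι, bernWeight α B * ((s ∩ B).card * ((∏ j ∈ B, v j) • f) 0) := by
        simp only [mul_stepMean]
        rw [Finset.sum_comm]
        refine Finset.sum_congr rfl fun B _ => ?_
        rw [← Finset.filter_mem_eq_inter, ← Finset.sum_boole, Finset.sum_mul, Finset.mul_sum]
        exact Finset.sum_congr rfl fun i _ => by ring
    _ ≤ ∑ B : Finset ι, bernWeight α B * (2 * ((∏ j ∈ B, v j) • f) 0 +
          8 * (1 + M) ^ (s ∩ B).card / (1 + M) ^ 3) := by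
        gcongr with B
        · exact bernWeight_nonneg h0 h1 B
        · have hvalue0 := (hMarkov B).isPositive.apply_nonneg hf0 0
          have hvalue1 := (hMarkov B).apply_le_of_le hf1 0
          have hcard := natCast_le_two_add_pow_div hM (s ∩ B).card
          have htail : 0 ≤ 8 * (1 + M) ^ (s ∩ B).card / (1 + M) ^ 3 := by positivity
          nlinarith
    _ = 2 * ((∏ j, lazy α (v j)) • f) 0 +
          8 * (∑ B : Finset ι, bernWeight α B * (1 + M) ^ (s ∩ B).card) / (1 + M) ^ 3 := by
        rw [← sum_bernWeight_smul_prod, Finset.sum_smul, BddMeas.sum_apply, Finset.mul_sum,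
          Finset.mul_sum, Finset.sum_div, ← Finset.sum_add_distrib]
        refine Finset.sum_congr rfl fun B _ => ?_
        rw [smul_assoc, BddMeas.smul_apply]
        ring
    _ ≤ 2 * ((∏ j, lazy α (v j)) • f) 0 + 8 * Real.exp 1 / (1 + M) ^ 3 := by
        gcongr
        exact (sum_bernWeight_mul_pow_card_inter_le h0 (by linarith) s).trans
          (Real.exp_le_exp.2 hs)

theorem card_mul_le_of_le_stepMean (hv : ∀ i, IsMarkov (v i)) (h0 : 0 ≤ α) (h1 : α ≤ 1 / 2)
    {f : BddMeas E} (hf : f ^ 2 = f) {d : ℝ} (hd0 : 0 ≤ d) (hd : d ≤ 1 / 4)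
    (hrare : ((∏ j, lazy α (v j)) • f) 0 ≤ d ^ 4) {s : Finset ι}
    (hs : ∀ i ∈ s, d ≤ stepMean α v f i) : s.card * (α * d ^ 2) ≤ 8 * d ^ 4 := by
  have hf0 (x : E) : 0 ≤ f x := by
    rw [← hf]
    exact sq_nonneg _
  have hjump (i : ι) (hi : i ∈ s) :
      (d / 2) ^ 2 ≤ ((v i - 1) • lazyProdErase α v i • f) 0 ^ 2 := by
    have hstay := (lazyProdErase_smul_apply_le hv h0 h1 hf0 i 0).trans
      (mul_le_mul_of_nonneg_left hrare two_pos.le)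
    have hd4 : d ^ 4 ≤ d / 4 := by nlinarith [pow_le_pow_left₀ hd0 hd 3]
    have hmove := hs i hi
    rw [stepMean, mul_smul] at hmove
    rw [sub_smul, one_smul, BddMeas.sub_apply]
    gcongr
    linarith
  have hBessel := (sum_sq_sub_one_le_variance_prod_lazy Finset.univ hv h0 (by linarith) f 0).trans
    (variance_apply_le _ f 0)
  rw [hf] at hBessel
  have hcount : s.card * (d / 2) ^ 2 ≤
      ∑ i, ((v i - 1) • lazyProdErase α v i • f) 0 ^ 2 := by
    rw [← nsmul_eq_mul]
    exact (Finset.card_nsmul_le_sum _ _ _ hjump).trans (Finset.sum_le_sum_of_subset_of_nonneg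
      s.subset_univ fun i _ _ => sq_nonneg _)
  have hweighted : α * (1 / 2) * (s.card * (d / 2) ^ 2) ≤ d ^ 4 := by
    refine le_trans ?_ (hBessel.trans hrare)
    refine mul_le_mul ?_ hcount (by positivity) (mul_nonneg h0 (by linarith))
    gcongr
    linarith
  linarith

theorem sum_mul_stepMean_le_of_le_stepMean (hv : ∀ i, IsMarkov (v i)) (h0 : 0 ≤ α)
    (h1 : α ≤ 1 / 2) {f : BddMeas E} (hf : f ^ 2 = f) {d : ℝ} (hd0 : 0 < d) (hd : d ≤ 1 / 4)
    (hrare : ((∏ j, lazy α (v j)) • f) 0 ≤ d ^ 4) {s : Finset ι}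
    (hs : ∀ i ∈ s, d ≤ stepMean α v f i) :
    ∑ i ∈ s, α * stepMean α v f i ≤ 2 * ((∏ j, lazy α (v j)) • f) 0 + 12288 * d ^ 6 := by
  have hf_apply (x : E) : f x ^ 2 = f x := by rw [← BddMeas.pow_apply, hf]
  have hf0 (x : E) : 0 ≤ f x := hf_apply x ▸ sq_nonneg (f x)
  have hf1 (x : E) : f x ≤ 1 := by nlinarith [hf_apply x]
  have hM : 1 ≤ 1 / (8 * d ^ 2) := by
    rw [le_div_iff₀ (by positivity)]
    nlinarith
  have hcard : s.card * (α * (1 / (8 * d ^ 2))) ≤ 1 := by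
    have := card_mul_le_of_le_stepMean hv h0 h1 hf hd0.le hd hrare hs
    calc s.card * (α * (1 / (8 * d ^ 2))) = s.card * (α * d ^ 2) / (8 * d ^ 4) := by
          field_simp
      _ ≤ 1 := (div_le_one (by positivity)).2 this
  refine (sum_mul_stepMean_le hv h0 (by linarith) hf0 hf1 hM hcard).trans ?_
  gcongr
  calc 8 * Real.exp 1 / (1 + 1 / (8 * d ^ 2)) ^ 3 ≤ 8 * 3 / (1 / (8 * d ^ 2)) ^ 3 := by
        gcongr
        · linarith [Real.exp_one_lt_d9]
        · linarith
    _ = 12288 * d ^ 6 := by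
        field_simp
        norm_num

theorem sum_mul_add_le_of_sum_le_one {ε : Type*} [Fintype ε] {p q w w' : ε → ℝ} {B d δ : ℝ}
    (hq0 : ∀ e, 0 ≤ q e) (hw0 : ∀ e, 0 ≤ w e) (hw'0 : ∀ e, 0 ≤ w' e) (hδ0 : 0 ≤ δ)
    (hδ : 4 * δ ≤ d) (hp : ∀ e, p e ≤ δ) (hw : ∀ e, w e ≤ 2 * δ) (hw' : ∀ e, w' e ≤ B)
    (hq1 : ∑ e, q e ≤ 1) (hw1 : ∑ e, w e ≤ 1) (hw'1 : ∑ e, w' e ≤ 1) :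
    ∑ e, (q e + p e) * (w e + w' e) ≤ 2 * d + B * ∑ e, if d ≤ q e then q e else 0 := by
  have hterm (e : ε) : (q e + p e) * (w e + w' e) ≤
      δ * (w e + w' e) + 2 * δ * q e + d * w' e + B * if d ≤ q e then q e else 0 := by
    have hpw : p e * (w e + w' e) ≤ δ * (w e + w' e) :=
      mul_le_mul_of_nonneg_right (hp e) (add_nonneg (hw0 e) (hw'0 e))
    have hqw : q e * w e ≤ q e * (2 * δ) := mul_le_mul_of_nonneg_left (hw e) (hq0 e)
    split_ifs with h
    · have hqw' : q e * w' e ≤ q e * B := mul_le_mul_of_nonneg_left (hw' e) (hq0 e)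
      nlinarith [mul_nonneg (show 0 ≤ d by linarith) (hw'0 e)]
    · have hqw' : q e * w' e ≤ d * w' e := mul_le_mul_of_nonneg_right (not_le.1 h).le (hw'0 e)
      linarith
  refine (Finset.sum_le_sum fun e _ => hterm e).trans ?_
  simp only [Finset.sum_add_distrib, ← Finset.mul_sum]
  have := mul_le_mul_of_nonneg_left hw'1 (show 0 ≤ d by linarith)
  nlinarith

end RareEvents

section Chaining

/-- The data of the chaining argument: random walks with steps `V i` and a polyhedron with normals
`y k`. The parameter `τ ^ 4` bounds the ratio of `α` to `(l + 1) * η`, which measures how much the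
smoothing walk moves. -/
structure ChainingData (E : Type*) [AddCommGroup E] [MeasurableSpace E]
    (ι : Type*) [Fintype ι] (κ : Type*) where
  V : ι → Measure E
  isProbabilityMeasure (i : ι) : IsProbabilityMeasure (V i)
  η : ℝ
  η_pos : 0 < η
  card_mul_η_le : Fintype.card ι * η ≤ 1 / 2
  l : ℕ
  α : ℝ
  α_nonneg : 0 ≤ α
  α_le : α ≤ 1 / 2
  τ : ℝ
  one_le_τ : 1 ≤ τ
  α_le_mul_τ_pow : α ≤ (l + 1) * η * τ ^ 4
  y : κ → AddFunctional E
  c : κ → ℝ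

namespace ChainingData

attribute [instance] isProbabilityMeasure

variable {E : Type*} [AddCommGroup E] [MeasurableSpace E] {ι : Type*} [Fintype ι] {κ : Type*}
  (S : ChainingData E ι κ)

theorem τ_pos : 0 < S.τ := zero_lt_one.trans_le S.one_le_τ

theorem α_le_one : S.α ≤ 1 := S.α_le.trans (by norm_num)

theorem α_mul_le {Q B : ℝ} (hQ : 0 ≤ Q) (h : (S.l + 1) * S.η / 2 * Q ≤ B) :
    S.α * Q ≤ 2 * S.τ ^ 4 * B := by
  have hτ := S.τ_pos
  calc S.α * Q ≤ (S.l + 1) * S.η * S.τ ^ 4 * Q :=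
        mul_le_mul_of_nonneg_right S.α_le_mul_τ_pow hQ
    _ = 2 * S.τ ^ 4 * ((S.l + 1) * S.η / 2 * Q) := by ring
    _ ≤ 2 * S.τ ^ 4 * B := by gcongr

variable [MeasurableAdd₂ E]

/-- The convolution operator of the step distribution `V i`. -/
def step (i : ι) : ConvAlg E := convOp (S.V i)

/-- The smoothing walk: `l` steps, each of them of type `i` with probability `η`. -/
def mix : ConvAlg E := lazyMix S.η S.step ^ S.l

/-- The smoothing walk with one more step, as it appears in the variance bounds. -/
def mixSucc : ConvAlg E := lazyMix S.η S.step ^ (S.l + 1)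

/-- The lazy walk, which makes each step `i` once with probability `α`. -/
def walk : ConvAlg E := ∏ i, lazy S.α (S.step i)

theorem isMarkov_step (i : ι) : IsMarkov (S.step i) := isMarkov_convOp _

theorem isMarkov_lazyMix : IsMarkov (lazyMix S.η S.step) :=
  Accompanying.isMarkov_lazyMix S.isMarkov_step S.η_pos.le
    (S.card_mul_η_le.trans (by norm_num))

theorem isMarkov_mix : IsMarkov S.mix := S.isMarkov_lazyMix.pow _

theorem isMarkov_mixSucc : IsMarkov S.mixSucc := S.isMarkov_lazyMix.pow _

theorem isMarkov_walk : IsMarkov S.walk :=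
  IsMarkov.prod fun i _ => (S.isMarkov_step i).lazy S.α_nonneg S.α_le_one

theorem mix_smul_apply_le {f : BddMeas E} (hf : ∀ x, 0 ≤ f x) (x : E) :
    (S.mix • f) x ≤ 2 * (S.mixSucc • f) x := by
  have hstay := S.isMarkov_mix.isPositive.apply_nonneg hf
  have hmove : 0 ≤ S.η * ((∑ i, S.step i) • S.mix • f) x :=
    mul_nonneg S.η_pos.le
      ((IsPositive.sum fun i _ => (S.isMarkov_step i).isPositive).apply_nonneg hstay x)
  rw [mixSucc, pow_succ', mul_smul, ← mix, lazyMix_smul_apply]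
  nlinarith [hstay x, S.card_mul_η_le]

/-- The step `i` moves the smoothed halfspaces with normals `y k` by more than `2⁻ᵘ` only with
probability at most `2⁻ᵘ`. -/
def IsSmallStep (i : ι) (u : ℕ) : Prop :=
  ∀ k, (S.V i).real (largeShift S.mix (S.y k) (1 / 2 ^ u)) ≤ 1 / 2 ^ u

open Classical in
/-- The largest `u ≤ U` such that `i` is a small step at level `u`. -/
def level (U : ℕ) (i : ι) : ℕ := Nat.findGreatest (S.IsSmallStep i) U

theorem isSmallStep_level (U : ℕ) (i : ι) : S.IsSmallStep i (S.level U i) := by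
  classical
  refine Nat.findGreatest_spec (P := S.IsSmallStep i) (Nat.zero_le U) fun k => ?_
  simp

theorem level_le (U : ℕ) (i : ι) : S.level U i ≤ U := by
  classical
  exact Nat.findGreatest_le _

theorem not_isSmallStep_of_level_eq {U u : ℕ} {i : ι} (h : S.level U i = u) (hu : u < U) :
    ¬ S.IsSmallStep i (u + 1) := by
  classical
  exact Nat.findGreatest_is_greatest (P := S.IsSmallStep i)
    (by rw [← h]; exact Nat.lt_succ_self _) hu

variable [Fintype κ]

/-- The change of the smoothed indicator of the polyhedron under the step `i`. -/
def increment (i : ι) : BddMeas E := (S.step i - 1) • S.mix • halfspacesInd S.y S.c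

theorem abs_increment_le_one (i : ι) (x : E) : |S.increment i x| ≤ 1 := by
  have hmix0 := S.isMarkov_mix.isPositive.apply_nonneg
    fun x => BddMeas.ind_nonneg (hs := measurableSet_halfspaces S.y S.c) (x := x)
  have hmix1 := S.isMarkov_mix.apply_le_of_le
    fun x => BddMeas.ind_le_one (hs := measurableSet_halfspaces S.y S.c) (x := x)
  rw [increment, sub_smul, one_smul, BddMeas.sub_apply, ← sub_zero (1 : ℝ)]
  exact abs_sub_le_of_le_of_le ((S.isMarkov_step i).isPositive.apply_nonneg hmix0 x)
    ((S.isMarkov_step i).apply_le_of_le hmix1 x) (hmix0 x) (hmix1 x)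

theorem α_mul_sum_sq_increment_le (x : E) :
    S.α * ∑ i, S.increment i x ^ 2 ≤ 2 * S.τ ^ 4 := by
  rw [← mul_one (2 * S.τ ^ 4)]
  refine S.α_mul_le (Finset.sum_nonneg fun i _ => sq_nonneg _) ?_
  refine (sum_sq_sub_one_le_lazyMix_pow S.isMarkov_step S.η_pos.le S.card_mul_η_le S.l _ x).trans
    (S.isMarkov_mixSucc.apply_le_of_le (fun z => ?_) x)
  rw [halfspacesInd, BddMeas.ind_sq]
  exact BddMeas.ind_le_one

theorem sum_sq_increment_sub_le {N : ℕ} {I : κ → IntervalCode N} {δ : ℝ} (hδ : 0 ≤ δ)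
    (hI : ∀ k e, (S.mixSucc • ((I k).reflect (S.c k)).cellInd (S.y k) e) 0 ≤ δ) {x x' : E}
    (h : jointCode I S.y x = jointCode I S.y x') :
    (S.l + 1) * S.η / 2 * ∑ i, (S.increment i x - S.increment i x') ^ 2 ≤
      Fintype.card κ * δ := by
  set g := halfspacesInd S.y S.c
  have htranslate (i : ι) : S.increment i x - S.increment i x' =
      ((S.step i - 1) • lazyMix S.η S.step ^ S.l • (translate x g - translate x' g)) 0 := by
    rw [increment, ← mul_smul, smul_apply_eq_translate _ _ x, smul_apply_eq_translate _ _ x',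
      ← BddMeas.sub_apply, ← smul_sub, mul_smul, mix]
  simp only [htranslate]
  exact (sum_sq_sub_one_le_lazyMix_pow S.isMarkov_step S.η_pos.le S.card_mul_η_le S.l _ 0).trans
    ((S.isMarkov_mixSucc.isPositive.smul_sq_halfspacesInd_sub_le h).trans
      (smul_codeGap_le hδ hI x))

theorem abs_increment_le (U : ℕ) (i : ι) (x : E) :
    |S.increment i x| ≤ 2 * Fintype.card κ * (1 / 2 ^ S.level U i) :=
  S.isMarkov_mix.abs_convOp_sub_one_halfspacesInd_le S.y S.c (by positivity)
    (S.isSmallStep_level U i) x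

theorem card_mul_le_of_level_eq {U u : ℕ} (hu : u < U) {s : Finset ι}
    (hs : ∀ i ∈ s, S.level U i = u) :
    s.card * (1 / 2 ^ (u + 1)) ≤
      Fintype.card κ * (4 / ((S.l + 1) * S.η * (1 / 2 ^ (u + 1)) ^ 2)) := by
  set r : ℝ := 1 / 2 ^ (u + 1)
  have hr0 : 0 < r := by positivity
  have hlarge (i : ι) (hi : i ∈ s) : r ≤ ∑ k, (S.V i).real (largeShift S.mix (S.y k) r) := by
    have hnot := S.not_isSmallStep_of_level_eq (hs i hi) hu
    simp only [IsSmallStep, not_forall, not_le] at hnot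
    obtain ⟨k, hk⟩ := hnot
    exact hk.le.trans (Finset.single_le_sum
      (f := fun k => (S.V i).real (largeShift S.mix (S.y k) r))
      (fun k _ => measureReal_nonneg) (Finset.mem_univ k))
  rw [← nsmul_eq_mul]
  calc s.card • r ≤ ∑ i ∈ s, ∑ k, (S.V i).real (largeShift S.mix (S.y k) r) :=
        Finset.card_nsmul_le_sum _ _ _ hlarge
    _ ≤ ∑ i, ∑ k, (S.V i).real (largeShift S.mix (S.y k) r) :=
        Finset.sum_le_sum_of_subset_of_nonneg s.subset_univ
          fun i _ _ => Finset.sum_nonneg fun k _ => measureReal_nonneg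
    _ = ∑ k, ∑ i, (S.V i).real (largeShift S.mix (S.y k) r) := Finset.sum_comm
    _ ≤ ∑ _k : κ, 4 / ((S.l + 1) * S.η * r ^ 2) :=
        Finset.sum_le_sum fun k _ =>
          sum_measureReal_largeShift_le S.V S.l S.η_pos S.card_mul_η_le (S.y k) hr0
    _ = Fintype.card κ * (4 / ((S.l + 1) * S.η * r ^ 2)) := by simp

theorem α_mul_card_level_eq_le {U u : ℕ} (hu : u < U) {s : Finset ι}
    (hs : ∀ i ∈ s, S.level U i = u) :
    S.α * s.card ≤ 32 * Fintype.card κ * S.τ ^ 4 * 8 ^ u := by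
  have hη := S.η_pos
  have hcount := S.card_mul_le_of_level_eq hu hs
  have hcard : (S.l + 1) * S.η / 2 * s.card ≤ 2 * Fintype.card κ * 8 ^ (u + 1) := by
    rw [mul_one_div, div_le_iff₀ (by positivity)] at hcount
    calc (S.l + 1) * S.η / 2 * s.card
        ≤ (S.l + 1) * S.η / 2 * (Fintype.card κ *
            (4 / ((S.l + 1) * S.η * (1 / 2 ^ (u + 1)) ^ 2)) * 2 ^ (u + 1)) := by gcongr
      _ = 2 * Fintype.card κ * (2 ^ (u + 1)) ^ 3 := by
          field_simp
          ring
      _ = 2 * Fintype.card κ * 8 ^ (u + 1) := by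
          rw [← pow_mul, mul_comm _ 3, pow_mul]
          norm_num
  calc S.α * s.card ≤ 2 * S.τ ^ 4 * (2 * Fintype.card κ * 8 ^ (u + 1)) :=
        S.α_mul_le (Nat.cast_nonneg _) hcard
    _ = 32 * Fintype.card κ * S.τ ^ 4 * 8 ^ u := by ring

end ChainingData

end Chaining

section ChainingGoodPart

theorem sum_range_succ_div_two_pow_le (U : ℕ) :
    ∑ u ∈ Finset.range U, (((u : ℝ) + 1) / 2 ^ u) ≤ 4 := by
  have hclosed : ∑ u ∈ Finset.range U, (((u : ℝ) + 1) / 2 ^ u) = 4 - (2 * U + 4) / 2 ^ U := by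
    induction U with
    | zero => norm_num
    | succ U ih =>
      rw [Finset.sum_range_succ, ih, pow_succ, Nat.cast_succ]
      field_simp
      ring
  rw [hclosed]
  exact sub_le_self _ (by positivity)

namespace ChainingData

variable {E : Type*} [AddCommGroup E] [MeasurableSpace E] {ι : Type*} [Fintype ι] {κ : Type*}
  (S : ChainingData E ι κ)

/-- The probability above which a cell counts as frequently visited at level `u`. -/
def scale (u : ℕ) : ℝ := 1 / (4 * (S.τ ^ 16 * 16 ^ u))

/-- The bound for the probabilities of the cells at level `u`. -/
def mesh (u : ℕ) : ℝ := S.scale u ^ 4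

/-- The number of intervals at level `u`. -/
def codeSize (u : ℕ) : ℕ := ⌊2 / S.mesh u⌋₊ + 1

theorem scale_pos (u : ℕ) : 0 < S.scale u := by
  have := S.τ_pos
  unfold scale
  positivity

theorem mesh_pos (u : ℕ) : 0 < S.mesh u := pow_pos (S.scale_pos u) 4

theorem mesh_eq (u : ℕ) : S.mesh u = 1 / (256 * (S.τ ^ 64 * 65536 ^ u)) := by
  have h16 : ((16 : ℝ) ^ u) ^ 4 = 65536 ^ u := by
    rw [← pow_mul, mul_comm, pow_mul]
    norm_num
  rw [mesh, scale, div_pow, one_pow, mul_pow, mul_pow, ← pow_mul, h16]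
  norm_num

theorem mesh_succ_le (u : ℕ) : S.mesh (u + 1) ≤ S.mesh u := by
  have := S.τ_pos
  rw [mesh_eq, mesh_eq]
  gcongr
  · norm_num
  · exact u.le_succ

theorem mesh_le_one (u : ℕ) : S.mesh u ≤ 1 := by
  have hτ : 1 ≤ S.τ ^ 64 := one_le_pow₀ S.one_le_τ
  have hu : (1 : ℝ) ≤ 65536 ^ u := one_le_pow₀ (by norm_num)
  rw [mesh_eq, div_le_one (by positivity)]
  nlinarith

theorem codeSize_le (u : ℕ) : S.codeSize u ≤ 3 / S.mesh u := by
  have hmesh := S.mesh_pos u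
  have hfloor := Nat.floor_le (a := 2 / S.mesh u) (by positivity)
  have hone : 1 ≤ 1 / S.mesh u := (one_le_div hmesh).2 (S.mesh_le_one u)
  calc (S.codeSize u : ℝ) = ⌊2 / S.mesh u⌋₊ + 1 := by rw [codeSize, Nat.cast_succ]
    _ ≤ 2 / S.mesh u + 1 / S.mesh u := add_le_add hfloor hone
    _ = 3 / S.mesh u := by ring

theorem log_codeSize_le (u : ℕ) : Real.log (S.codeSize u) ≤ (832 + 16 * u) * S.τ := by
  have hτ := S.one_le_τ
  have hτ0 := S.τ_pos
  have hsize : (S.codeSize u : ℝ) ≤ 768 * (S.τ ^ 64 * 65536 ^ u) := by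
    refine (S.codeSize_le u).trans_eq ?_
    rw [mesh_eq, div_div_eq_mul_div]
    ring
  have hlog : Real.log (65536 : ℝ) = 16 * Real.log 2 := by
    rw [show (65536 : ℝ) = 2 ^ 16 by norm_num, Real.log_pow]
    norm_num
  have hτlog := Real.log_le_sub_one_of_pos hτ0
  have h768 := Real.log_le_sub_one_of_pos (show (0 : ℝ) < 768 by norm_num)
  have h2 := Real.log_le_sub_one_of_pos (show (0 : ℝ) < 2 by norm_num)
  calc Real.log (S.codeSize u) ≤ Real.log (768 * (S.τ ^ 64 * 65536 ^ u)) :=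
        Real.log_le_log (Nat.cast_pos.2 (Nat.succ_pos _)) hsize
    _ = Real.log 768 + (64 * Real.log S.τ + u * (16 * Real.log 2)) := by
        rw [Real.log_mul (by norm_num) (by positivity), Real.log_mul (by positivity)
          (by positivity), Real.log_pow, Real.log_pow, hlog]
        norm_num
    _ ≤ 768 + (64 * S.τ + u * (16 * 1)) := by gcongr <;> linarith
    _ ≤ (832 + 16 * u) * S.τ := by nlinarith [(Nat.cast_nonneg u : (0 : ℝ) ≤ u)]

theorem log_card_code_le [Fintype κ] [DecidableEq κ] (u : ℕ) :
    Real.log (Fintype.card (κ → Fin (S.codeSize u) × Fin (S.codeSize u))) ≤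
      2 * Fintype.card κ * ((832 + 16 * u) * S.τ) := by
  rw [Fintype.card_fun, Fintype.card_prod, Fintype.card_fin, Nat.cast_pow, Nat.cast_mul,
    Real.log_pow, ← pow_two, Real.log_pow, ← mul_assoc, Nat.cast_two,
    mul_comm (Fintype.card κ : ℝ)]
  gcongr
  exact S.log_codeSize_le u

variable [MeasurableAdd₂ E]

theorem exists_code (u : ℕ) : ∃ I : κ → IntervalCode (S.codeSize u), ∀ k e,
    (S.walk • (I k).cellInd (S.y k) e) 0 ≤ S.mesh u ∧
      (S.mixSucc • ((I k).reflect (S.c k)).cellInd (S.y k) e) 0 ≤ S.mesh u := by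
  have hsize : 2 / S.mesh u < S.codeSize u := by
    rw [codeSize, Nat.cast_succ]
    exact Nat.lt_floor_add_one _
  choose I hI using fun k => exists_intervalCode_smul_le S.isMarkov_walk S.isMarkov_mixSucc
    (S.y k) (S.c k) (S.mesh_pos u) hsize
  exact ⟨I, hI⟩

/-- Codes whose cells have probability at most `mesh u`. -/
def code (u : ℕ) : κ → IntervalCode (S.codeSize u) := (S.exists_code u).choose

theorem walk_smul_cellInd_le (u : ℕ) (k : κ) (e : Fin (S.codeSize u)) :
    (S.walk • (S.code u k).cellInd (S.y k) e) 0 ≤ S.mesh u :=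
  ((S.exists_code u).choose_spec k e).1

theorem mixSucc_smul_cellInd_le (u : ℕ) (k : κ) (e : Fin (S.codeSize u)) :
    (S.mixSucc • ((S.code u k).reflect (S.c k)).cellInd (S.y k) e) 0 ≤ S.mesh u :=
  ((S.exists_code u).choose_spec k e).2

variable [Fintype κ]

/-- The approximation of `increment i` by a function of the joint code at level `u`. -/
def approx (u : ℕ) (i : ι) : BddMeas E :=
  (S.increment i).compCodeRep (measurable_jointCode (S.code u) S.y)

theorem approx_apply (u : ℕ) (i : ι) (x : E) :
    S.approx u i x = S.increment i (codeRep (jointCode (S.code u) S.y) x) := rfl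

theorem approx_congr {u : ℕ} {x x' : E}
    (h : jointCode (S.code u) S.y x = jointCode (S.code u) S.y x') (i : ι) :
    S.approx u i x = S.approx u i x' := by
  rw [approx_apply, approx_apply, codeRep, codeRep, h]

theorem sum_sq_approx_sub_le (u : ℕ) (x : E) :
    (S.l + 1) * S.η / 2 * ∑ i, (S.approx u i x - S.increment i x) ^ 2 ≤
      Fintype.card κ * S.mesh u :=
  S.sum_sq_increment_sub_le (S.mesh_pos u).le (S.mixSucc_smul_cellInd_le u) (code_codeRep _ x)

/-- The increments of the approximations along the chain from level `0` to level `level U i`. -/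
def levelDiff (U u : ℕ) (i : ι) : BddMeas E :=
  if u + 1 ≤ S.level U i then S.approx (u + 1) i - S.approx u i else 0

theorem approx_level_eq (U : ℕ) :
    (fun i => S.approx (S.level U i) i) =
      S.approx 0 + ∑ u ∈ Finset.range U, S.levelDiff U u := by
  funext i
  have hrange : {u ∈ Finset.range U | u + 1 ≤ S.level U i} = Finset.range (S.level U i) := by
    ext u
    have := S.level_le U i
    simp only [Finset.mem_filter, Finset.mem_range]
    omega
  simp only [Pi.add_apply, Finset.sum_apply, levelDiff, ← Finset.sum_filter, hrange]
  rw [Finset.sum_range_sub fun u => S.approx u i, add_sub_cancel]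

theorem levelDiff_congr {U u : ℕ} {x x' : E}
    (h : jointCode (S.code u) S.y x = jointCode (S.code u) S.y x')
    (hsucc : jointCode (S.code (u + 1)) S.y x = jointCode (S.code (u + 1)) S.y x') (i : ι) :
    S.levelDiff U u i x = S.levelDiff U u i x' := by
  unfold levelDiff
  split_ifs
  · rw [BddMeas.sub_apply, BddMeas.sub_apply, S.approx_congr h, S.approx_congr hsucc]
  · rfl

theorem abs_levelDiff_le (U u : ℕ) (i : ι) (x : E) :
    |S.levelDiff U u i x| ≤ 2 * Fintype.card κ / 2 ^ u := by
  unfold levelDiff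
  split_ifs with hi
  · have happrox (w : ℕ) : |S.approx w i x| ≤ Fintype.card κ / 2 ^ u := by
      calc |S.approx w i x| ≤ 2 * Fintype.card κ * (1 / 2 ^ S.level U i) :=
            S.abs_increment_le U i _
        _ ≤ 2 * Fintype.card κ * (1 / 2 ^ (u + 1)) := by
            gcongr
            norm_num
        _ = Fintype.card κ / 2 ^ u := by
            rw [pow_succ]
            field_simp
    calc |(S.approx (u + 1) i - S.approx u i) x| ≤ |S.approx (u + 1) i x| + |S.approx u i x| :=
          abs_sub _ _
      _ ≤ Fintype.card κ / 2 ^ u + Fintype.card κ / 2 ^ u :=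
          add_le_add (happrox (u + 1)) (happrox u)
      _ = 2 * Fintype.card κ / 2 ^ u := by ring
  · rw [BddMeas.zero_apply, abs_zero]
    positivity

theorem sq_levelDiff_le (U u : ℕ) (i : ι) (x : E) :
    S.levelDiff U u i x ^ 2 ≤ 2 * (S.approx (u + 1) i x - S.increment i x) ^ 2 +
      2 * (S.approx u i x - S.increment i x) ^ 2 := by
  unfold levelDiff
  split_ifs
  · rw [BddMeas.sub_apply]
    nlinarith [sq_nonneg (S.approx (u + 1) i x + S.approx u i x - 2 * S.increment i x)]
  · rw [BddMeas.zero_apply, zero_pow two_ne_zero]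
    positivity

theorem α_mul_sum_sq_levelDiff_le [Nonempty κ] (U u : ℕ) (x : E) :
    S.α * ∑ i, S.levelDiff U u i x ^ 2 ≤ 1 * (2 * Fintype.card κ / 2 ^ u) ^ 2 := by
  have hη := S.η_pos
  have hκ : (1 : ℝ) ≤ Fintype.card κ := Nat.one_le_cast.2 Fintype.card_pos
  have hsum : (S.l + 1) * S.η / 2 * ∑ i, S.levelDiff U u i x ^ 2 ≤
      4 * Fintype.card κ * S.mesh u := by
    have hdiff : ∑ i, S.levelDiff U u i x ^ 2 ≤
        2 * ∑ i, (S.approx (u + 1) i x - S.increment i x) ^ 2 +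
          2 * ∑ i, (S.approx u i x - S.increment i x) ^ 2 := by
      rw [Finset.mul_sum, Finset.mul_sum, ← Finset.sum_add_distrib]
      exact Finset.sum_le_sum fun i _ => S.sq_levelDiff_le U u i x
    have hmesh := mul_le_mul_of_nonneg_left (S.mesh_succ_le u) (zero_le_one.trans hκ)
    have := mul_le_mul_of_nonneg_left hdiff (show 0 ≤ (S.l + 1) * S.η / 2 by positivity)
    linarith [S.sum_sq_approx_sub_le u x, S.sum_sq_approx_sub_le (u + 1) x]
  have hτ : 1 ≤ S.τ ^ 60 := one_le_pow₀ S.one_le_τ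
  have hτ0 := S.τ_pos
  calc S.α * ∑ i, S.levelDiff U u i x ^ 2
      ≤ 2 * S.τ ^ 4 * (4 * Fintype.card κ * S.mesh u) :=
        S.α_mul_le (Finset.sum_nonneg fun i _ => sq_nonneg _) hsum
    _ = Fintype.card κ / 32 * (1 / (S.τ ^ 60 * 65536 ^ u)) := by
        rw [mesh_eq]
        field_simp
        norm_num
    _ ≤ 4 * (Fintype.card κ : ℝ) ^ 2 * (1 / (1 * 4 ^ u)) := by
        gcongr
        · nlinarith
        · norm_num
    _ = 1 * (2 * Fintype.card κ / 2 ^ u) ^ 2 := by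
        rw [show (4 : ℝ) = 2 ^ 2 by norm_num, ← pow_mul, mul_comm 2 u, pow_mul]
        ring

variable [DecidableEq ι] [Nonempty κ]

theorem mul_abs_lazyPairing_approx_zero_le :
    S.α * (1 - S.α) * |lazyPairing S.α S.step (S.approx 0)| ≤
      1672 * (Fintype.card κ : ℝ) ^ 2 * S.τ ^ 3 := by
  classical
  have hτ := S.one_le_τ
  have hκ : (1 : ℝ) ≤ Fintype.card κ := Nat.one_le_cast.2 Fintype.card_pos
  have hgibbs := mul_abs_lazyPairing_le (jointCode (S.code 0) S.y) S.α_nonneg S.α_le_one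
    S.isMarkov_step (h := S.τ ^ 2) (A := 2) (pow_pos S.τ_pos 2)
    (fun _ _ => S.approx_congr)
    (fun i x => (S.abs_increment_le_one i _).trans (one_le_pow₀ hτ))
    (fun x => (S.α_mul_sum_sq_increment_le _).trans_eq (by ring))
  have hlog := S.log_card_code_le (κ := κ) 0
  rw [Nat.cast_zero] at hlog
  have hexp : Real.exp 2 ≤ 8 := by
    rw [show (2 : ℝ) = (2 : ℕ) * 1 by norm_num, Real.exp_nat_mul]
    nlinarith [Real.exp_one_lt_d9, Real.exp_pos 1]
  calc S.α * (1 - S.α) * |lazyPairing S.α S.step (S.approx 0)|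
      ≤ S.τ ^ 2 * (2 * Fintype.card κ * ((832 + 16 * 0) * S.τ) + 8) := by
        refine hgibbs.trans ?_
        gcongr
    _ ≤ S.τ ^ 2 * (1672 * (Fintype.card κ : ℝ) ^ 2 * S.τ) := by
        have hκsq : (Fintype.card κ : ℝ) ≤ (Fintype.card κ : ℝ) ^ 2 := by nlinarith
        have : 1 ≤ Fintype.card κ * S.τ := by nlinarith
        gcongr
        nlinarith
    _ = 1672 * (Fintype.card κ : ℝ) ^ 2 * S.τ ^ 3 := by ring

theorem mul_abs_lazyPairing_levelDiff_le (U u : ℕ) :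
    S.α * (1 - S.α) * |lazyPairing S.α S.step (S.levelDiff U u)| ≤
      6726 * (Fintype.card κ : ℝ) ^ 2 * S.τ * ((u + 1) / 2 ^ u) := by
  classical
  have hτ := S.one_le_τ
  have hκ : (1 : ℝ) ≤ Fintype.card κ := Nat.one_le_cast.2 Fintype.card_pos
  have hgibbs := mul_abs_lazyPairing_le
    (fun x => (jointCode (S.code u) S.y x, jointCode (S.code (u + 1)) S.y x))
    S.α_nonneg S.α_le_one S.isMarkov_step (h := 2 * Fintype.card κ / 2 ^ u) (A := 1)
    (by positivity)
    (fun x x' hx => S.levelDiff_congr (congrArg Prod.fst hx) (congrArg Prod.snd hx))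
    (S.abs_levelDiff_le U u) (S.α_mul_sum_sq_levelDiff_le U u)
  have hcard (w : ℕ) :
      (Fintype.card (κ → Fin (S.codeSize w) × Fin (S.codeSize w)) : ℝ) ≠ 0 :=
    haveI : Nonempty (κ → Fin (S.codeSize w) × Fin (S.codeSize w)) :=
      ⟨jointCode (S.code w) S.y 0⟩
    Nat.cast_ne_zero.2 Fintype.card_ne_zero
  rw [Fintype.card_prod, Nat.cast_mul, Real.log_mul (hcard _) (hcard _)] at hgibbs
  have hlog := S.log_card_code_le (κ := κ) u
  have hlogSucc := S.log_card_code_le (κ := κ) (u + 1)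
  rw [Nat.cast_succ] at hlogSucc
  have hexp : Real.exp 1 ≤ 3 := by linarith [Real.exp_one_lt_d9]
  calc S.α * (1 - S.α) * |lazyPairing S.α S.step (S.levelDiff U u)|
      ≤ 2 * Fintype.card κ / 2 ^ u * ((2 * Fintype.card κ * ((832 + 16 * u) * S.τ) +
        2 * Fintype.card κ * ((832 + 16 * (u + 1)) * S.τ)) + 3) := by
        refine hgibbs.trans ?_
        gcongr
    _ ≤ 2 * Fintype.card κ / 2 ^ u * (3363 * Fintype.card κ * S.τ * (u + 1)) := by
        have hu : (0 : ℝ) ≤ u := Nat.cast_nonneg u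
        have hκτ : 1 ≤ Fintype.card κ * S.τ := by nlinarith
        gcongr
        nlinarith [mul_nonneg hu (zero_le_one.trans hκτ)]
    _ = 6726 * (Fintype.card κ : ℝ) ^ 2 * S.τ * ((u + 1) / 2 ^ u) := by ring

theorem mul_abs_lazyPairing_approx_level_le (U : ℕ) :
    S.α * (1 - S.α) * |lazyPairing S.α S.step fun i => S.approx (S.level U i) i| ≤
      28576 * (Fintype.card κ : ℝ) ^ 2 * S.τ ^ 3 := by
  have hτ := S.one_le_τ
  have hα : 0 ≤ S.α * (1 - S.α) := mul_nonneg S.α_nonneg (sub_nonneg.2 S.α_le_one)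
  calc S.α * (1 - S.α) * |lazyPairing S.α S.step fun i => S.approx (S.level U i) i|
      ≤ S.α * (1 - S.α) * (|lazyPairing S.α S.step (S.approx 0)| +
          ∑ u ∈ Finset.range U, |lazyPairing S.α S.step (S.levelDiff U u)|) := by
        rw [approx_level_eq, map_add, map_sum]
        gcongr
        exact (abs_add_le _ _).trans (by gcongr; exact Finset.abs_sum_le_sum_abs _ _)
    _ ≤ 1672 * (Fintype.card κ : ℝ) ^ 2 * S.τ ^ 3 + ∑ u ∈ Finset.range U,
          6726 * (Fintype.card κ : ℝ) ^ 2 * S.τ * (((u : ℝ) + 1) / 2 ^ u) := by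
        rw [mul_add, Finset.mul_sum]
        exact add_le_add S.mul_abs_lazyPairing_approx_zero_le
          (Finset.sum_le_sum fun u _ => S.mul_abs_lazyPairing_levelDiff_le U u)
    _ ≤ 1672 * (Fintype.card κ : ℝ) ^ 2 * S.τ ^ 3 +
          6726 * (Fintype.card κ : ℝ) ^ 2 * S.τ ^ 3 * 4 := by
        rw [← Finset.mul_sum]
        gcongr
        · exact le_self_pow₀ hτ (by norm_num)
        · exact sum_range_succ_div_two_pow_le U
    _ = 28576 * (Fintype.card κ : ℝ) ^ 2 * S.τ ^ 3 := by ring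

end ChainingData

end ChainingGoodPart

section ChainingRemainder

variable {E : Type*} [AddCommGroup E] [MeasurableSpace E]

theorem IsMarkov.sum_smul_cellInd_le_one [MeasurableAdd₂ E] {P : ConvAlg E} (hP : IsMarkov P)
    {N : ℕ} (I : IntervalCode N) (y : AddFunctional E) (x : E) :
    ∑ e, (P • I.cellInd y e) x ≤ 1 := by
  rw [← BddMeas.sum_apply, ← Finset.smul_sum]
  exact hP.apply_le_of_le (I.sum_cellInd_le_one y) x

namespace ChainingData

variable {ι : Type*} [Fintype ι] {κ : Type*} (S : ChainingData E ι κ)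

theorem scale_le (u : ℕ) : S.scale u ≤ 1 / 4 / 16 ^ u := by
  have hτ : 1 ≤ S.τ ^ 16 := one_le_pow₀ S.one_le_τ
  rw [scale, div_div]
  gcongr
  exact le_mul_of_one_le_left (by positivity) hτ

theorem scale_le_one_div_four (u : ℕ) : S.scale u ≤ 1 / 4 :=
  (S.scale_le u).trans (div_le_self (by norm_num) (one_le_pow₀ (by norm_num)))

theorem mesh_le_scale_div (u : ℕ) : S.mesh u ≤ S.scale u / 64 := by
  have hscale := S.scale_pos u
  calc S.mesh u = S.scale u * S.scale u ^ 3 := by rw [mesh, pow_succ']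
    _ ≤ S.scale u * (1 / 4) ^ 3 := by
        gcongr
        exact S.scale_le_one_div_four u
    _ = S.scale u / 64 := by ring

theorem scale_le_one_div_two_pow (u : ℕ) : S.scale u ≤ 1 / 2 ^ u := by
  refine (S.scale_le u).trans ?_
  gcongr <;> norm_num

variable [MeasurableAdd₂ E]

theorem α_mul_scale_mul_card_level_eq_le [Fintype κ] [Nonempty κ] {u : ℕ}
    (hu : u ≤ Fintype.card ι) {s : Finset ι} (hs : ∀ i ∈ s, S.level (Fintype.card ι) i = u) :
    S.α * S.scale u * s.card ≤ 8 * Fintype.card κ * (1 / 2 ^ u) := by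
  have hscale := S.scale_pos u
  have hτ := S.τ_pos
  have h16 : (16 : ℝ) ^ u = 2 ^ u * 8 ^ u := by
    rw [← mul_pow]
    norm_num
  rcases hu.lt_or_eq with hlt | rfl
  · calc S.α * S.scale u * s.card = S.scale u * (S.α * s.card) := by ring
      _ ≤ S.scale u * (32 * Fintype.card κ * S.τ ^ 4 * 8 ^ u) :=
          mul_le_mul_of_nonneg_left (S.α_mul_card_level_eq_le hlt hs) hscale.le
      _ = 8 * Fintype.card κ * (S.τ ^ 4 / (S.τ ^ 16 * 2 ^ u)) := by
          rw [scale, h16]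
          field_simp
          ring
      _ ≤ 8 * Fintype.card κ * (S.τ ^ 16 / (S.τ ^ 16 * 2 ^ u)) := by
          gcongr
          · exact S.one_le_τ
          · norm_num
      _ = 8 * Fintype.card κ * (1 / 2 ^ u) := by field_simp
  · have hκ : (1 : ℝ) ≤ Fintype.card κ := Nat.one_le_cast.2 Fintype.card_pos
    have hcard : (s.card : ℝ) ≤ 8 ^ Fintype.card ι := by
      exact_mod_cast s.card_le_univ.trans (Nat.lt_pow_self (by norm_num)).le
    calc S.α * S.scale (Fintype.card ι) * s.card
        ≤ 1 * (1 / 4 / 16 ^ Fintype.card ι) * 8 ^ Fintype.card ι := by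
          gcongr
          · exact S.α_le_one
          · exact S.scale_le _
      _ = 1 / 4 * (1 / 2 ^ Fintype.card ι) := by
          rw [h16]
          field_simp
      _ ≤ 8 * Fintype.card κ * (1 / 2 ^ Fintype.card ι) := by
          gcongr
          linarith

/-- The indicator of the `e`-th cell of the functional `y k` at level `u`. -/
def cell (u : ℕ) (k : κ) (e : Fin (S.codeSize u)) : BddMeas E := (S.code u k).cellInd (S.y k) e

/-- The indicator of the reflection of the `e`-th cell, which consists of the displacements from
the cell to the boundary `y k = c k`. -/
def mirrorCell (u : ℕ) (k : κ) (e : Fin (S.codeSize u)) : BddMeas E :=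
  ((S.code u k).reflect (S.c k)).cellInd (S.y k) e

theorem mix_smul_mirrorCell_le (u : ℕ) (k : κ) (e : Fin (S.codeSize u)) :
    (S.mix • S.mirrorCell u k e) 0 ≤ 2 * S.mesh u :=
  (S.mix_smul_apply_le (((S.code u k).reflect (S.c k)).cellInd_nonneg _ e) 0).trans
    (mul_le_mul_of_nonneg_left (S.mixSucc_smul_cellInd_le u k e) zero_le_two)

theorem step_smul_mix_smul_mirrorCell_le {u : ℕ} {i : ι} (hi : S.IsSmallStep i u) (k : κ)
    (e : Fin (S.codeSize u)) : (S.step i • S.mix • S.mirrorCell u k e) 0 ≤ 6 * (1 / 2 ^ u) := by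
  have hshift := S.isMarkov_mix.convOp_slabInd_le (s := 1 / 2 ^ u) (by positivity)
    (((S.code u k).reflect (S.c k)).ordConnected_diag e) (hi k)
  have hcell := S.mix_smul_mirrorCell_le u k e
  have hmesh := S.mesh_le_scale_div u
  have hscale := S.scale_le_one_div_two_pow u
  have hmesh0 := S.mesh_pos u
  calc (S.step i • S.mix • S.mirrorCell u k e) 0
      ≤ (S.mix • S.mirrorCell u k e) 0 + 4 * (1 / 2 ^ u) := hshift
    _ ≤ 6 * (1 / 2 ^ u) := by linarith

theorem abs_increment_sub_approx_le [Fintype κ] (u : ℕ) (i : ι) (x : E) :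
    |(S.increment i - S.approx u i) x| ≤ (∑ k, ∑ e, ((S.mix • S.mirrorCell u k e) 0 +
      (S.step i • S.mix • S.mirrorCell u k e) 0) • S.cell u k e) x := by
  have hcode := (code_codeRep (jointCode (S.code u) S.y) x).symm
  have hstay := S.isMarkov_mix.isPositive.abs_smul_halfspacesInd_sub_le (c := S.c) hcode
  have hmove := ((S.isMarkov_step i).mul S.isMarkov_mix).isPositive.abs_smul_halfspacesInd_sub_le
    (c := S.c) hcode
  rw [smul_codeGap_apply_zero] at hstay hmove
  simp only [mul_smul] at hmove
  simp only [BddMeas.sub_apply, approx_apply, increment, sub_smul, one_smul, BddMeas.sum_apply,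
    BddMeas.smul_apply]
  rw [sub_sub_sub_comm]
  refine (abs_sub _ _).trans ((add_le_add hmove hstay).trans_eq ?_)
  simp only [← Finset.sum_add_distrib]
  refine Finset.sum_congr rfl fun k _ => Finset.sum_congr rfl fun e _ => ?_
  rw [cell, mirrorCell]
  ring

variable [DecidableEq ι]

/-- The error made in the `k`-th functional by replacing the increment of the step `i` by its
approximation at level `u`. -/
def cellError (u : ℕ) (i : ι) (k : κ) : ℝ :=
  ∑ e, (stepMean S.α S.step (S.cell u k e) i + (lazyProdErase S.α S.step i • S.cell u k e) 0) *
    ((S.mix • S.mirrorCell u k e) 0 + (S.step i • S.mix • S.mirrorCell u k e) 0)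

theorem lazyProdErase_smul_cell_le (u : ℕ) (i : ι) (k : κ) (e : Fin (S.codeSize u)) :
    (lazyProdErase S.α S.step i • S.cell u k e) 0 ≤ 2 * S.mesh u :=
  (lazyProdErase_smul_apply_le S.isMarkov_step S.α_nonneg S.α_le
    ((S.code u k).cellInd_nonneg _ e) i 0).trans
    (mul_le_mul_of_nonneg_left (S.walk_smul_cellInd_le u k e) zero_le_two)

theorem stepMean_cell_nonneg (u : ℕ) (i : ι) (k : κ) (e : Fin (S.codeSize u)) :
    0 ≤ stepMean S.α S.step (S.cell u k e) i :=
  stepMean_nonneg S.isMarkov_step S.α_nonneg S.α_le_one ((S.code u k).cellInd_nonneg _ e) i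

theorem cellError_le {u : ℕ} {i : ι} (hi : S.IsSmallStep i u) (k : κ) :
    S.cellError u i k ≤ 2 * S.scale u + 6 * (1 / 2 ^ u) *
      ∑ e, if S.scale u ≤ stepMean S.α S.step (S.cell u k e) i
        then stepMean S.α S.step (S.cell u k e) i else 0 := by
  have hmesh := S.mesh_le_scale_div u
  have hmesh0 := S.mesh_pos u
  have herase := isMarkov_lazyProdErase S.isMarkov_step S.α_nonneg S.α_le_one i
  have hmirror := ((S.code u k).reflect (S.c k)).cellInd_nonneg (S.y k)
  have hmoved := (S.isMarkov_step i).mul S.isMarkov_mix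
  refine sum_mul_add_le_of_sum_le_one (δ := 2 * S.mesh u) (S.stepMean_cell_nonneg u i k)
    (fun e => S.isMarkov_mix.isPositive.apply_nonneg (hmirror e) 0) (fun e => ?_)
    (by positivity) (by linarith) (S.lazyProdErase_smul_cell_le u i k) (fun e => ?_)
    (S.step_smul_mix_smul_mirrorCell_le hi k)
    (((S.isMarkov_step i).mul herase).sum_smul_cellInd_le_one _ _ 0)
    (S.isMarkov_mix.sum_smul_cellInd_le_one _ _ 0) ?_
  · rw [← mul_smul]
    exact hmoved.isPositive.apply_nonneg (hmirror e) 0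
  · linarith [S.mix_smul_mirrorCell_le u k e]
  · simp only [← mul_smul]
    exact hmoved.sum_smul_cellInd_le_one _ _ 0

theorem sum_frequent_stepMean_le (u : ℕ) (k : κ) (s : Finset ι) :
    ∑ i ∈ s, ∑ e, S.α * (if S.scale u ≤ stepMean S.α S.step (S.cell u k e) i
      then stepMean S.α S.step (S.cell u k e) i else 0) ≤ 2306 := by
  have hscale := S.scale_pos u
  have hcell (e : Fin (S.codeSize u)) :
      ∑ i ∈ s, S.α * (if S.scale u ≤ stepMean S.α S.step (S.cell u k e) i
        then stepMean S.α S.step (S.cell u k e) i else 0) ≤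
      2 * (S.walk • S.cell u k e) 0 + 12288 * S.scale u ^ 6 := by
    simp only [mul_ite, mul_zero, ← Finset.sum_filter]
    exact sum_mul_stepMean_le_of_le_stepMean S.isMarkov_step S.α_nonneg S.α_le
      ((S.code u k).cellInd_sq _ e) hscale (S.scale_le_one_div_four u)
      (S.walk_smul_cellInd_le u k e) fun i hi => (Finset.mem_filter.1 hi).2
  rw [Finset.sum_comm]
  calc _ ≤ ∑ e, (2 * (S.walk • S.cell u k e) 0 + 12288 * S.scale u ^ 6) :=
        Finset.sum_le_sum fun e _ => hcell e
    _ = 2 * ∑ e, (S.walk • S.cell u k e) 0 + S.codeSize u * (12288 * S.scale u ^ 6) := by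
        rw [Finset.sum_add_distrib, ← Finset.mul_sum, Finset.sum_const, Finset.card_univ,
          Fintype.card_fin, nsmul_eq_mul]
    _ ≤ 2 * 1 + 3 / S.mesh u * (12288 * S.scale u ^ 6) := by
        gcongr
        · exact S.isMarkov_walk.sum_smul_cellInd_le_one _ _ 0
        · exact S.codeSize_le u
    _ = 2 + 36864 * S.scale u ^ 2 := by
        rw [mesh]
        field_simp
        ring
    _ ≤ 2306 := by nlinarith [S.scale_le_one_div_four u]

theorem α_mul_sum_cellError_le {u : ℕ} (k : κ) {s : Finset ι} (hs : ∀ i ∈ s, S.IsSmallStep i u) :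
    S.α * ∑ i ∈ s, S.cellError u i k ≤
      2 * (S.α * S.scale u * s.card) + 13836 * (1 / 2 ^ u) := by
  have hα := S.α_nonneg
  calc S.α * ∑ i ∈ s, S.cellError u i k
      ≤ S.α * ∑ i ∈ s, (2 * S.scale u + 6 * (1 / 2 ^ u) *
          ∑ e, if S.scale u ≤ stepMean S.α S.step (S.cell u k e) i
            then stepMean S.α S.step (S.cell u k e) i else 0) := by
        gcongr with i hi
        exact S.cellError_le (hs i hi) k
    _ = 2 * (S.α * S.scale u * s.card) + 6 * (1 / 2 ^ u) *
          ∑ i ∈ s, ∑ e, S.α * (if S.scale u ≤ stepMean S.α S.step (S.cell u k e) i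
            then stepMean S.α S.step (S.cell u k e) i else 0) := by
        simp only [← Finset.mul_sum]
        rw [Finset.sum_add_distrib, Finset.sum_const, nsmul_eq_mul, ← Finset.mul_sum]
        ring
    _ ≤ 2 * (S.α * S.scale u * s.card) + 6 * (1 / 2 ^ u) * 2306 := by
        gcongr
        exact S.sum_frequent_stepMean_le u k s
    _ = 2 * (S.α * S.scale u * s.card) + 13836 * (1 / 2 ^ u) := by ring

variable [Fintype κ]

theorem abs_smul_increment_sub_approx_le (u : ℕ) (i : ι) :
    |(((S.step i - 1) * lazyProdErase S.α S.step i) • (S.increment i - S.approx u i)) 0| ≤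
      ∑ k, S.cellError u i k := by
  have herase := isMarkov_lazyProdErase S.isMarkov_step S.α_nonneg S.α_le_one i
  have hstay := herase.isPositive.abs_apply_le (S.abs_increment_sub_approx_le u i) 0
  have hmove := ((S.isMarkov_step i).mul herase).isPositive.abs_apply_le
    (S.abs_increment_sub_approx_le u i) 0
  rw [sub_mul, one_mul, sub_smul, BddMeas.sub_apply]
  refine (abs_sub _ _).trans ((add_le_add hmove hstay).trans_eq ?_)
  simp only [Finset.smul_sum, BddMeas.sum_apply, smul_comm _ (_ + _ : ℝ), BddMeas.smul_apply,
    cellError, stepMean, ← Finset.sum_add_distrib]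
  exact Finset.sum_congr rfl fun k _ => Finset.sum_congr rfl fun e _ => by ring

theorem α_mul_sum_cellError_level_le [Nonempty κ] {u : ℕ} (hu : u ≤ Fintype.card ι)
    {s : Finset ι} (hs : ∀ i ∈ s, S.level (Fintype.card ι) i = u) :
    S.α * ∑ i ∈ s, ∑ k, S.cellError (S.level (Fintype.card ι) i) i k ≤
      Fintype.card κ * (16 * Fintype.card κ + 13836) * (1 / 2 ^ u) := by
  have hcard := S.α_mul_scale_mul_card_level_eq_le hu hs
  rw [Finset.sum_congr rfl fun i hi => by rw [hs i hi], Finset.sum_comm, Finset.mul_sum]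
  calc ∑ k, S.α * ∑ i ∈ s, S.cellError u i k
      ≤ ∑ _k : κ, (2 * (8 * Fintype.card κ * (1 / 2 ^ u)) + 13836 * ((1 : ℝ) / 2 ^ u)) := by
        refine Finset.sum_le_sum fun k _ => (S.α_mul_sum_cellError_le k fun i hi =>
          hs i hi ▸ S.isSmallStep_level (Fintype.card ι) i).trans ?_
        gcongr
    _ = Fintype.card κ * (16 * Fintype.card κ + 13836) * (1 / 2 ^ u) := by
        rw [Finset.sum_const, Finset.card_univ, nsmul_eq_mul]
        ring

theorem α_mul_abs_lazyPairing_sub_approx_level_le [Nonempty κ] :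
    S.α * |lazyPairing S.α S.step fun i =>
        S.increment i - S.approx (S.level (Fintype.card ι) i) i| ≤
      27704 * (Fintype.card κ : ℝ) ^ 2 := by
  set U := Fintype.card ι
  have hα := S.α_nonneg
  have hκ : (1 : ℝ) ≤ Fintype.card κ := Nat.one_le_cast.2 Fintype.card_pos
  have hgeom : ∑ u ∈ Finset.range (U + 1), (1 : ℝ) / 2 ^ u ≤ 2 := by
    simpa only [one_div, inv_pow] using sum_geometric_two_le (U + 1)
  have hcover : ∑ i, ∑ k, S.cellError (S.level U i) i k =
      ∑ u ∈ Finset.range (U + 1), ∑ i with S.level U i = u, ∑ k, S.cellError (S.level U i) i k :=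
    (Finset.sum_fiberwise_of_maps_to (fun i _ =>
      Finset.mem_range.2 (Nat.lt_succ_of_le (S.level_le U i))) _).symm
  calc _ ≤ S.α * ∑ i, ∑ k, S.cellError (S.level U i) i k := by
        rw [lazyPairing_apply]
        gcongr
        exact (Finset.abs_sum_le_sum_abs _ _).trans
          (Finset.sum_le_sum fun i _ => S.abs_smul_increment_sub_approx_le _ i)
    _ ≤ ∑ u ∈ Finset.range (U + 1),
          (Fintype.card κ * (16 * Fintype.card κ + 13836) * (1 / 2 ^ u) : ℝ) := by
        rw [hcover, Finset.mul_sum]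
        exact Finset.sum_le_sum fun u hu => S.α_mul_sum_cellError_level_le
          (Nat.lt_succ_iff.1 (Finset.mem_range.1 hu)) fun i hi => (Finset.mem_filter.1 hi).2
    _ ≤ Fintype.card κ * (16 * Fintype.card κ + 13836) * 2 := by
        rw [← Finset.mul_sum]
        gcongr
    _ ≤ 27704 * (Fintype.card κ : ℝ) ^ 2 := by nlinarith

theorem α_mul_abs_lazyPairing_increment_le [Nonempty κ] :
    S.α * |lazyPairing S.α S.step S.increment| ≤
      84856 * (Fintype.card κ : ℝ) ^ 2 * S.τ ^ 3 := by
  set approx : ι → BddMeas E := fun i => S.approx (S.level (Fintype.card ι) i) i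
  have hgood := S.mul_abs_lazyPairing_approx_level_le (Fintype.card ι)
  have hrest := S.α_mul_abs_lazyPairing_sub_approx_level_le
  have hτ : 1 ≤ S.τ ^ 3 := one_le_pow₀ S.one_le_τ
  have hα := S.α_nonneg
  have hhalf : S.α * |lazyPairing S.α S.step approx| ≤
      2 * (S.α * (1 - S.α) * |lazyPairing S.α S.step approx|) := by
    nlinarith [S.α_le, mul_nonneg hα (abs_nonneg (lazyPairing S.α S.step approx))]
  calc S.α * |lazyPairing S.α S.step S.increment|
      ≤ S.α * (|lazyPairing S.α S.step approx| +
          |lazyPairing S.α S.step fun i => S.increment i - approx i|) := by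
        gcongr
        refine (abs_add_le _ _).trans_eq' ?_
        rw [← map_add]
        congr 2
        funext i
        simp
    _ ≤ 2 * (28576 * (Fintype.card κ : ℝ) ^ 2 * S.τ ^ 3) +
          27704 * (Fintype.card κ : ℝ) ^ 2 * S.τ ^ 3 := by
        rw [mul_add]
        exact add_le_add (hhalf.trans (by gcongr))
          (hrest.trans (le_mul_of_one_le_right (by positivity) hτ))
    _ = 84856 * (Fintype.card κ : ℝ) ^ 2 * S.τ ^ 3 := by ring

end ChainingData

end ChainingRemainder

section NormBounds

variable {E : Type*} [AddCommGroup E] [MeasurableSpace E] [MeasurableAdd₂ E]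

/-- The operator `u` has norm at most `c` for the supremum norm on bounded measurable functions. -/
def NormLE (u : ConvAlg E) (c : ℝ) : Prop :=
  ∀ ⦃g : BddMeas E⦄ ⦃M : ℝ⦄, (∀ x, |g x| ≤ M) → ∀ x, |(u • g) x| ≤ c * M

theorem IsMarkov.normLE {u : ConvAlg E} (hu : IsMarkov u) : NormLE u 1 := fun g M hg x => by
  rw [one_mul]
  exact hu.abs_apply_le hg x

namespace NormLE

variable {u v : ConvAlg E} {a b : ℝ}

theorem mono (hu : NormLE u a) (hab : a ≤ b) : NormLE u b := fun _ _ hg x =>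
  (hu hg x).trans (mul_le_mul_of_nonneg_right hab ((abs_nonneg _).trans (hg x)))

theorem add (hu : NormLE u a) (hv : NormLE v b) : NormLE (u + v) (a + b) := fun g M hg x => by
  rw [add_smul, BddMeas.add_apply, add_mul]
  exact (abs_add_le _ _).trans (add_le_add (hu hg x) (hv hg x))

theorem sub (hu : NormLE u a) (hv : NormLE v b) : NormLE (u - v) (a + b) := fun g M hg x => by
  rw [sub_smul, BddMeas.sub_apply, add_mul]
  exact (abs_sub _ _).trans (add_le_add (hu hg x) (hv hg x))

theorem mul (hu : NormLE u a) (hv : NormLE v b) : NormLE (u * v) (a * b) := fun g M hg x => by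
  rw [mul_smul, mul_assoc]
  exact hu (hv hg) x

theorem smul {c : ℝ} (hc : 0 ≤ c) (hu : NormLE u a) : NormLE (c • u) (c * a) := fun g M hg x => by
  rw [smul_assoc, BddMeas.smul_apply, abs_mul, abs_of_nonneg hc, mul_assoc]
  exact mul_le_mul_of_nonneg_left (hu hg x) hc

theorem zero : NormLE (0 : ConvAlg E) 0 := fun _ _ _ _ => by simp

theorem sum {J : Type*} {s : Finset J} {u : J → ConvAlg E} {a : J → ℝ}
    (h : ∀ j ∈ s, NormLE (u j) (a j)) : NormLE (∑ j ∈ s, u j) (∑ j ∈ s, a j) := by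
  induction s using Finset.cons_induction with
  | empty => exact zero
  | cons j s hj ih =>
    rw [Finset.sum_cons, Finset.sum_cons]
    exact (h j (Finset.mem_cons_self j s)).add (ih fun i hi => h i (Finset.mem_cons_of_mem hi))

theorem prod_sub_prod {J : Type*} {s : Finset J} {u v : J → ConvAlg E}
    (hu : ∀ j ∈ s, IsMarkov (u j)) (hv : ∀ j ∈ s, IsMarkov (v j))
    (h : ∀ j ∈ s, NormLE (u j - v j) a) :
    NormLE (∏ j ∈ s, u j - ∏ j ∈ s, v j) (s.card * a) := by
  induction s using Finset.cons_induction with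
  | empty => simpa using zero
  | cons j s hj ih =>
    simp only [Finset.forall_mem_cons] at hu hv h
    rw [Finset.prod_cons, Finset.prod_cons, Finset.card_cons]
    convert (hu.1.normLE.mul (ih hu.2 hv.2 h.2)).add (h.1.mul (IsMarkov.prod hv.2).normLE) using 1
    · ring
    · push_cast
      ring

theorem pow_sub_pow (hu : IsMarkov u) (hv : IsMarkov v) (h : NormLE (u - v) a) (n : ℕ) :
    NormLE (u ^ n - v ^ n) (n * a) := by
  simpa using prod_sub_prod (s := Finset.range n) (fun _ _ => hu) (fun _ _ => hv) fun _ _ => h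

end NormLE

theorem IsMarkov.normLE_sub_one {v : ConvAlg E} (hv : IsMarkov v) : NormLE (v - 1) 2 :=
  (hv.normLE.sub IsMarkov.one.normLE).mono (by norm_num)

theorem lazy_zero (v : ConvAlg E) : lazy 0 v = 1 := by simp [lazy]

theorem lazy_add (α η : ℝ) (v : ConvAlg E) : lazy (α + η) v = lazy α v + η • (v - 1) := by
  rw [lazy, lazy, add_smul, add_assoc]

theorem lazy_lazy (a b : ℝ) (v : ConvAlg E) : lazy a (lazy b v) = lazy (a * b) v := by
  simp only [lazy, add_sub_cancel_left, smul_smul]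

variable {ι : Type*} {v : ι → ConvAlg E} {α η : ℝ}

theorem sum_mul_prod_erase_insert [DecidableEq ι] {R : Type*} [CommSemiring R] {s : Finset ι}
    {k : ι} (hk : k ∉ s) (a d : ι → R) :
    ∑ i ∈ insert k s, d i * ∏ j ∈ (insert k s).erase i, a j =
      d k * ∏ j ∈ s, a j + a k * ∑ i ∈ s, d i * ∏ j ∈ s.erase i, a j := by
  rw [Finset.sum_insert hk, Finset.erase_insert hk, Finset.mul_sum]
  congr 1
  refine Finset.sum_congr rfl fun i hi => ?_
  rw [Finset.erase_insert_of_ne (ne_of_mem_of_not_mem hi hk).symm,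
    Finset.prod_insert fun h => hk (Finset.mem_of_mem_erase h)]
  ring

theorem normLE_sum_sub_one_mul_prod_erase [DecidableEq ι] (hv : ∀ i, IsMarkov (v i)) (h0 : 0 ≤ α)
    (h1 : α ≤ 1) (s : Finset ι) :
    NormLE (∑ i ∈ s, (v i - 1) * ∏ j ∈ s.erase i, lazy α (v j)) (s.card * 2) := by
  simpa [mul_comm] using NormLE.sum (s := s) fun i _ => (hv i).normLE_sub_one.mul
    (IsMarkov.prod fun j (_ : j ∈ s.erase i) => (hv j).lazy h0 h1).normLE

theorem normLE_prod_lazy_add_sub [DecidableEq ι] (hv : ∀ i, IsMarkov (v i)) (hα : 0 ≤ α)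
    (hη : 0 ≤ η) (h1 : α + η ≤ 1) (s : Finset ι) :
    NormLE (∏ i ∈ s, lazy (α + η) (v i) - ∏ i ∈ s, lazy α (v i) -
      η • ∑ i ∈ s, (v i - 1) * ∏ j ∈ s.erase i, lazy α (v j)) (2 * s.card ^ 2 * η ^ 2) := by
  induction s using Finset.induction_on with
  | empty => simpa using NormLE.zero
  | insert k s hk ih =>
    rw [Finset.prod_insert hk, Finset.prod_insert hk, sum_mul_prod_erase_insert hk,
      Finset.card_insert_of_notMem hk]
    have hlinear := normLE_sum_sub_one_mul_prod_erase hv hα (by linarith) s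
    have hbound := (((hv k).lazy (add_nonneg hα hη) h1).normLE.mul ih).add
      (((hv k).normLE_sub_one.mul hlinear).smul (sq_nonneg η))
    convert hbound.mono ?_ using 1
    · rw [lazy_add]
      simp only [Algebra.smul_def, map_pow]
      ring
    · push_cast
      nlinarith [sq_nonneg η]

theorem normLE_prod_lazy_sub_lazyMix [Fintype ι] (hv : ∀ i, IsMarkov (v i)) (h0 : 0 ≤ η)
    (h1 : η ≤ 1) :
    NormLE (∏ i, lazy η (v i) - lazyMix η v) (2 * Fintype.card ι ^ 2 * η ^ 2) := by
  classical
  simpa [lazy_zero, lazyMix, sub_sub] using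
    normLE_prod_lazy_add_sub hv le_rfl h0 (by rwa [zero_add]) Finset.univ

end NormBounds

section PowerSums

theorem mul_rpow_sub_one_le_sub {r : ℝ} (h0 : 0 < r) (h1 : r ≤ 1) (n : ℕ) :
    r * ((n : ℝ) + 1) ^ (r - 1) ≤ ((n : ℝ) + 1) ^ r - (n : ℝ) ^ r := by
  have hn : (0 : ℝ) < n + 1 := by positivity
  have hbernoulli : (1 + -1 / ((n : ℝ) + 1)) ^ r ≤ 1 + r * (-1 / (n + 1)) :=
    rpow_one_add_le_one_add_mul_self
      ((le_div_iff₀ hn).2 (by linarith [(Nat.cast_nonneg n : (0 : ℝ) ≤ n)])) h0.le h1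
  have hratio : (1 : ℝ) + -1 / (n + 1) = n / (n + 1) := by
    field_simp
    ring
  rw [hratio, Real.div_rpow n.cast_nonneg hn.le, div_le_iff₀ (by positivity)] at hbernoulli
  rw [Real.rpow_sub_one hn.ne']
  calc r * (((n : ℝ) + 1) ^ r / (n + 1))
      = ((n : ℝ) + 1) ^ r - (1 + r * (-1 / (n + 1))) * ((n : ℝ) + 1) ^ r := by ring
    _ ≤ ((n : ℝ) + 1) ^ r - (n : ℝ) ^ r := by linarith

theorem mul_sum_range_rpow_sub_one_le {r : ℝ} (h0 : 0 < r) (h1 : r ≤ 1) (n : ℕ) :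
    r * ∑ k ∈ Finset.range n, ((k : ℝ) + 1) ^ (r - 1) ≤ (n : ℝ) ^ r := by
  have htelescope := Finset.sum_range_sub (fun k : ℕ => (k : ℝ) ^ r) n
  rw [Nat.cast_zero, Real.zero_rpow h0.ne', sub_zero] at htelescope
  rw [Finset.mul_sum, ← htelescope]
  refine Finset.sum_le_sum fun k _ => ?_
  push_cast
  exact mul_rpow_sub_one_le_sub h0 h1 k

theorem sum_range_div_rpow_three_div_four_le (n : ℕ) :
    ∑ k ∈ Finset.range n, ((n : ℝ) / (k + 1)) ^ (3 / 4 : ℝ) ≤ 4 * n := by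
  have hsum := mul_sum_range_rpow_sub_one_le (r := 1 / 4) (by norm_num) (by norm_num) n
  have hterm (k : ℕ) : ((n : ℝ) / (k + 1)) ^ (3 / 4 : ℝ) =
      (n : ℝ) ^ (3 / 4 : ℝ) * ((k : ℝ) + 1) ^ (1 / 4 - 1 : ℝ) := by
    rw [Real.div_rpow (by positivity) (by positivity), div_eq_mul_inv,
      ← Real.rpow_neg (by positivity)]
    norm_num
  calc ∑ k ∈ Finset.range n, ((n : ℝ) / (k + 1)) ^ (3 / 4 : ℝ)
      = (n : ℝ) ^ (3 / 4 : ℝ) * ∑ k ∈ Finset.range n, ((k : ℝ) + 1) ^ (1 / 4 - 1 : ℝ) := by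
        rw [Finset.mul_sum]
        exact Finset.sum_congr rfl fun k _ => hterm k
    _ ≤ (n : ℝ) ^ (3 / 4 : ℝ) * (4 * (n : ℝ) ^ (1 / 4 : ℝ)) := by
        gcongr
        linarith
    _ = 4 * n := by
        rw [mul_left_comm, ← Real.rpow_add' (by positivity) (by norm_num)]
        norm_num

end PowerSums

section Path

variable {E : Type*} [AddCommGroup E] [MeasurableSpace E] [MeasurableAdd₂ E]
variable {ι : Type*} [Fintype ι]

theorem lazyPairing_sub_one_smul [DecidableEq ι] (α : ℝ) (v : ι → ConvAlg E) (f : BddMeas E) :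
    lazyPairing α v (fun i => (v i - 1) • f) =
      ((∑ i, (v i - 1) * ((v i - 1) * lazyProdErase α v i)) • f) 0 := by
  rw [lazyPairing_apply, Finset.sum_smul, BddMeas.sum_apply]
  refine Finset.sum_congr rfl fun i _ => ?_
  rw [← mul_smul]
  congr 2
  ring

theorem lazyMix_mul_prod_lazy [DecidableEq ι] (α η : ℝ) (v : ι → ConvAlg E) :
    lazyMix η v * ∏ i, lazy α (v i) = ∏ i, lazy α (v i) +
      η • ∑ i, (v i - 1) * lazyProdErase α v i +
      (η * α) • ∑ i, (v i - 1) * ((v i - 1) * lazyProdErase α v i) := by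
  have hterm (i : ι) : (v i - 1) * ∏ i, lazy α (v i) = (v i - 1) * lazyProdErase α v i +
      α • ((v i - 1) * ((v i - 1) * lazyProdErase α v i)) := by
    rw [← Finset.mul_prod_erase _ _ (Finset.mem_univ i), ← lazyProdErase, lazy]
    simp only [Algebra.smul_def]
    ring
  rw [lazyMix, add_mul, one_mul, smul_mul_assoc, Finset.sum_mul,
    Finset.sum_congr rfl fun i _ => hterm i, Finset.sum_add_distrib, ← Finset.smul_sum, smul_add,
    smul_smul, add_assoc]

-- The first-order terms in `η` cancel, leaving the second differences `(v i - 1)²`.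
theorem abs_lazyMix_sub_prod_lazy_add_le [DecidableEq ι] {v : ι → ConvAlg E}
    (hv : ∀ i, IsMarkov (v i)) {α η : ℝ} (hα : 0 ≤ α) (hη : 0 ≤ η) (h1 : α + η ≤ 1)
    {W : ConvAlg E} (hW : IsMarkov W) {g : BddMeas E} (hg : ∀ x, |g x| ≤ 1) :
    |((lazyMix η v * W * ∏ i, lazy α (v i)) • g) 0 - ((W * ∏ i, lazy (α + η) (v i)) • g) 0| ≤
      η * (α * |lazyPairing α v fun i => (v i - 1) • W • g|) +
        2 * Fintype.card ι ^ 2 * η ^ 2 := by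
  set R := ∏ i, lazy (α + η) (v i) - ∏ i, lazy α (v i) -
    η • ∑ i, (v i - 1) * lazyProdErase α v i with hR
  have hremainder := (hW.normLE.mul (normLE_prod_lazy_add_sub hv hα hη h1 Finset.univ)) hg 0
  have hdecomp : lazyMix η v * W * ∏ i, lazy α (v i) - W * ∏ i, lazy (α + η) (v i) =
      (η * α) • ((∑ i, (v i - 1) * ((v i - 1) * lazyProdErase α v i)) * W) - W * R := by
    rw [mul_right_comm, lazyMix_mul_prod_lazy, hR]
    simp only [Algebra.smul_def, map_mul]
    ring
  rw [← BddMeas.sub_apply, ← sub_smul, hdecomp, sub_smul, smul_assoc, mul_smul _ W,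
    BddMeas.sub_apply, BddMeas.smul_apply, ← lazyPairing_sub_one_smul]
  refine (abs_sub _ _).trans (add_le_add (le_of_eq ?_) (hremainder.trans_eq ?_))
  · rw [abs_mul, abs_of_nonneg (mul_nonneg hη hα), mul_assoc]
  · rw [one_mul, mul_one, Finset.card_univ]

variable {κ : Type*} [Fintype κ] [Nonempty κ] (V : ι → Measure E)
  [∀ i, IsProbabilityMeasure (V i)] (y : κ → AddFunctional E) (c : κ → ℝ)

theorem α_mul_abs_lazyPairing_halfspacesInd_le [DecidableEq ι] {η : ℝ} (hη : 0 < η)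
    (hcard : Fintype.card ι * η ≤ 1 / 2) {L l : ℕ} (hl : l < L) (hL : L * η ≤ 1 / 2) :
    (L - (l + 1)) * η * |lazyPairing ((L - (l + 1)) * η) (fun i => convOp (V i)) fun i =>
        (convOp (V i) - 1) • lazyMix η (fun i => convOp (V i)) ^ l • halfspacesInd y c| ≤
      84856 * (Fintype.card κ : ℝ) ^ 2 * ((L : ℝ) / (l + 1)) ^ (3 / 4 : ℝ) := by
  have hlL : (l : ℝ) + 1 ≤ L := by exact_mod_cast hl
  have hratio : 1 ≤ (L : ℝ) / (l + 1) := (one_le_div (by positivity)).2 hlL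
  have hpow (k : ℕ) : (((L : ℝ) / (l + 1)) ^ (1 / 4 : ℝ)) ^ k =
      ((L : ℝ) / (l + 1)) ^ (k / 4 : ℝ) := by
    rw [← Real.rpow_mul_natCast (by positivity), one_div_mul_eq_div]
  let S : ChainingData E ι κ :=
    { V, η, l, y, c
      isProbabilityMeasure := inferInstance
      η_pos := hη
      card_mul_η_le := hcard
      α := (L - (l + 1)) * η
      α_nonneg := mul_nonneg (sub_nonneg.2 hlL) hη.le
      α_le := by nlinarith
      τ := ((L : ℝ) / (l + 1)) ^ (1 / 4 : ℝ)
      one_le_τ := Real.one_le_rpow hratio (by norm_num)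
      α_le_mul_τ_pow := by
        rw [hpow 4, Nat.cast_ofNat, div_self four_ne_zero, Real.rpow_one, mul_right_comm,
          mul_div_cancel₀ _ (by positivity)]
        gcongr
        linarith }
  exact (S.α_mul_abs_lazyPairing_increment_le).trans_eq (by rw [hpow 3, Nat.cast_ofNat])

theorem abs_lazyMix_pow_mul_prod_lazy_succ_sub_le {η : ℝ} (hη : 0 < η)
    (hcard : Fintype.card ι * η ≤ 1 / 2) {L l : ℕ} (hl : l < L) (hL : L * η ≤ 1 / 2) :
    |((lazyMix η (fun i => convOp (V i)) ^ (l + 1) *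
          ∏ i, lazy ((L - (l + 1)) * η) (convOp (V i))) • halfspacesInd y c) 0 -
        ((lazyMix η (fun i => convOp (V i)) ^ l *
          ∏ i, lazy ((L - l) * η) (convOp (V i))) • halfspacesInd y c) 0| ≤
      η * (84856 * (Fintype.card κ : ℝ) ^ 2 * ((L : ℝ) / (l + 1)) ^ (3 / 4 : ℝ)) +
        2 * Fintype.card ι ^ 2 * η ^ 2 := by
  classical
  have hv (i : ι) : IsMarkov (convOp (V i)) := isMarkov_convOp _
  have hmix := isMarkov_lazyMix hv hη.le (hcard.trans (by norm_num))
  have hlL : (l : ℝ) + 1 ≤ L := by exact_mod_cast hl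
  have hα : (L - l : ℝ) * η = (L - (l + 1)) * η + η := by ring
  rw [pow_succ', hα]
  refine (abs_lazyMix_sub_prod_lazy_add_le hv (mul_nonneg (sub_nonneg.2 hlL) hη.le) hη.le
    (by nlinarith) (hmix.pow l) (abs_halfspacesInd_le_one y c)).trans ?_
  refine add_le_add_left (mul_le_mul_of_nonneg_left ?_ hη.le) _
  exact α_mul_abs_lazyPairing_halfspacesInd_le V y c hη hcard hl hL

theorem abs_prod_lazy_sub_lazyMix_pow_le {η : ℝ} (hη : 0 ≤ η)
    (hcard : Fintype.card ι * η ≤ 1 / 2) {L : ℕ} (hL : L * η ≤ 1 / 2) :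
    |((∏ i, lazy (L * η) (convOp (V i))) • halfspacesInd y c) 0 -
      (lazyMix η (fun i => convOp (V i)) ^ L • halfspacesInd y c) 0| ≤
    339424 * (Fintype.card κ : ℝ) ^ 2 * (L * η) + L * (2 * Fintype.card ι ^ 2 * η ^ 2) := by
  rcases hη.eq_or_lt with rfl | hη
  · simp [lazy_zero, lazyMix]
  set v : ι → ConvAlg E := fun i => convOp (V i)
  set path : ℕ → ℝ := fun l =>
    ((lazyMix η v ^ l * ∏ i, lazy ((L - l) * η) (v i)) • halfspacesInd y c) 0 with hpath
  have hstep : ∀ l ∈ Finset.range L, |path (l + 1) - path l| ≤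
      η * (84856 * (Fintype.card κ : ℝ) ^ 2 * ((L : ℝ) / (l + 1)) ^ (3 / 4 : ℝ)) +
        2 * Fintype.card ι ^ 2 * η ^ 2 := by
    intro l hl
    simpa only [hpath, Nat.cast_succ] using
      abs_lazyMix_pow_mul_prod_lazy_succ_sub_le V y c hη hcard (Finset.mem_range.1 hl) hL
  have hstart : path 0 = ((∏ i, lazy (L * η) (v i)) • halfspacesInd y c) 0 := by simp [hpath]
  have hend : path L = (lazyMix η v ^ L • halfspacesInd y c) 0 := by simp [hpath, lazy_zero]
  rw [← hstart, ← hend, abs_sub_comm, ← Finset.sum_range_sub]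
  calc |∑ l ∈ Finset.range L, (path (l + 1) - path l)|
      ≤ ∑ l ∈ Finset.range L,
          (η * (84856 * (Fintype.card κ : ℝ) ^ 2 * ((L : ℝ) / (l + 1)) ^ (3 / 4 : ℝ)) +
            2 * Fintype.card ι ^ 2 * η ^ 2) :=
        (Finset.abs_sum_le_sum_abs _ _).trans (Finset.sum_le_sum hstep)
    _ = η * (84856 * (Fintype.card κ : ℝ) ^ 2 *
          ∑ l ∈ Finset.range L, ((L : ℝ) / (l + 1)) ^ (3 / 4 : ℝ)) +
            L * (2 * Fintype.card ι ^ 2 * η ^ 2) := by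
        rw [Finset.sum_add_distrib, Finset.sum_const, Finset.card_range, nsmul_eq_mul,
          ← Finset.mul_sum, ← Finset.mul_sum]
    _ ≤ η * (84856 * (Fintype.card κ : ℝ) ^ 2 * (4 * L)) +
          L * (2 * Fintype.card ι ^ 2 * η ^ 2) := by
        gcongr
        exact sum_range_div_rpow_three_div_four_le L
    _ = _ := by ring

end Path

section ConvProducts

variable {E : Type*} [AddCommGroup E] [MeasurableSpace E] [MeasurableAdd₂ E]

instance isProbabilityMeasure_convPow (μ : Measure E) [IsProbabilityMeasure μ] :
    ∀ k, IsProbabilityMeasure (convPow μ k)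
  | 0 => Measure.dirac.isProbabilityMeasure
  | k + 1 =>
    have := isProbabilityMeasure_convPow μ k
    isProbabilityMeasure_mconv (convPow μ k) μ

theorem convOp_convPow (μ : Measure E) [IsProbabilityMeasure μ] (k : ℕ) :
    convOp (convPow μ k) = convOp μ ^ k := by
  induction k with
  | zero => exact convOp_dirac_zero
  | succ k ih => rw [pow_succ, ← ih, ← convOp_mconv]; rfl

instance isProbabilityMeasure_convProd : ∀ {n : ℕ} (G : Fin n → Measure E)
    [∀ i, IsProbabilityMeasure (G i)], IsProbabilityMeasure (convProd G)
  | 0, _, _ => Measure.dirac.isProbabilityMeasure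
  | n + 1, G, _ =>
    have := isProbabilityMeasure_convProd fun i : Fin n => G i.castSucc
    isProbabilityMeasure_mconv (convProd fun i : Fin n => G i.castSucc) (G (Fin.last n))

theorem convOp_convProd {n : ℕ} (G : Fin n → Measure E) [∀ i, IsProbabilityMeasure (G i)] :
    convOp (convProd G) = ∏ i, convOp (G i) := by
  induction n with
  | zero => exact convOp_dirac_zero
  | succ n ih =>
    rw [Fin.prod_univ_castSucc, ← ih fun i => G i.castSucc, ← convOp_mconv]
    rfl

end ConvProducts

section PoissonWeights

open Filter Topology

/-- The mass at `k` of the Poisson distribution with mean `a`. -/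
def poissonWeight (a : ℝ) (k : ℕ) : ℝ := Real.exp (-a) * a ^ k / k.factorial

/-- The mass at `k` of the binomial distribution with `L` trials of success probability `q`. -/
def binomialWeight (q : ℝ) (L k : ℕ) : ℝ := L.choose k * q ^ k * (1 - q) ^ (L - k)

/-- The `ℓ¹` distance between the Poisson distribution with mean `a` and the binomial distribution
with `L` trials and the same mean. -/
def poissonBinomialDist (a : ℝ) (L : ℕ) : ℝ :=
  ∑' k, |poissonWeight a k - binomialWeight (a / L) L k|

variable {a : ℝ} {L : ℕ}

theorem poissonWeight_nonneg (ha : 0 ≤ a) (k : ℕ) : 0 ≤ poissonWeight a k := by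
  unfold poissonWeight
  positivity

theorem hasSum_poissonWeight (ha : 0 ≤ a) : HasSum (poissonWeight a) 1 :=
  ProbabilityTheory.hasSum_one_poissonMeasure ⟨a, ha⟩

theorem poissonWeight_le (ha : 0 ≤ a) (k : ℕ) : poissonWeight a k ≤ a ^ k / k.factorial := by
  unfold poissonWeight
  gcongr
  exact mul_le_of_le_one_left (by positivity) (Real.exp_le_one_iff.2 (neg_nonpos.2 ha))

theorem binomialWeight_nonneg {q : ℝ} (h0 : 0 ≤ q) (h1 : q ≤ 1) (L k : ℕ) :
    0 ≤ binomialWeight q L k :=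
  mul_nonneg (by positivity) (pow_nonneg (sub_nonneg.2 h1) _)

theorem binomialWeight_le {q : ℝ} (h0 : 0 ≤ q) (h1 : q ≤ 1) (L k : ℕ) :
    binomialWeight q L k ≤ (L * q) ^ k / k.factorial := by
  calc binomialWeight q L k ≤ L.choose k * q ^ k :=
        mul_le_of_le_one_right (by positivity) (pow_le_one₀ (sub_nonneg.2 h1) (by linarith))
    _ ≤ L ^ k / k.factorial * q ^ k := by
        gcongr
        exact Nat.choose_le_pow_div k L
    _ = (L * q) ^ k / k.factorial := by ring

theorem abs_poissonWeight_sub_binomialWeight_le (ha : 0 ≤ a) (hL : 0 < L) (haL : a ≤ L) (k : ℕ) :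
    |poissonWeight a k - binomialWeight (a / L) L k| ≤ a ^ k / k.factorial := by
  have hL : (0 : ℝ) < L := Nat.cast_pos.2 hL
  have h0 : 0 ≤ a / L := by positivity
  have h1 : a / L ≤ 1 := (div_le_one hL).2 haL
  have hbinomial := binomialWeight_le h0 h1 L k
  rw [mul_div_cancel₀ _ hL.ne'] at hbinomial
  exact abs_sub_le_of_nonneg_of_le (poissonWeight_nonneg ha k) (poissonWeight_le ha k)
    (binomialWeight_nonneg h0 h1 L k) hbinomial

theorem summable_abs_poissonWeight_sub_binomialWeight (ha : 0 ≤ a) (hL : 0 < L) (haL : a ≤ L) :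
    Summable fun k => |poissonWeight a k - binomialWeight (a / L) L k| :=
  (Real.summable_pow_div_factorial a).of_nonneg_of_le (fun _ => abs_nonneg _)
    (abs_poissonWeight_sub_binomialWeight_le ha hL haL)

theorem tendsto_poissonBinomialDist (ha : 0 ≤ a) :
    Tendsto (poissonBinomialDist a) atTop (𝓝 0) := by
  have hmean : Tendsto (fun L : ℕ => (L : ℝ) * (a / L)) atTop (𝓝 a) :=
    tendsto_const_nhds.congr' <| (eventually_gt_atTop 0).mono fun L hL =>
      (mul_div_cancel₀ a (Nat.cast_pos.2 hL).ne').symm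
  have hpointwise (k : ℕ) :
      Tendsto (fun L : ℕ => |poissonWeight a k - binomialWeight (a / L) L k|) atTop (𝓝 0) := by
    have := ProbabilityTheory.tendsto_choose_mul_pow_of_tendsto_mul_atTop k hmean
    simpa [poissonWeight, binomialWeight] using
      ((tendsto_const_nhds (x := poissonWeight a k)).sub this).abs
  have hdominated : ∀ᶠ L : ℕ in atTop, ∀ k,
      ‖|poissonWeight a k - binomialWeight (a / L) L k|‖ ≤ a ^ k / k.factorial := by
    filter_upwards [eventually_gt_atTop 0, tendsto_natCast_atTop_atTop.eventually_ge_atTop a]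
      with L hL haL k
    rw [Real.norm_eq_abs, abs_abs]
    exact abs_poissonWeight_sub_binomialWeight_le ha hL haL k
  rw [← tsum_zero (α := ℝ) (β := ℕ)]
  exact tendsto_tsum_of_dominated_convergence (Real.summable_pow_div_factorial a) hpointwise
    hdominated

end PoissonWeights

section CompoundPoisson

variable {E : Type*} [AddCommGroup E] [MeasurableSpace E] [MeasurableAdd₂ E] {a : ℝ}

theorem isProbabilityMeasure_cpois (ha : 0 ≤ a) (μ : Measure E) [IsProbabilityMeasure μ] :
    IsProbabilityMeasure (cpois a μ) := ⟨by
  have hsum := ENNReal.ofReal_tsum_of_nonneg (poissonWeight_nonneg ha)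
    (hasSum_poissonWeight ha).summable
  rw [(hasSum_poissonWeight ha).tsum_eq, ENNReal.ofReal_one] at hsum
  simpa [cpois, poissonWeight] using hsum.symm⟩

theorem hasSum_convOp_cpois (ha : 0 ≤ a) (μ : Measure E) [IsProbabilityMeasure μ]
    [IsProbabilityMeasure (cpois a μ)] (g : BddMeas E) (x : E) :
    HasSum (fun k => poissonWeight a k * (convOp μ ^ k • g) x) ((convOp (cpois a μ) • g) x) := by
  have hsum : HasSum
      (fun k => ∫ y, g (x + y) ∂(ENNReal.ofReal (poissonWeight a k) • convPow μ k))
      (∫ y, g (x + y) ∂(cpois a μ)) :=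
    hasSum_integral_measure ((translate x g).integrable (cpois a μ))
  refine hsum.congr_fun fun k => ?_
  rw [integral_smul_measure, ENNReal.toReal_ofReal (poissonWeight_nonneg ha k), smul_eq_mul,
    ← convOp_convPow, convOp_smul_apply]

theorem hasSum_lazy_pow (q : ℝ) (v : ConvAlg E) (L : ℕ) (g : BddMeas E) (x : E) :
    HasSum (fun k => binomialWeight q L k * (v ^ k • g) x) ((lazy q v ^ L • g) x) := by
  have hexpand : lazy q v ^ L = ∑ k ∈ Finset.range (L + 1), binomialWeight q L k • v ^ k := by
    have hlazy : lazy q v = q • v + (1 - q) • 1 := by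
      rw [lazy]
      module
    rw [hlazy, add_pow]
    refine Finset.sum_congr rfl fun k _ => ?_
    simp only [binomialWeight, Algebra.smul_def, map_mul, map_pow, map_natCast, mul_one]
    ring
  simp only [hexpand, Finset.sum_smul, BddMeas.sum_apply, smul_assoc, BddMeas.smul_apply]
  refine hasSum_sum_of_ne_finset_zero fun k hk => ?_
  have hk : L < k := by simpa using hk
  simp [binomialWeight, Nat.choose_eq_zero_of_lt hk]

theorem normLE_sub_of_hasSum {K : Type*} {u v : ConvAlg E} {T : K → ConvAlg E}
    (hT : ∀ k, IsMarkov (T k)) {w w' : K → ℝ} (hw : Summable fun k => |w k - w' k|)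
    (hu : ∀ (g : BddMeas E) x, HasSum (fun k => w k * (T k • g) x) ((u • g) x))
    (hv : ∀ (g : BddMeas E) x, HasSum (fun k => w' k * (T k • g) x) ((v • g) x)) :
    NormLE (u - v) (∑' k, |w k - w' k|) := fun g M hg x => by
  rw [sub_smul, BddMeas.sub_apply, ← ((hu g x).sub (hv g x)).tsum_eq, ← tsum_mul_right,
    ← Real.norm_eq_abs]
  refine tsum_of_norm_bounded (hw.mul_right M).hasSum fun k => ?_
  rw [← sub_mul, Real.norm_eq_abs, abs_mul]
  exact mul_le_mul_of_nonneg_left ((hT k).abs_apply_le hg x) (abs_nonneg _)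

theorem normLE_convOp_cpois_sub (ha : 0 ≤ a) (μ : Measure E) [IsProbabilityMeasure μ]
    [IsProbabilityMeasure (cpois a μ)] {L : ℕ} (hL : 0 < L) (haL : a ≤ L) :
    NormLE (convOp (cpois a μ) - lazy (a / L) (convOp μ) ^ L) (poissonBinomialDist a L) :=
  normLE_sub_of_hasSum (fun k => (isMarkov_convOp μ).pow k)
    (summable_abs_poissonWeight_sub_binomialWeight ha hL haL) (hasSum_convOp_cpois ha μ)
    (hasSum_lazy_pow _ _ L)

end CompoundPoisson

section EqualRates

open Filter Topology

variable {E : Type*} [AddCommGroup E] [MeasurableSpace E] [MeasurableAdd₂ E]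
variable {ι : Type*} [Fintype ι] {V G : ι → Measure E} [∀ i, IsProbabilityMeasure (V i)]
  [∀ i, IsProbabilityMeasure (G i)] [∀ i, IsProbabilityMeasure (cpois 1 (G i))] {q : ℝ}

theorem normLE_prod_cpois_sub_lazyMix_pow (hG : ∀ i, convOp (G i) = lazy q (convOp (V i)))
    (h0 : 0 ≤ q) {L : ℕ} (hL : 0 < L) (hqL : q ≤ L) (hcard : Fintype.card ι * (q / L) ≤ 1) :
    NormLE (∏ i, convOp (cpois 1 (G i)) - lazyMix (q / L) (fun i => convOp (V i)) ^ L)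
      (Fintype.card ι * poissonBinomialDist 1 L +
        L * (2 * Fintype.card ι ^ 2 * (q / L) ^ 2)) := by
  classical
  have hη : 0 ≤ q / L := by positivity
  have hη' : q / L ≤ 1 := (div_le_one (by positivity)).2 hqL
  have hv (i : ι) : IsMarkov (convOp (V i)) := isMarkov_convOp _
  have hlazy (i : ι) : IsMarkov (lazy (q / L) (convOp (V i))) := (hv i).lazy hη hη'
  have hpoisson (i : ι) : NormLE (convOp (cpois 1 (G i)) - lazy (q / L) (convOp (V i)) ^ L)
      (poissonBinomialDist 1 L) := by
    have := normLE_convOp_cpois_sub zero_le_one (G i) hL (Nat.one_le_cast.2 hL)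
    rwa [hG, lazy_lazy, one_div_mul_eq_div] at this
  have hprod := NormLE.prod_sub_prod (s := Finset.univ)
    (fun i _ => isMarkov_convOp (cpois 1 (G i))) (fun i _ => (hlazy i).pow L)
    fun i _ => hpoisson i
  rw [Finset.prod_pow, Finset.card_univ] at hprod
  rw [← sub_add_sub_cancel _ ((∏ i, lazy (q / L) (convOp (V i))) ^ L)]
  exact hprod.add ((normLE_prod_lazy_sub_lazyMix hv hη hη').pow_sub_pow
    (IsMarkov.prod fun i _ => hlazy i) (isMarkov_lazyMix hv hη hcard) L)

variable {κ : Type*} [Fintype κ] [Nonempty κ]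

theorem abs_prod_lazy_sub_prod_cpois_le_add (hG : ∀ i, convOp (G i) = lazy q (convOp (V i)))
    (h0 : 0 ≤ q) (h1 : q ≤ 1 / 2) (y : κ → AddFunctional E) (c : κ → ℝ) {L : ℕ}
    (hL : Fintype.card ι < L) :
    |((∏ i, convOp (G i)) • halfspacesInd y c) 0 -
      ((∏ i, convOp (cpois 1 (G i))) • halfspacesInd y c) 0| ≤
    339424 * (Fintype.card κ : ℝ) ^ 2 * q + (Fintype.card ι * poissonBinomialDist 1 L +
      4 * Fintype.card ι ^ 2 * q ^ 2 * (1 / L)) := by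
  classical
  have hL0 : 0 < L := by omega
  have hLpos : (0 : ℝ) < L := Nat.cast_pos.2 hL0
  have hLone : (1 : ℝ) ≤ L := Nat.one_le_cast.2 hL0
  have hLcancel : L * (q / L) = q := mul_div_cancel₀ _ hLpos.ne'
  have hcard : Fintype.card ι * (q / L) ≤ 1 / 2 := by
    have : (Fintype.card ι : ℝ) ≤ L := by exact_mod_cast hL.le
    exact (mul_le_mul_of_nonneg_right this (by positivity)).trans (hLcancel.trans_le h1)
  have hpath := abs_prod_lazy_sub_lazyMix_pow_le V y c (div_nonneg h0 hLpos.le) hcard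
    (hLcancel.trans_le h1)
  have hpoisson := normLE_prod_cpois_sub_lazyMix_pow hG h0 hL0 (by linarith) (by linarith)
    (abs_halfspacesInd_le_one y c) 0
  rw [sub_smul, BddMeas.sub_apply, mul_one, abs_sub_comm] at hpoisson
  rw [hLcancel] at hpath
  simp only [hG] at hpath ⊢
  refine (abs_sub_le _ _ _).trans ((add_le_add hpath hpoisson).trans_eq ?_)
  field_simp
  ring

theorem abs_prod_lazy_sub_prod_cpois_le (hG : ∀ i, convOp (G i) = lazy q (convOp (V i)))
    (h0 : 0 ≤ q) (h1 : q ≤ 1 / 2) (y : κ → AddFunctional E) (c : κ → ℝ) :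
    |((∏ i, convOp (G i)) • halfspacesInd y c) 0 -
      ((∏ i, convOp (cpois 1 (G i))) • halfspacesInd y c) 0| ≤
    339424 * (Fintype.card κ : ℝ) ^ 2 * q := by
  have hlim : Tendsto (fun L : ℕ => 339424 * (Fintype.card κ : ℝ) ^ 2 * q +
      (Fintype.card ι * poissonBinomialDist 1 L + 4 * Fintype.card ι ^ 2 * q ^ 2 * (1 / L)))
      atTop (𝓝 (339424 * (Fintype.card κ : ℝ) ^ 2 * q +
        (Fintype.card ι * 0 + 4 * Fintype.card ι ^ 2 * q ^ 2 * 0))) :=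
    tendsto_const_nhds.add (((tendsto_poissonBinomialDist zero_le_one).const_mul _).add
      (tendsto_one_div_atTop_nhds_zero_nat.const_mul _))
  rw [mul_zero, mul_zero, add_zero, add_zero] at hlim
  exact ge_of_tendsto hlim <| (eventually_gt_atTop _).mono fun L hL =>
    abs_prod_lazy_sub_prod_cpois_le_add hG h0 h1 y c hL

end EqualRates

section ZeroInflated

variable {E : Type*} [AddCommGroup E] [MeasurableSpace E]

/-- The distribution `(1 - a) E + a V`, where `E` is the Dirac measure at `0`. -/
def zeroInflated (a : ℝ) (V : Measure E) : Measure E :=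
  ENNReal.ofReal (1 - a) • Measure.dirac 0 + ENNReal.ofReal a • V

variable {a : ℝ}

theorem isProbabilityMeasure_zeroInflated (h0 : 0 ≤ a) (h1 : a ≤ 1) (V : Measure E)
    [IsProbabilityMeasure V] : IsProbabilityMeasure (zeroInflated a V) := ⟨by
  simp [zeroInflated, ← ENNReal.ofReal_add (sub_nonneg.2 h1) h0]⟩

variable [MeasurableAdd₂ E]

theorem convOp_zeroInflated (h0 : 0 ≤ a) (h1 : a ≤ 1) (V : Measure E) [IsProbabilityMeasure V]
    [IsProbabilityMeasure (zeroInflated a V)] :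
    convOp (zeroInflated a V) = lazy a (convOp V) := by
  have : IsFiniteMeasure (ENNReal.ofReal (1 - a) • Measure.dirac (0 : E)) :=
    Measure.smul_finite _ ENNReal.ofReal_ne_top
  have : IsFiniteMeasure (ENNReal.ofReal a • V) := V.smul_finite ENNReal.ofReal_ne_top
  calc convOp (zeroInflated a V)
      = convOp (ENNReal.ofReal (1 - a) • Measure.dirac (0 : E)) +
          convOp (ENNReal.ofReal a • V) := convOp_add _ _
    _ = (1 - a) • 1 + a • convOp V := by
        rw [convOp_ofReal_smul _ (sub_nonneg.2 h1), convOp_ofReal_smul _ h0, convOp_dirac_zero]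
    _ = lazy a (convOp V) := by
        rw [lazy]
        module

variable {n : ℕ} (V : Fin n → Measure E) [∀ i, IsProbabilityMeasure (V i)] {p : Fin n → ℝ} {q : ℝ}
  {κ : Type*} [Fintype κ] [Nonempty κ] (y : κ → AddFunctional E) (c : κ → ℝ)

theorem abs_convProd_zeroInflated_sub_le_of_le_half (hp : ∀ i, 0 ≤ p i) (hpq : ∀ i, p i ≤ q)
    (h0 : 0 ≤ q) (h1 : q ≤ 1 / 2) :
    |(convProd fun i => zeroInflated (p i) (V i)).real (halfspaces y c) -
      (convProd fun i => cpois 1 (zeroInflated (p i) (V i))).real (halfspaces y c)| ≤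
    339424 * (Fintype.card κ : ℝ) ^ 2 * q := by
  have hp1 (i : Fin n) : p i ≤ 1 := (hpq i).trans (h1.trans (by norm_num))
  have hr0 (i : Fin n) : 0 ≤ p i / q := div_nonneg (hp i) h0
  have hr1 (i : Fin n) : p i / q ≤ 1 := div_le_one_of_le₀ (hpq i) h0
  -- For `q = 0` this is the junk value `p i / 0 = 0`, as `p i = 0`.
  have hcancel (i : Fin n) : q * (p i / q) = p i :=
    mul_div_cancel_of_imp' fun hq => le_antisymm (hq ▸ hpq i) (hp i)
  have (i : Fin n) := isProbabilityMeasure_zeroInflated (hp i) (hp1 i) (V i)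
  have (i : Fin n) := isProbabilityMeasure_zeroInflated (hr0 i) (hr1 i) (V i)
  have (i : Fin n) := isProbabilityMeasure_cpois zero_le_one (zeroInflated (p i) (V i))
  have hG (i : Fin n) : convOp (zeroInflated (p i) (V i)) =
      lazy q (convOp (zeroInflated (p i / q) (V i))) := by
    rw [convOp_zeroInflated (hp i) (hp1 i), convOp_zeroInflated (hr0 i) (hr1 i), lazy_lazy,
      hcancel]
  have hbound := abs_prod_lazy_sub_prod_cpois_le hG h0 h1 y c
  rwa [← convOp_convProd, ← convOp_convProd, halfspacesInd, convOp_smul_ind_zero,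
    convOp_smul_ind_zero] at hbound

theorem abs_convProd_zeroInflated_sub_le (hp : ∀ i, 0 ≤ p i) (hp1 : ∀ i, p i ≤ 1)
    (hpq : ∀ i, p i ≤ q) (h0 : 0 ≤ q) :
    |(convProd fun i => zeroInflated (p i) (V i)).real (halfspaces y c) -
      (convProd fun i => cpois 1 (zeroInflated (p i) (V i))).real (halfspaces y c)| ≤
    339424 * (Fintype.card κ : ℝ) ^ 2 * q := by
  rcases le_total q (1 / 2) with h1 | h1
  · exact abs_convProd_zeroInflated_sub_le_of_le_half V y c hp hpq h0 h1
  have (i : Fin n) := isProbabilityMeasure_zeroInflated (hp i) (hp1 i) (V i)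
  have (i : Fin n) := isProbabilityMeasure_cpois zero_le_one (zeroInflated (p i) (V i))
  have hcard : (1 : ℝ) ≤ Fintype.card κ := Nat.one_le_cast.2 Fintype.card_pos
  calc _ ≤ (1 : ℝ) := abs_sub_le_of_nonneg_of_le measureReal_nonneg measureReal_le_one
        measureReal_nonneg measureReal_le_one
    _ ≤ 339424 * (Fintype.card κ : ℝ) ^ 2 * q := by nlinarith [one_le_pow₀ hcard (n := 2)]

end ZeroInflated

section Polyhedra

variable {E : Type*} [AddCommGroup E] [MeasurableSpace E]

theorem AddFunctional.exists_coe_le_iff (y : AddFunctional E) (b : EReal) :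
    ∃ (z : AddFunctional E) (c : ℝ), ∀ x, ((y x : ℝ) : EReal) ≤ b ↔ z x ≤ c := by
  induction b with
  | bot => exact ⟨0, -1, fun x => by simp⟩
  | top => exact ⟨0, 0, fun x => by simp⟩
  | coe r => exact ⟨y, r, fun x => EReal.coe_le_coe_iff⟩

theorem AddFunctional.exists_le_coe_iff (y : AddFunctional E) (a : EReal) :
    ∃ (z : AddFunctional E) (c : ℝ), ∀ x, a ≤ ((y x : ℝ) : EReal) ↔ z x ≤ c := by
  obtain ⟨z, c, h⟩ := (-y).exists_coe_le_iff (-a)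
  exact ⟨z, c, fun x => by rw [← h, neg_apply, EReal.coe_neg, EReal.neg_le_neg_iff]⟩

theorem exists_halfspaces_eq {J : Type*} (y : J → AddFunctional E) (a b : J → EReal) :
    ∃ (z : J × Bool → AddFunctional E) (c : J × Bool → ℝ),
      {x | ∀ j, a j ≤ ((y j x : ℝ) : EReal) ∧ ((y j x : ℝ) : EReal) ≤ b j} = halfspaces z c := by
  choose z₁ c₁ h₁ using fun j => (y j).exists_le_coe_iff (a j)
  choose z₂ c₂ h₂ using fun j => (y j).exists_coe_le_iff (b j)
  refine ⟨fun k => if k.2 then z₁ k.1 else z₂ k.1, fun k => if k.2 then c₁ k.1 else c₂ k.1, ?_⟩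
  ext x
  simp [halfspaces, h₁, h₂, and_comm]

theorem rhoPoly_le {d m : ℕ} {μ ν : Measure (Euc d)} {M : ℝ} (hM : 0 ≤ M)
    (h : ∀ X ∈ polyhedra d m, |μ.real X - ν.real X| ≤ M) : rhoPoly m μ ν ≤ M :=
  Real.iSup_le (fun X => Real.iSup_le (h X) hM) hM

end Polyhedra

end

end Accompanying

open Accompanying

theorem stmt4_general :
    ∃ C : ℕ → ℝ, (∀ m, 0 < C m) ∧
      ∀ {E : Type*} [AddCommGroup E] [MeasurableSpace E] [MeasurableAdd₂ E] {m n : ℕ}, 0 < m →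
        ∀ {p : Fin n → ℝ} (V : Fin n → Measure E) [∀ i, IsProbabilityMeasure (V i)],
          (∀ i, 0 ≤ p i) → (∀ i, p i ≤ 1) →
          ∀ (y : Fin m → E →+ ℝ), (∀ j, Measurable (y j)) → ∀ (a b : Fin m → EReal),
            let X := {x | ∀ j, a j ≤ ((y j x : ℝ) : EReal) ∧ ((y j x : ℝ) : EReal) ≤ b j}
            |(convProd fun i => zeroInflated (p i) (V i)).real X -
              (convProd fun i => cpois 1 (zeroInflated (p i) (V i))).real X| ≤
            C m * ⨆ i, p i := by
  refine ⟨fun m => 339424 * (2 * m) ^ 2 + 1, fun m => by positivity, ?_⟩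
  intro E _ _ _ m n hm p V _ hp0 hp1 y hy a b
  have : NeZero m := ⟨hm.ne'⟩
  obtain ⟨z, c, hX⟩ := exists_halfspaces_eq (fun j => (⟨y j, hy j⟩ : AddFunctional E)) a b
  have hsup : 0 ≤ ⨆ i, p i := Real.iSup_nonneg hp0
  have hbound := abs_convProd_zeroInflated_sub_le V z c hp0 hp1
    (fun i => le_ciSup (Set.finite_range p).bddAbove i) hsup
  rw [← hX, Fintype.card_prod, Fintype.card_fin, Fintype.card_bool, Nat.cast_mul, Nat.cast_two,
    mul_comm (m : ℝ)] at hbound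
  exact hbound.trans (mul_le_mul_of_nonneg_right (by linarith) hsup)

theorem stmt4 :
    ∃ C : ℕ → ℝ, (∀ m, 0 < C m) ∧
      ∀ (d m n : ℕ), 0 < d → 0 < m → 0 < n →
        ∀ (p : Fin n → ℝ) (V : Fin n → Measure (Euc d)),
          (∀ i, IsProbabilityMeasure (V i)) → (∀ i, 0 ≤ p i) → (∀ i, p i ≤ 1) →
          rhoPoly m
              (convProd (fun i =>
                ENNReal.ofReal (1 - p i) • Measure.dirac (0 : Euc d) +
                  ENNReal.ofReal (p i) • V i))
              (convProd (fun i => cpois 1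
                (ENNReal.ofReal (1 - p i) • Measure.dirac (0 : Euc d) +
                  ENNReal.ofReal (p i) • V i))) ≤
            C m * (⨆ i, p i) := by
  obtain ⟨C, hC, hbound⟩ := stmt4_general
  refine ⟨C, hC, fun d m n _ hm _ p V _ hp0 hp1 =>
    rhoPoly_le (mul_nonneg (hC m).le (Real.iSup_nonneg hp0)) ?_⟩
  rintro _ ⟨t, a, b, rfl⟩
  exact hbound hm V hp0 hp1 (fun j => (innerₗ (Euc d)).flip (t j)|>.toAddMonoidHom)
    (fun j => (continuous_id.inner continuous_const).measurable) a b
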